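/- arXiv:1708.00704 — 2 statements merged into one kernel-verified Lean document; each statement's English description precedes it below -/
import Mathlib

section
/- Let G be a 2-connected graph on n vertices with minimum degree at least k, and let C be a locally maximal cycle in G of length c ≤ n-1. If the clique number of the subgraph induced on V(C) is at least c-k+1, then G is isomorphic to W_{n,k,c} or to Z_{n,k,c}. -/
open SimpleGraph

/-- A graph is 2-connected: at least 3 vertices and deleting any vertex leaves it connected. -/
def TwoConnected {V : Type*} [Fintype V] (G : SimpleGraph V) : Prop :=
  3 ≤ Fintype.card V ∧
    ∀ v : V, (((⊤ : G.Subgraph).deleteVerts {v}).coe).Connected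

/-- `p` is a longest cycle of `G`. -/
def IsLongestCycle {V : Type*} (G : SimpleGraph V) {v0 : V} (p : G.Walk v0 v0) : Prop :=
  p.IsCycle ∧ ∀ (w : V) (q : G.Walk w w), q.IsCycle → q.length ≤ p.length

/-- `R` is the vertex set of a connected component of `G - Cs` (the graph obtained
from `G` by deleting the vertex set `Cs`). -/
def IsCompOutside {V : Type*} (G : SimpleGraph V) (Cs R : Set V) : Prop :=
  R.Nonempty ∧ Disjoint R Cs ∧ (G.induce R).Connected ∧
    ∀ u ∈ R, ∀ v : V, G.Adj u v → v ∈ R ∪ Cs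
/-- An edge (of `Sym2 V`) crossing between `Cs` and its complement: it has an endpoint in
`Cs` and an endpoint outside `Cs`. -/
def crossEdge {V : Type*} (Cs : Set V) (e : Sym2 V) : Prop :=
  (∃ a ∈ e, a ∈ Cs) ∧ (∃ b ∈ e, b ∉ Cs)

open Classical in
/-- The number of edges in the list `l` having exactly one endpoint in `Cs`. -/
noncomputable def crossCount {V : Type*} (Cs : Set V) (l : List (Sym2 V)) : ℕ :=
  l.countP (fun e => decide (crossEdge Cs e))

/-- The cycle `p` is locally maximal in `G`: there is no cycle `q` with `|E(q)| > |E(p)|`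
using at most two edges with exactly one endpoint on `p`. -/
def IsLocallyMaximal {V : Type*} (G : SimpleGraph V) {v0 : V} (p : G.Walk v0 v0) : Prop :=
  p.IsCycle ∧ ∀ (w : V) (q : G.Walk w w), q.IsCycle →
    ¬ (p.length < q.length ∧ crossCount {x | x ∈ p.support} q.edges ≤ 2)

/-- Degree of a vertex, as the cardinality of its neighbour set. -/
noncomputable def degN {V : Type*} (G : SimpleGraph V) (u : V) : ℕ := (G.neighborSet u).ncard

/-- `W_{n,k,c}`: the graph obtained from a clique on `{0, …, c-k}` by joining each of the
remaining `n-(c-k+1)` vertices to the same `k` vertices `{0, …, k-1}` of the clique. -/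
def Wgraph (n k c : ℕ) : SimpleGraph (Fin n) :=
  SimpleGraph.fromRel (fun u v =>
    (u.val < c - k + 1 ∧ v.val < c - k + 1) ∨ u.val < k ∨ v.val < k)

/-- `Z_{n,k,c}`: the union of a clique on `{0, …, c-k}` and `(n-(c-k+1))/(k-1)` cliques
`K_{k+1}`, any two of which share exactly the two fixed vertices `0, 1`. -/
def Zgraph (n k c : ℕ) : SimpleGraph (Fin n) :=
  SimpleGraph.fromRel (fun u v =>
    (u.val < c - k + 1 ∧ v.val < c - k + 1) ∨
    (u.val ≤ 1 ∧ c - k + 1 ≤ v.val) ∨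
    (c - k + 1 ≤ u.val ∧ c - k + 1 ≤ v.val ∧
      (u.val - (c - k + 1)) / (k - 1) = (v.val - (c - k + 1)) / (k - 1)))


section

open Finset

/-- `s` is the vertex set of a path of `G` from `x` to `y`. -/
inductive PathOn {V : Type*} [DecidableEq V] (G : SimpleGraph V) : Finset V → V → V → Prop
  | single (x : V) : PathOn G {x} x x
  | cons {s : Finset V} {x y z : V} (h : G.Adj x y) (hx : x ∉ s) (p : PathOn G s y z) :
      PathOn G (insert x s) x z

namespace PathOn

variable {V : Type*} [DecidableEq V] {G : SimpleGraph V}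

theorem left_mem {s : Finset V} {x y : V} (p : PathOn G s x y) : x ∈ s := by
  cases p <;> simp

theorem right_mem {s : Finset V} {x y : V} (p : PathOn G s x y) : y ∈ s := by
  induction p with
  | single x => simp
  | cons h hx p ih => simp [ih]

theorem join {s t : Finset V} {x y z w : V} (p : PathOn G s x y) (q : PathOn G t z w)
    (h : G.Adj y z) (hd : Disjoint s t) : PathOn G (s ∪ t) x w := by
  induction p with
  | single x =>
    rw [Finset.singleton_union]
    exact cons h (by simpa using hd) q
  | cons h' hx p ih =>
    rw [Finset.disjoint_insert_left] at hd
    rw [Finset.insert_union]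
    exact cons h' (by simp [hx, hd.1]) (ih h hd.2)

theorem symm {s : Finset V} {x y : V} (p : PathOn G s x y) : PathOn G s y x := by
  induction p with
  | single x => exact single x
  | @cons s x y z h hx p ih =>
    have := ih.join (single x) h.symm (by simpa using hx)
    rwa [Finset.union_comm, Finset.singleton_union] at this

theorem exists_prefix {s : Finset V} {x y w : V} (p : PathOn G s x y) (hw : w ∈ s) :
    ∃ t ⊆ s, PathOn G t x w := by
  induction p with
  | single x =>
    rw [Finset.mem_singleton] at hw
    subst hw
    exact ⟨_, subset_rfl, single w⟩
  | @cons s x y z h hx p ih =>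
    rcases Finset.mem_insert.1 hw with rfl | hw
    · exact ⟨{w}, by simp, single w⟩
    · obtain ⟨t, ht, q⟩ := ih hw
      exact ⟨insert x t, Finset.insert_subset_insert _ ht, cons h (fun h => hx (ht h)) q⟩

theorem exists_step {s E : Finset V} {x y w : V} (p : PathOn G s x y) (hs : s ⊆ E)
    (h : G.Adj y w) (hw : w ∈ E) : ∃ t ⊆ E, PathOn G t x w := by
  by_cases hws : w ∈ s
  · obtain ⟨t, ht, q⟩ := p.exists_prefix hws
    exact ⟨t, ht.trans hs, q⟩
  · exact ⟨s ∪ {w}, Finset.union_subset hs (by simpa using hw),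
      p.join (single w) h (by simpa using hws)⟩

theorem exists_walk {s : Finset V} {x y : V} (p : PathOn G s x y) :
    ∃ w : G.Walk x y, w.IsPath ∧ (∀ u, u ∈ w.support ↔ u ∈ s) ∧ w.length + 1 = s.card := by
  induction p with
  | single x => exact ⟨.nil, by simp, by simp, by simp⟩
  | @cons s x y z h hx p ih =>
    obtain ⟨w, hw, hs, hl⟩ := ih
    refine ⟨.cons h w, ?_, ?_, ?_⟩
    · rw [SimpleGraph.Walk.cons_isPath_iff]
      exact ⟨hw, by rwa [hs]⟩
    · intro u
      simp [hs]
    · rw [Finset.card_insert_of_notMem hx, SimpleGraph.Walk.length_cons, hl]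

end PathOn

/-- There is a path with at least `m` vertices, all of them outside `Cs`, whose first vertex is
adjacent to `x` and whose last vertex is adjacent to `y`. -/
def Ear {V : Type*} [DecidableEq V] (G : SimpleGraph V) (Cs : Finset V) (x y : V) (m : ℕ) :
    Prop :=
  ∃ (s : Finset V) (a b : V), Disjoint s Cs ∧ PathOn G s a b ∧ G.Adj x a ∧ G.Adj b y ∧ m ≤ s.card

theorem Ear.symm {V : Type*} [DecidableEq V] {G : SimpleGraph V} {Cs : Finset V} {x y : V} {m : ℕ}
    (h : Ear G Cs x y m) : Ear G Cs y x m := by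
  obtain ⟨s, a, b, hd, p, hxa, hby, hm⟩ := h
  exact ⟨s, b, a, hd, p.symm, hby.symm, hxa.symm, hm⟩

open Classical in
theorem crossCount_eq_zero {V : Type*} {Cs : Set V} {l : List (Sym2 V)}
    (h : ∀ e ∈ l, ¬ crossEdge Cs e) : crossCount Cs l = 0 := by
  unfold crossCount
  rw [List.countP_eq_zero]
  intro e he
  simpa using h e he

theorem IsLocallyMaximal.card_add_le {V : Type*} [DecidableEq V] {G : SimpleGraph V} {v0 : V}
    {p : G.Walk v0 v0} (hC : IsLocallyMaximal G p) {Cs : Finset V}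
    (hCs : ∀ u, u ∈ Cs ↔ u ∈ p.support) {x y : V} {m : ℕ} (he : Ear G Cs x y m)
    {s : Finset V} (hs : s ⊆ Cs) (hp : PathOn G s x y) : s.card + m ≤ p.length := by
  classical
  obtain ⟨t, a, b, hd, q, hxa, hby, hm⟩ := he
  by_contra! hlt
  have hdst : Disjoint s t := (hd.mono_right hs).symm
  obtain ⟨w, hw, hws, hwl⟩ := hp.exists_walk
  obtain ⟨w', hw', hws', hwl'⟩ := q.symm.exists_walk
  have h3 := hC.1.three_le_length
  set W : G.Walk x a := w.append (.cons hby.symm w') with hW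
  have hWl : W.length + 1 = s.card + t.card := by
    simp [hW]; omega
  have hWp : W.IsPath := by
    rw [SimpleGraph.Walk.isPath_def, hW, SimpleGraph.Walk.support_append,
      SimpleGraph.Walk.support_cons, List.tail_cons, List.nodup_append]
    refine ⟨hw.support_nodup, hw'.support_nodup, ?_⟩
    intro u hu u' hu' huu
    rw [hws] at hu
    rw [hws'] at hu'
    subst huu
    exact Finset.disjoint_left.1 hdst hu hu'
  have hcyc : (SimpleGraph.Walk.cons hxa.symm W).IsCycle := by
    rw [SimpleGraph.Walk.cons_isCycle_iff]
    refine ⟨hWp, fun h => ?_⟩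
    have := hWp.length_eq_one_of_mem_edges (Sym2.eq_swap ▸ h)
    omega
  refine hC.2 _ _ hcyc ⟨by simp; omega, ?_⟩
  have e1 : crossCount {x | x ∈ p.support} w.edges = 0 := by
    apply crossCount_eq_zero
    rintro e he ⟨-, u, hu, hu'⟩
    apply hu'
    have : u ∈ w.support := SimpleGraph.Walk.mem_support_of_mem_edges he hu
    rw [hws] at this
    exact (hCs u).1 (hs this)
  have e2 : crossCount {x | x ∈ p.support} w'.edges = 0 := by
    apply crossCount_eq_zero
    rintro e he ⟨⟨u, hu, hu'⟩, -⟩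
    have : u ∈ w'.support := SimpleGraph.Walk.mem_support_of_mem_edges he hu
    rw [hws'] at this
    exact Finset.disjoint_left.1 hd this ((hCs u).2 hu')
  unfold crossCount at e1 e2 ⊢
  rw [SimpleGraph.Walk.edges_cons, hW, SimpleGraph.Walk.edges_append, SimpleGraph.Walk.edges_cons,
    List.countP_cons, List.countP_append, List.countP_cons, e1, e2]
  split_ifs <;> omega

/-- `J` is a union of components of the subgraph induced on `D`. -/
def ClosedIn {V : Type*} (G : SimpleGraph V) (J D : Finset V) : Prop :=
  J ⊆ D ∧ ∀ u ∈ J, ∀ w ∈ D, G.Adj u w → w ∈ J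

/-- The subgraph induced on `D` is connected. -/
def Conn {V : Type*} (G : SimpleGraph V) (D : Finset V) : Prop :=
  D.Nonempty ∧ ∀ J : Finset V, J.Nonempty → ClosedIn G J D → J = D

theorem exists_conn_subset {V : Type*} {G : SimpleGraph V} {F D : Finset V} (hF : F.Nonempty)
    (hFD : ClosedIn G F D) :
    ∃ F' ⊆ F, ClosedIn G F' D ∧ Conn G F' := by
  classical
  obtain ⟨F', hF', hmin⟩ := Finset.exists_min_image
    (F.powerset.filter fun J => J.Nonempty ∧ ClosedIn G J D) Finset.card
    ⟨F, by simp [hF, hFD]⟩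
  simp only [mem_filter, mem_powerset] at hF' hmin
  refine ⟨F', hF'.1, hF'.2.2, hF'.2.1, fun J hJ hJF => ?_⟩
  refine Finset.eq_of_subset_of_card_le hJF.1 (hmin J ⟨hJF.1.trans hF'.1, hJ, ?_⟩)
  exact ⟨hJF.1.trans hF'.2.2.1,
    fun u hu w hw h => hJF.2 u hu w (hF'.2.2.2 u (hJF.1 hu) w hw h) h⟩

section

variable {V : Type*} [DecidableEq V] {G : SimpleGraph V}

theorem Conn.exists_path_avoiding {D F : Finset V} {v : V} (hD : Conn G D) (hv : v ∈ D)
    (hF : ClosedIn G F (D.erase v)) {u : V} (hu : u ∈ D) (huF : u ∉ F) :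
    ∃ s ⊆ D \ F, PathOn G s v u := by
  classical
  set B := D.filter fun u => u ∈ F ∨ ∃ s ⊆ D \ F, PathOn G s v u with hB
  have hvF : v ∉ F := fun h => by simpa using hF.1 h
  have hBD : B = D := by
    refine hD.2 B ⟨v, ?_⟩ ⟨Finset.filter_subset _ _, ?_⟩
    · simp only [hB, mem_filter]
      exact ⟨hv, Or.inr ⟨{v}, by simp [hv, hvF], .single v⟩⟩
    · intro a ha w hw haw
      simp only [hB, mem_filter] at ha ⊢
      refine ⟨hw, ?_⟩
      by_cases hwF : w ∈ F
      · exact Or.inl hwF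
      · right
        rcases ha.2 with haF | ⟨s, hs, p⟩
        · rcases eq_or_ne w v with rfl | hwv
          · exact ⟨{w}, by simp [hw, hwF], .single w⟩
          · exact absurd (hF.2 a haF w (by simp [hwv, hw]) haw) hwF
        · exact p.exists_step hs haw (by simp [hw, hwF])
  rw [← hBD, hB, mem_filter] at hu
  exact hu.2.resolve_left huF

theorem Conn.exists_path {D : Finset V} {u v : V} (hD : Conn G D) (hv : v ∈ D) (hu : u ∈ D) :
    ∃ s ⊆ D, PathOn G s v u := by
  obtain ⟨s, hs, p⟩ := hD.exists_path_avoiding (F := ∅) hv ⟨by simp, by simp⟩ hu (by simp)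
  exact ⟨s, by simpa using hs, p⟩

theorem Conn.exists_adj_of_closedIn_erase {D F : Finset V} {v : V} (hD : Conn G D) (hv : v ∈ D)
    (hF : ClosedIn G F (D.erase v)) (hne : F.Nonempty) : ∃ u ∈ F, G.Adj v u := by
  by_contra! h
  have hvF : v ∉ F := fun h => by simpa using hF.1 h
  have := hD.2 F hne ⟨hF.1.trans (Finset.erase_subset _ _), fun u hu w hw huw => ?_⟩
  · exact hvF (this ▸ hv)
  · refine hF.2 u hu w (Finset.mem_erase.2 ⟨?_, hw⟩) huw
    rintro rfl
    exact h u hu huw.symm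

end

/-- The subgraph induced on `D` together with a vertex `x` and a contracted vertex set `Y` is
2-connected once the edge between the two outer vertices is added. -/
structure Attached {V : Type*} [DecidableEq V] (G : SimpleGraph V) (D : Finset V) (x : V)
    (Y : Finset V) : Prop where
  conn : Conn G D
  left : ∃ a ∈ D, G.Adj x a
  right : ∃ b ∈ D, ∃ y ∈ Y, G.Adj b y
  cut : ∀ v ∈ D, ∀ J : Finset V, J.Nonempty → ClosedIn G J (D.erase v) →
    (∃ u ∈ J, G.Adj x u) ∨ ∃ u ∈ J, ∃ y ∈ Y, G.Adj u y

open Classical in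
/-- The neighbours of `u` lying in `Y`. -/
noncomputable def nbrs {V : Type*} (G : SimpleGraph V) (u : V) (Y : Finset V) : Finset V :=
  Y.filter (G.Adj u)

theorem mem_nbrs {V : Type*} {G : SimpleGraph V} {u w : V} {Y : Finset V} :
    w ∈ nbrs G u Y ↔ w ∈ Y ∧ G.Adj u w := by
  simp [nbrs]

theorem nbrs_subset {V : Type*} {G : SimpleGraph V} (u : V) (Y : Finset V) : nbrs G u Y ⊆ Y :=
  fun _ hw => (mem_nbrs.1 hw).1

theorem card_nbrs_pos {V : Type*} {G : SimpleGraph V} {u y : V} {Y : Finset V} (hy : y ∈ Y)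
    (h : G.Adj u y) :
    0 < (nbrs G u Y).card :=
  card_pos.2 ⟨y, mem_nbrs.2 ⟨hy, h⟩⟩

section

variable {V : Type*} [DecidableEq V] {G : SimpleGraph V}

theorem ClosedIn.erase_of_erase {D F J : Finset V} {u v : V} (hF : ClosedIn G F (D.erase v))
    (hJ : ClosedIn G J (F.erase u)) (hv : ∀ w ∈ J, ¬ G.Adj v w) : ClosedIn G J (D.erase u) := by
  refine ⟨fun w hw => ?_, fun a ha w hw haw => ?_⟩
  · have := hJ.1 hw
    rw [mem_erase] at this ⊢
    exact ⟨this.1, mem_of_mem_erase (hF.1 this.2)⟩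
  · rw [mem_erase] at hw
    refine hJ.2 a ha w (mem_erase.2 ⟨hw.1, ?_⟩) haw
    refine hF.2 a (mem_of_mem_erase (hJ.1 ha)) w (mem_erase.2 ⟨?_, hw.2⟩) haw
    rintro rfl
    exact hv a ha haw.symm

theorem Attached.exists_path {D : Finset V} {x : V} {Y : Finset V} (h : Attached G D x Y) {k : ℕ}
    (hx : x ∉ D) (hY : Disjoint D Y)
    (hk : ∀ u ∈ D, k ≤ (nbrs G u (insert x (D ∪ Y))).card) :
    ∃ s ⊆ D, ∃ a b, PathOn G s a b ∧ G.Adj x a ∧ 0 < (nbrs G b Y).card ∧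
      k ≤ s.card + (nbrs G b Y).card ∧ (s = D ∨ k + 1 ≤ s.card + (nbrs G b Y).card) := by
  induction hn : D.card using Nat.strong_induction_on generalizing D x Y k with
  | _ n ih =>
  subst hn
  by_cases h1 : ∃ v ∈ D, ∃ F : Finset V, F.Nonempty ∧ ClosedIn G F (D.erase v) ∧
      ∀ u ∈ F, ∀ y ∈ Y, ¬ G.Adj u y
  · obtain ⟨v, hv, F₀, hF₀, hF₀c, hF₀Y⟩ := h1
    obtain ⟨F, hFF, hFc, hF⟩ := exists_conn_subset hF₀ hF₀c
    have hFY : ∀ u ∈ F, ∀ y ∈ Y, ¬ G.Adj u y := fun u hu => hF₀Y u (hFF hu)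
    have hFD : F ⊆ D := hFc.1.trans (erase_subset _ _)
    have hvF : v ∉ F := fun h => by simpa using hFc.1 h
    have hFx : ∃ u ∈ F, G.Adj x u := by
      rcases h.cut v hv F hF.1 hFc with h | ⟨u, hu, y, hy, huy⟩
      · exact h
      · exact absurd huy (hFY u hu y hy)
    have hA : Attached G F x {v} := by
      refine ⟨hF, hFx, ?_, fun u hu J hJ hJc => ?_⟩
      · obtain ⟨u, hu, huv⟩ := h.conn.exists_adj_of_closedIn_erase hv hFc hF.1
        exact ⟨u, hu, v, by simp, huv.symm⟩
      · by_contra! hcon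
        rcases h.cut u (hFD hu) J hJ (hFc.erase_of_erase hJc
          fun w hw h => hcon.2 w hw v (by simp) h.symm) with ⟨w, hw, hxw⟩ | ⟨w, hw, y, hy, hwy⟩
        · exact hcon.1 w hw hxw
        · exact hFY w (mem_of_mem_erase (hJc.1 hw)) y hy hwy
    obtain ⟨s, hs, a, b, p, hxa, hb, hkb, -⟩ := ih F.card
      (card_lt_card ⟨hFD, fun h => hvF (h hv)⟩) hA (k := k) (fun h => hx (hFD h))
      (by simpa using hvF) (fun u hu => (hk u (hFD hu)).trans (card_le_card fun w hw => by
        rw [mem_nbrs] at hw ⊢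
        refine ⟨?_, hw.2⟩
        have := hw.1
        simp only [mem_insert, mem_union, mem_singleton] at this ⊢
        rcases this with h | h | h
        · exact Or.inl h
        · rcases eq_or_ne w v with rfl | hwv
          · simp
          · exact Or.inr (Or.inl (hFc.2 u hu w (by simp [hwv, h]) hw.2))
        · exact absurd hw.2 (hFY u hu w h))) rfl
    obtain ⟨b', hb', y, hy, hby⟩ := h.right
    have hb'F : b' ∉ F := fun h => hFY b' h y hy hby
    obtain ⟨t, ht, q⟩ := h.conn.exists_path_avoiding hv hFc hb' hb'F
    have hbv : G.Adj b v := by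
      obtain ⟨w, hw⟩ := card_pos.1 hb
      rw [mem_nbrs, mem_singleton] at hw
      exact hw.1 ▸ hw.2
    have hst : Disjoint s t := disjoint_left.2 fun w hw hw' => (mem_sdiff.1 (ht hw')).2 (hs hw)
    have h1 : (nbrs G b {v}).card ≤ 1 := card_le_card (nbrs_subset _ _)
    have h2 := card_nbrs_pos hy hby
    have h3 : 0 < t.card := card_pos.2 ⟨_, q.left_mem⟩
    refine ⟨s ∪ t, union_subset (hs.trans hFD) (ht.trans sdiff_subset), a, b', p.join q hbv hst,
      hxa, h2, ?_, Or.inr ?_⟩ <;> rw [card_union_of_disjoint hst] <;> omega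
  by_cases h2 : ∃ v ∈ D, ∃ F : Finset V, F.Nonempty ∧ ClosedIn G F (D.erase v) ∧
      ∀ u ∈ F, ¬ G.Adj x u
  · obtain ⟨v, hv, F₀, hF₀, hF₀c, hF₀x⟩ := h2
    obtain ⟨F, hFF, hFc, hF⟩ := exists_conn_subset hF₀ hF₀c
    have hFx : ∀ u ∈ F, ¬ G.Adj x u := fun u hu => hF₀x u (hFF hu)
    have hFD : F ⊆ D := hFc.1.trans (erase_subset _ _)
    have hvF : v ∉ F := fun h => by simpa using hFc.1 h
    have hFY : ∃ u ∈ F, ∃ y ∈ Y, G.Adj u y := by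
      rcases h.cut v hv F hF.1 hFc with ⟨u, hu, hxu⟩ | h
      · exact absurd hxu (hFx u hu)
      · exact h
    have hA : Attached G F v Y := by
      refine ⟨hF, h.conn.exists_adj_of_closedIn_erase hv hFc hF.1, hFY, fun u hu J hJ hJc => ?_⟩
      by_contra! hcon
      rcases h.cut u (hFD hu) J hJ (hFc.erase_of_erase hJc hcon.1) with
        ⟨w, hw, hxw⟩ | ⟨w, hw, y, hy, hwy⟩
      · exact hFx w (mem_of_mem_erase (hJc.1 hw)) hxw
      · exact hcon.2 w hw y hy hwy
    obtain ⟨s, hs, a, b, p, hva, hb, hkb, -⟩ := ih F.card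
      (card_lt_card ⟨hFD, fun h => hvF (h hv)⟩) hA (k := k) hvF
      (hY.mono_left hFD) (fun u hu => (hk u (hFD hu)).trans (card_le_card fun w hw => by
        rw [mem_nbrs] at hw ⊢
        refine ⟨?_, hw.2⟩
        have := hw.1
        simp only [mem_insert, mem_union] at this ⊢
        rcases this with rfl | h | h
        · exact absurd hw.2.symm (hFx u hu)
        · rcases eq_or_ne w v with rfl | hwv
          · simp
          · exact Or.inr (Or.inl (hFc.2 u hu w (by simp [hwv, h]) hw.2))
        · exact Or.inr (Or.inr h))) rfl
    obtain ⟨a', ha', hxa'⟩ := h.left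
    have ha'F : a' ∉ F := fun h => hFx a' h hxa'
    obtain ⟨t, ht, q⟩ := h.conn.exists_path_avoiding hv hFc ha' ha'F
    have hst : Disjoint t s := disjoint_left.2 fun w hw hw' => (mem_sdiff.1 (ht hw)).2 (hs hw')
    have h3 : 0 < t.card := card_pos.2 ⟨_, q.left_mem⟩
    refine ⟨t ∪ s, union_subset (ht.trans sdiff_subset) (hs.trans hFD), a', b,
      q.symm.join p hva hst, hxa', hb, ?_, Or.inr ?_⟩ <;>
      rw [card_union_of_disjoint hst] <;> omega
  push Not at h1 h2
  obtain ⟨x', hx', hxx'⟩ := h.left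
  rcases (D.erase x').eq_empty_or_nonempty with hE | hE
  · have hD : D = {x'} := by
      rw [← insert_erase hx', hE, insert_empty_eq]
    subst hD
    obtain ⟨b, hb, y, hy, hby⟩ := h.right
    rw [mem_singleton] at hb
    subst hb
    refine ⟨{b}, subset_rfl, b, b, .single b, hxx', card_nbrs_pos hy hby, ?_, Or.inl rfl⟩
    refine (hk b (by simp)).trans ?_
    calc (nbrs G b (insert x ({b} ∪ Y))).card
      _ ≤ ({x} ∪ nbrs G b Y).card := card_le_card fun w hw => by
          rw [mem_nbrs] at hw
          have := hw.1
          simp only [mem_insert, mem_union, mem_singleton, mem_nbrs] at this ⊢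
          rcases this with h | rfl | h
          · exact Or.inl h
          · exact absurd hw.2 G.irrefl
          · exact Or.inr ⟨h, hw.2⟩
      _ ≤ _ := card_union_le _ _
  obtain ⟨F, -, hFc, hF⟩ := exists_conn_subset hE (D := D.erase x') ⟨subset_rfl, fun _ _ _ h _ => h⟩
  have hFD : F ⊆ D := hFc.1.trans (erase_subset _ _)
  have hvF : x' ∉ F := fun h => by simpa using hFc.1 h
  have hA : Attached G F x' Y := by
    refine ⟨hF, h.conn.exists_adj_of_closedIn_erase hx' hFc hF.1, h1 x' hx' F hF.1 hFc,
      fun u hu J hJ hJc => ?_⟩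
    by_contra! hcon
    obtain ⟨w, hw, y, hy, hwy⟩ := h1 u (hFD hu) J hJ (hFc.erase_of_erase hJc hcon.1)
    exact hcon.2 w hw y hy hwy
  obtain ⟨s, hs, a, b, p, hva, hb, hkb, hsF⟩ := ih F.card
    (card_lt_card ⟨hFD, fun h => hvF (h hx')⟩) hA (k := k - 1) hvF
    (hY.mono_left hFD) (fun u hu => by
      have := (hk u (hFD hu)).trans (card_le_card (t := insert x (nbrs G u (insert x' (F ∪ Y))))
        fun w hw => by
        rw [mem_nbrs] at hw
        have := hw.1
        simp only [mem_insert, mem_union, mem_nbrs] at this ⊢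
        rcases this with h | h | h
        · exact Or.inl h
        · rcases eq_or_ne w x' with rfl | hwv
          · simp [hw.2]
          · exact Or.inr ⟨Or.inr (Or.inl (hFc.2 u hu w (by simp [hwv, h]) hw.2)), hw.2⟩
        · exact Or.inr ⟨Or.inr (Or.inr h), hw.2⟩)
      have h' := card_insert_le x (nbrs G u (insert x' (F ∪ Y)))
      omega) rfl
  have hxs : x' ∉ s := fun h => hvF (hs h)
  by_cases hFeq : F = D.erase x'
  · refine ⟨insert x' s, insert_subset hx' (hs.trans hFD), x', b, .cons hva hxs p, hxx', hb, ?_, ?_⟩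
    · rw [card_insert_of_notMem hxs]
      omega
    · rcases hsF with rfl | hsF
      · left
        rw [hFeq, insert_erase hx']
      · right
        rw [card_insert_of_notMem hxs]
        omega
  · have hEne : (D.erase x' \ F).Nonempty := by
      rw [sdiff_nonempty]
      exact fun h => hFeq (subset_antisymm hFc.1 h)
    obtain ⟨e, he, hxe⟩ := h2 x' hx' (D.erase x' \ F) hEne ⟨sdiff_subset, fun u hu w hw huw => by
      rw [mem_sdiff] at hu ⊢
      exact ⟨hw, fun hwF => hu.2 (hFc.2 w hwF u hu.1 huw.symm)⟩⟩
    rw [mem_sdiff, mem_erase] at he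
    obtain ⟨t, ht, q⟩ := h.conn.exists_path_avoiding hx' hFc he.1.2 he.2
    have hst : Disjoint t s := disjoint_left.2 fun w hw hw' => (mem_sdiff.1 (ht hw)).2 (hs hw')
    have h3 : 1 < t.card := one_lt_card.2 ⟨_, q.left_mem, _, q.right_mem, he.1.1.symm⟩
    refine ⟨t ∪ s, union_subset (ht.trans sdiff_subset) (hs.trans hFD), e, b,
      q.symm.join p hva hst, hxe, hb, ?_, Or.inr ?_⟩ <;>
      rw [card_union_of_disjoint hst] <;> omega

end

/-- A parametrization by the integers, with period `c`, of a spanning cycle of `Cs`. -/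
structure Frame {V : Type*} (G : SimpleGraph V) (Cs : Finset V) (c : ℕ) (v : ℤ → V) : Prop where
  eq_iff : ∀ i j, v i = v j ↔ (c : ℤ) ∣ j - i
  adj : ∀ i, G.Adj (v i) (v (i + 1))
  mem : ∀ w, w ∈ Cs ↔ ∃ i, v i = w

/-- A vertex set `Cs` of size `c` spanned by a cycle, whose paths cannot be extended through ears
to cycles longer than `c`, together with a clique `K` missing fewer than `k` of its vertices. -/
structure CliqueCycle {V : Type*} [DecidableEq V] (G : SimpleGraph V) (Cs K : Finset V)
    (c k : ℕ) : Prop where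
  ear : ∀ (x y : V) (m : ℕ) (s : Finset V), Ear G Cs x y m → s ⊆ Cs → PathOn G s x y →
    s.card + m ≤ c
  frame : ∃ v, Frame G Cs c v
  clique : ∀ u ∈ K, ∀ w ∈ K, u ≠ w → G.Adj u w
  subset : K ⊆ Cs
  missing : (Cs \ K).card < k

namespace Frame

variable {V : Type*} [DecidableEq V] {G : SimpleGraph V} {Cs K : Finset V} {c k : ℕ} {v : ℤ → V}

omit [DecidableEq V] in
theorem shift (hv : Frame G Cs c v) (q : ℤ) : Frame G Cs c fun i => v (q + i) where
  eq_iff i j := by rw [hv.eq_iff]; simp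
  adj i := by rw [← add_assoc]; exact hv.adj _
  mem w := by
    rw [hv.mem]
    exact ⟨fun ⟨i, hi⟩ => ⟨i - q, by simpa using hi⟩, fun ⟨i, hi⟩ => ⟨_, hi⟩⟩

omit [DecidableEq V] in
theorem neg (hv : Frame G Cs c v) : Frame G Cs c fun i => v (-i) where
  eq_iff i j := by
    rw [hv.eq_iff, ← dvd_neg]
    ring_nf
  adj i := by
    have := (hv.adj (-(i + 1))).symm
    rwa [show -(i + 1) + 1 = -i by ring] at this
  mem w := by
    rw [hv.mem]
    exact ⟨fun ⟨i, hi⟩ => ⟨-i, by simpa using hi⟩, fun ⟨i, hi⟩ => ⟨_, hi⟩⟩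

omit [DecidableEq V] in
theorem add_period (hv : Frame G Cs c v) (i : ℤ) : v (i + c) = v i :=
  (hv.eq_iff _ _).2 (by simp)

omit [DecidableEq V] in
theorem inj (hv : Frame G Cs c v) {i j : ℤ} (h : v i = v j) (h1 : j < i + c) (h2 : i < j + c) :
    i = j := by
  have := Int.eq_zero_of_abs_lt_dvd ((hv.eq_iff _ _).1 h) (by rw [abs_lt]; omega)
  omega

omit [DecidableEq V] in
theorem exists_index (hv : Frame G Cs c v) (hc : 0 < c) {w : V} (hw : w ∈ Cs) :
    ∃ i : ℤ, 0 ≤ i ∧ i < c ∧ v i = w := by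
  obtain ⟨i, rfl⟩ := (hv.mem w).1 hw
  refine ⟨i % c, Int.emod_nonneg _ (by omega), Int.emod_lt_of_pos _ (by omega), ?_⟩
  rw [hv.eq_iff]
  exact ⟨i / c, by rw [Int.emod_def]; ring⟩

theorem seg_subset (hv : Frame G Cs c v) (P : Finset ℤ) : P.image v ⊆ Cs := by
  intro w hw
  obtain ⟨i, -, rfl⟩ := mem_image.1 hw
  exact (hv.mem _).2 ⟨i, rfl⟩

theorem card_seg (hv : Frame G Cs c v) {a b : ℤ} (h : b < a + c) :
    (((Icc a b).image v).card : ℤ) = max (b + 1 - a) 0 := by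
  rw [card_image_of_injOn, Int.card_Icc, Int.toNat_eq_max]
  intro i hi j hj hij
  simp only [coe_Icc, Set.mem_Icc] at hi hj
  exact hv.inj hij (by omega) (by omega)

theorem disjoint_seg (hv : Frame G Cs c v) {a b a' b' : ℤ} (h : b < a') (h' : b' < a + c) :
    Disjoint ((Icc a b).image v) ((Icc a' b').image v) := by
  rw [Finset.disjoint_left]
  intro w hw hw'
  obtain ⟨i, hi, rfl⟩ := mem_image.1 hw
  obtain ⟨j, hj, hij⟩ := mem_image.1 hw'
  rw [mem_Icc] at hi hj
  have := hv.inj hij (by omega) (by omega)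
  omega

theorem pathOn_seg (hv : Frame G Cs c v) {a b : ℤ} (h : a ≤ b) (h' : b < a + c) :
    PathOn G ((Icc a b).image v) (v a) (v b) := by
  obtain ⟨n, rfl⟩ := Int.le.dest h
  induction n with
  | zero => simpa using PathOn.single (v a)
  | succ n ih =>
    have h1 := (ih (by omega) (by omega)).join
      (PathOn.single (v (a + ((n + 1 : ℕ) : ℤ)))) ?_ ?_
    · convert h1 using 1
      rw [← image_singleton, ← image_union]
      congr 1
      ext i
      simp only [mem_Icc, mem_union, mem_singleton]
      omega
    · have := hv.adj (a + n)
      rwa [add_assoc] at this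
    · rw [disjoint_singleton_right, mem_image]
      rintro ⟨i, hi, hij⟩
      rw [mem_Icc] at hi
      have := hv.inj hij (by omega) (by omega)
      omega

theorem ear_dist (hv : Frame G Cs c v) (H : CliqueCycle G Cs K c k) {i j : ℤ} {m : ℕ}
    (he : Ear G Cs (v i) (v j) m) (hij : i < j) (hji : j < i + c) : i + m + 1 ≤ j := by
  have h1 := hv.pathOn_seg (a := j) (b := i + c) (by omega) (by omega)
  rw [hv.add_period] at h1
  have h2 := H.ear _ _ _ _ he (hv.seg_subset _) h1.symm
  have h3 := hv.card_seg (a := j) (b := i + c) (by omega)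
  omega

theorem ear_adj (hv : Frame G Cs c v) (H : CliqueCycle G Cs K c k) {i j a b : ℤ} {m : ℕ}
    (he : Ear G Cs (v i) (v j) m) (hia : i < a) (haj : a ≤ j) (hjb : j < b) (hbi : b ≤ i + c)
    (hab : G.Adj (v a) (v b)) : i + j + m + 2 ≤ a + b := by
  have h1 := hv.pathOn_seg (a := b) (b := i + c) (by omega) (by omega)
  rw [hv.add_period] at h1
  have h2 := hv.pathOn_seg (a := a) (b := j) (by omega) (by omega)
  have hd := (hv.disjoint_seg (a := a) (b := j) (a' := b) (b' := i + c) hjb (by omega)).symm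
  have h3 := H.ear _ _ _ _ he (union_subset (hv.seg_subset _) (hv.seg_subset _))
    (h1.symm.join h2 hab.symm hd)
  rw [card_union_of_disjoint hd] at h3
  have h4 := hv.card_seg (a := b) (b := i + c) (by omega)
  have h5 := hv.card_seg (a := a) (b := j) (by omega)
  omega

theorem ear_clique (hv : Frame G Cs c v) (H : CliqueCycle G Cs K c k) {i j a b : ℤ} {m : ℕ}
    (he : Ear G Cs (v i) (v j) m) (hia : i < a) (haj : a ≤ j) (hjb : j < b) (hbi : b ≤ i + c)
    (ha : v a ∈ K) (hb : v b ∈ K) : i + j + m + 2 ≤ a + b := by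
  refine hv.ear_adj H he hia haj hjb hbi (H.clique _ ha _ hb fun h => ?_)
  have := hv.inj h (by omega) (by omega)
  omega

theorem ear_clique' (hv : Frame G Cs c v) (H : CliqueCycle G Cs K c k) {i j a b : ℤ} {m : ℕ}
    (he : Ear G Cs (v i) (v j) m) (hai : a < i) (hib : i ≤ b) (hbj : b < j) (hja : j ≤ a + c)
    (ha : v a ∈ K) (hb : v b ∈ K) : a + b + m + 2 ≤ i + j := by
  have := hv.neg.ear_clique H (i := -j) (j := -i) (a := -b) (b := -a) (m := m)
    (by simpa using he.symm) (by omega) (by omega) (by omega) (by omega) (by simpa using hb)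
    (by simpa using ha)
  omega

theorem card_missing (hv : Frame G Cs c v) (H : CliqueCycle G Cs K c k) {P : Finset ℤ}
    (hP : ∀ i ∈ P, 0 ≤ i ∧ i < c ∧ v i ∉ K) : P.card < k := by
  refine lt_of_le_of_lt ?_ H.missing
  refine card_le_card_of_injOn v (fun i hi => ?_) fun i hi j hj hij => ?_
  · rw [mem_coe, mem_sdiff]
    exact ⟨(hv.mem _).2 ⟨i, rfl⟩, (hP i hi).2.2⟩
  · have h1 := hP i hi
    have h2 := hP j hj
    exact hv.inj hij (by omega) (by omega)

theorem mem_of_card_missing (hv : Frame G Cs c v) (H : CliqueCycle G Cs K c k) {P : Finset ℤ}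
    (hP : ∀ i ∈ P, 0 ≤ i ∧ i < c ∧ v i ∉ K) (hPk : k ≤ P.card + 1) {i : ℤ} (h0 : 0 ≤ i)
    (hi : i < c) (hiP : i ∉ P) : v i ∈ K := by
  by_contra h
  have := hv.card_missing H (P := insert i P) (by
    intro j hj
    rcases mem_insert.1 hj with rfl | hj
    · exact ⟨h0, hi, h⟩
    · exact hP j hj)
  rw [card_insert_of_notMem hiP] at this
  omega

end Frame

/-- The positions, in a cycle of length `c` through `v 0`, of a set of vertices that are joined to
`v 0` by ears of size `m` and to each other by nontrivial ears. -/
structure EarSystem {V : Type*} [DecidableEq V] (G : SimpleGraph V) (Cs : Finset V) (c : ℕ)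
    (v : ℤ → V) (m : ℕ) (Q : Finset ℤ) : Prop where
  pos : 1 ≤ m
  range : ∀ q ∈ Q, 0 < q ∧ q < c
  nonempty : Q.Nonempty
  left : ∀ q ∈ Q, Ear G Cs (v 0) (v q) m
  pair : ∀ q ∈ Q, ∀ q' ∈ Q, q ≠ q' → Ear G Cs (v q) (v q') 1

namespace EarSystem

variable {V : Type*} [DecidableEq V] {G : SimpleGraph V} {Cs K : Finset V} {c k m : ℕ} {v : ℤ → V}
  {Q : Finset ℤ}

theorem neg (hv : Frame G Cs c v) (E : EarSystem G Cs c v m Q) :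
    EarSystem G Cs c (fun i => v (-i)) m (Q.image fun q => c - q) := by
  have key : ∀ q : ℤ, v (-(c - q)) = v q := fun q => by
    rw [← hv.add_period]
    ring_nf
  refine ⟨E.pos, ?_, E.nonempty.image _, ?_, ?_⟩
  · intro _ hcq
    obtain ⟨q, hq, rfl⟩ := mem_image.1 hcq
    have := E.range q hq
    omega
  · intro _ hcq
    obtain ⟨q, hq, rfl⟩ := mem_image.1 hcq
    simp only [key]
    simpa using E.left q hq
  · intro _ hcq _ hcq' hne
    obtain ⟨q, hq, rfl⟩ := mem_image.1 hcq
    obtain ⟨q', hq', rfl⟩ := mem_image.1 hcq'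
    simp only [key]
    exact E.pair q hq q' hq' (by rintro rfl; exact hne rfl)

theorem bounds (hv : Frame G Cs c v) (H : CliqueCycle G Cs K c k) (E : EarSystem G Cs c v m Q)
    {q : ℤ} (hq : q ∈ Q) : m + 1 ≤ q ∧ q + m + 1 ≤ c := by
  have h := E.range q hq
  have h1 := hv.ear_dist H (E.left q hq) (by omega) (by omega)
  have h2 := hv.ear_dist H (i := q) (j := 0 + c) (m := m)
    (by rw [hv.add_period]; exact (E.left q hq).symm) (by omega) (by omega)
  omega

theorem dist (hv : Frame G Cs c v) (H : CliqueCycle G Cs K c k) (E : EarSystem G Cs c v m Q)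
    {q q' : ℤ} (hq : q ∈ Q) (hq' : q' ∈ Q) (hlt : q < q') : q + 2 ≤ q' := by
  have h := E.range q hq
  have h' := E.range q' hq'
  have := hv.ear_dist H (E.pair q hq q' hq' hlt.ne) hlt (by omega)
  omega

theorem succ_notMem (hv : Frame G Cs c v) (H : CliqueCycle G Cs K c k)
    (E : EarSystem G Cs c v m Q) {q q' : ℤ} (hq : q ∈ Q) (hq' : q' ∈ Q) (hne : q ≠ q')
    (h1 : v (q + 1) ∈ K) : v (q' + 1) ∉ K := by
  intro h2
  wlog hlt : q < q' generalizing q q'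
  · exact this hq' hq hne.symm h2 h1 (by omega)
  have h := E.range q hq
  have h' := E.range q' hq'
  have := hv.ear_clique H (E.pair q hq q' hq' hne) (a := q + 1) (b := q' + 1) (by omega) (by omega)
    (by omega) (by omega) h1 h2
  omega

theorem card_of_notMem (hv : Frame G Cs c v) (H : CliqueCycle G Cs K c k)
    (E : EarSystem G Cs c v m Q) (hk : k ≤ m + Q.card)
    (hno : ∀ i : ℤ, 1 ≤ i → i ≤ m → v i ∉ K) :
    m + Q.card = k ∧ v 0 ∈ K ∧ (2 ≤ m → Q = {(m : ℤ) + 1} ∧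
      ∀ i : ℤ, 0 ≤ i → i < c → (v i ∈ K ↔ ¬ (1 ≤ i ∧ i ≤ m))) := by
  classical
  set R := (Q.filter fun q => v (q + 1) ∉ K).image (· + 1) with hR
  set P := Icc (1 : ℤ) m ∪ R with hP
  have hRc : R.card = (Q.filter fun q => v (q + 1) ∉ K).card :=
    card_image_of_injective _ (add_left_injective 1)
  have hone : (Q.filter fun q => v (q + 1) ∈ K).card ≤ 1 := by
    rw [card_le_one]
    intro q hq q' hq'
    rw [mem_filter] at hq hq'
    by_contra hne
    exact E.succ_notMem hv H hq.1 hq'.1 hne hq.2 hq'.2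
  have hsum := card_filter_add_card_filter_not (s := Q) (fun q => v (q + 1) ∈ K)
  have hRm : ∀ i ∈ R, i - 1 ∈ Q ∧ v i ∉ K := by
    intro i hi
    obtain ⟨q, hq, rfl⟩ := mem_image.1 hi
    rw [mem_filter] at hq
    exact ⟨by simpa using hq.1, hq.2⟩
  have hd : Disjoint (Icc (1 : ℤ) m) R := by
    rw [Finset.disjoint_left]
    intro i hi hi'
    have := E.bounds hv H (hRm i hi').1
    rw [mem_Icc] at hi
    omega
  have hPc : P.card = m + R.card := by
    rw [hP, card_union_of_disjoint hd, Int.card_Icc]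
    simp
  have hPm : ∀ i ∈ P, 0 ≤ i ∧ i < c ∧ v i ∉ K := by
    obtain ⟨q, hq⟩ := E.nonempty
    have hb := E.bounds hv H hq
    intro i hi
    rcases mem_union.1 hi with hi | hi
    · rw [mem_Icc] at hi
      exact ⟨by omega, by omega, hno i hi.1 hi.2⟩
    · have := hRm i hi
      have hb := E.bounds hv H this.1
      have := E.pos
      exact ⟨by omega, by omega, (hRm i hi).2⟩
  have hlt := hv.card_missing H hPm
  have hmem : ∀ i : ℤ, 0 ≤ i → i < c → i ∉ P → v i ∈ K := fun i h0 hi hiP =>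
    hv.mem_of_card_missing H hPm (by omega) h0 hi hiP
  have hmemP : ∀ i ∈ P, (1 ≤ i ∧ i ≤ m) ∨ i - 1 ∈ Q := by
    intro i hi
    rcases mem_union.1 hi with hi | hi
    · exact Or.inl (mem_Icc.1 hi)
    · exact Or.inr (hRm i hi).1
  have hc0 : (0 : ℤ) < c := by
    obtain ⟨q, hq⟩ := E.nonempty
    have := E.range q hq
    omega
  refine ⟨by omega, hmem 0 le_rfl hc0 fun h => ?_, fun hm => ?_⟩
  · rcases hmemP 0 h with h | h
    · omega
    · have := E.bounds hv H h
      omega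
  have hlast : v (c - 1) ∈ K := by
    refine hmem _ (by omega) (by omega) fun h => ?_
    rcases hmemP _ h with h | h
    · obtain ⟨q, hq⟩ := E.nonempty
      have := E.bounds hv H hq
      omega
    · have := E.bounds hv H h
      omega
  have hback : ∀ q ∈ Q, ∀ b : ℤ, b < q → q - m ≤ b → v b ∉ K := by
    intro q hq b hbq hqb hb
    have hbd := E.bounds hv H hq
    have := hv.ear_clique' H (E.left q hq) (a := -1) (b := b) (by omega) (by omega) hbq (by omega)
      (by rw [← hv.add_period]; convert hlast using 2; ring) hb
    omega
  have hQK : ∀ q ∈ Q, v q ∈ K := by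
    intro q hq
    have hbd := E.bounds hv H hq
    refine hmem q (by omega) (by omega) fun h => ?_
    rcases hmemP q h with h | h
    · omega
    · have := E.dist hv H h hq (by omega)
      omega
  have hQ1 : ∀ q ∈ Q, q = m + 1 := by
    intro q hq
    have hbd := E.bounds hv H hq
    have h1 : q - 1 ∈ P := by
      by_contra h
      exact hback q hq (q - 1) (by omega) (by omega) (hmem _ (by omega) (by omega) h)
    rcases hmemP _ h1 with h1 | h1
    · omega
    · exact absurd (hQK _ h1) (hback q hq _ (by omega) (by omega))
  have hQ : Q = {(m : ℤ) + 1} := eq_singleton_iff_nonempty_unique_mem.2 ⟨E.nonempty, hQ1⟩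
  have hPI : Icc (1 : ℤ) m = P := by
    refine eq_of_subset_of_card_le subset_union_left ?_
    rw [Int.card_Icc]
    have : Q.card = 1 := by rw [hQ]; simp
    simp
    omega
  refine ⟨hQ, fun i h0 hi => ⟨fun h h' => hno i h'.1 h'.2 h, fun h => hmem i h0 hi fun h' => ?_⟩⟩
  rw [← hPI, mem_Icc] at h'
  exact h h'

theorem notMem_or_notMem (hv : Frame G Cs c v) (H : CliqueCycle G Cs K c k)
    (E : EarSystem G Cs c v m Q) (hk : k ≤ m + Q.card) :
    (∀ i : ℤ, 1 ≤ i → i ≤ m → v i ∉ K) ∨ ∀ i : ℤ, 1 ≤ i → i ≤ m → v (-i) ∉ K := by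
  classical
  by_contra! hcon
  obtain ⟨⟨a₀, ha₀, ha₀m, ha₀K⟩, b, hb, hbm, hbK⟩ := hcon
  obtain ⟨a, ha, hmin⟩ := exists_min_image ((Icc (1 : ℤ) m).filter fun i => v i ∈ K) id
    ⟨a₀, by simp [*]⟩
  simp only [mem_filter, mem_Icc, id] at ha hmin
  obtain ⟨q₀, hq₀, hmax⟩ := exists_max_image Q id E.nonempty
  obtain ⟨q₁, hq₁, hmin'⟩ := exists_min_image Q id E.nonempty
  simp only [id] at hmax hmin'
  have hfwd : ∀ q ∈ Q, ∀ j : ℤ, 1 ≤ j → a + j ≤ m + 1 → v (q + j) ∉ K := by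
    intro q hq j hj haj h
    have hbd := E.bounds hv H hq
    have := hv.ear_clique H (E.left q hq) (a := a) (b := q + j) (by omega) (by omega) (by omega)
      (by omega) ha.2 h
    omega
  set P₁ := Icc (1 : ℤ) (a - 1) with hP₁
  set P₃ := (Q.erase q₀).image (· + 1) with hP₃
  set P₄ := Icc (q₀ + 1) (q₀ + (m + 1 - a)) with hP₄
  have h₃ : ∀ i ∈ P₃, q₁ + 1 ≤ i ∧ i < q₀ ∧ i - 1 ∈ Q := by
    intro i hi
    obtain ⟨q, hq, rfl⟩ := mem_image.1 hi
    rw [mem_erase] at hq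
    have h1 := hmax q hq.2
    have h2 := hmin' q hq.2
    have h3 := E.dist hv H hq.2 hq₀ (by omega)
    exact ⟨by omega, by omega, by simpa using hq.2⟩
  have hb₀ := E.bounds hv H hq₀
  have hb₁ := E.bounds hv H hq₁
  have h₁₀ := hmax q₁ hq₁
  have hd1 : Disjoint P₃ P₄ := by
    rw [Finset.disjoint_left]
    intro i hi hi'
    have := h₃ i hi
    rw [hP₄, mem_Icc] at hi'
    omega
  have hd2 : Disjoint {q₁ - 1} (P₃ ∪ P₄) := by
    rw [disjoint_singleton_left, mem_union, hP₄, mem_Icc]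
    rintro (h | h)
    · have := h₃ _ h
      omega
    · omega
  have hd3 : Disjoint P₁ ({q₁ - 1} ∪ (P₃ ∪ P₄)) := by
    rw [Finset.disjoint_left]
    intro i hi hi'
    rw [hP₁, mem_Icc] at hi
    rw [mem_union, mem_union, mem_singleton, hP₄, mem_Icc] at hi'
    rcases hi' with h | h | h
    · omega
    · have := h₃ _ h
      omega
    · omega
  have hlt := hv.card_missing H (P := P₁ ∪ ({q₁ - 1} ∪ (P₃ ∪ P₄))) (by
    intro i hi
    rw [mem_union, mem_union, mem_union, mem_singleton, hP₄, hP₁, mem_Icc, mem_Icc] at hi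
    rcases hi with h | h | h | h
    · refine ⟨by omega, by omega, fun hK => ?_⟩
      have := hmin i ⟨⟨by omega, by omega⟩, hK⟩
      omega
    · subst h
      refine ⟨by omega, by omega, fun hK => ?_⟩
      have := hv.ear_clique' H (E.left q₁ hq₁) (a := -b) (b := q₁ - 1) (by omega) (by omega)
        (by omega) (by omega) hbK hK
      omega
    · have := h₃ i h
      have h5 := hfwd _ this.2.2 1 le_rfl (by omega)
      rw [sub_add_cancel] at h5
      exact ⟨by omega, by omega, h5⟩
    · have h5 := hfwd q₀ hq₀ (i - q₀) (by omega) (by omega)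
      rw [add_sub_cancel] at h5
      exact ⟨by omega, by omega, h5⟩)
  rw [card_union_of_disjoint hd3, card_union_of_disjoint hd2, card_union_of_disjoint hd1,
    card_singleton, hP₁, hP₄, Int.card_Icc, Int.card_Icc,
    card_image_of_injective _ (add_left_injective 1), card_erase_of_mem hq₀] at hlt
  have := card_pos.2 E.nonempty
  omega

theorem exists_frame (hv : Frame G Cs c v) (H : CliqueCycle G Cs K c k)
    (E : EarSystem G Cs c v m Q) (hk : k ≤ m + Q.card) :
    m + Q.card = k ∧ v 0 ∈ K ∧ (2 ≤ m → Q.card = 1 ∧ ∃ v', Frame G Cs c v' ∧ v' 0 = v 0 ∧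
      (∀ q ∈ Q, v' (m + 1) = v q) ∧
      ∀ i : ℤ, 0 ≤ i → i < c → (v' i ∈ K ↔ ¬ (1 ≤ i ∧ i ≤ m))) := by
  have hcard : (Q.image fun q => (c : ℤ) - q).card = Q.card :=
    card_image_of_injective _ sub_right_injective
  rcases E.notMem_or_notMem hv H hk with h | h
  · obtain ⟨h1, h2, h3⟩ := E.card_of_notMem hv H hk h
    refine ⟨h1, h2, fun hm => ⟨by rw [(h3 hm).1]; simp, v, hv, rfl, ?_, (h3 hm).2⟩⟩
    intro q hq
    rw [(h3 hm).1, mem_singleton] at hq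
    rw [hq]
  · obtain ⟨h1, h2, h3⟩ := (E.neg hv).card_of_notMem hv.neg H (by rwa [hcard]) h
    rw [hcard] at h1
    refine ⟨h1, by simpa using h2, fun hm => ⟨by rw [← hcard, (h3 hm).1]; simp, _, hv.neg,
      by simp, ?_, (h3 hm).2⟩⟩
    intro q hq
    have := mem_image_of_mem (fun q => (c : ℤ) - q) hq
    rw [(h3 hm).1, mem_singleton] at this
    rw [← this, ← hv.add_period]
    ring_nf

end EarSystem
theorem CliqueCycle.exists_frame {V : Type*} [DecidableEq V] {G : SimpleGraph V} {Cs K : Finset V}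
    {c k : ℕ} (H : CliqueCycle G Cs K c k) {x : V} (hx : x ∈ Cs) :
    ∃ v, Frame G Cs c v ∧ v 0 = x := by
  obtain ⟨v, hv⟩ := H.frame
  obtain ⟨i, rfl⟩ := (hv.mem x).1 hx
  exact ⟨_, hv.shift i, by simp⟩

/-- A `CliqueCycle` in a 2-connected graph of minimum degree at least `k`. -/
structure CliqueCycleIn {V : Type*} [Fintype V] [DecidableEq V] (G : SimpleGraph V)
    (Cs K : Finset V) (c k : ℕ) : Prop extends CliqueCycle G Cs K c k where
  pos : 0 < c
  sep : ∀ (v : V) (J : Finset V), J.Nonempty → v ∉ J → (∃ w, w ≠ v ∧ w ∉ J) →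
    ∃ u ∈ J, ∃ w, w ∉ J ∧ w ≠ v ∧ G.Adj u w
  degree : ∀ u, k ≤ (nbrs G u univ).card

/-- `R` is the vertex set of a component of `G - Cs`. -/
structure IsComp {V : Type*} [DecidableEq V] (G : SimpleGraph V) (Cs R : Finset V) : Prop where
  conn : Conn G R
  disjoint : Disjoint R Cs
  closed : ∀ u ∈ R, ∀ w, G.Adj u w → w ∈ R ∨ w ∈ Cs

section

variable {V : Type*} [Fintype V] [DecidableEq V] {G : SimpleGraph V} {Cs K R : Finset V} {c k : ℕ}

theorem exists_isComp {u : V} (hu : u ∉ Cs) : ∃ R, u ∈ R ∧ IsComp G Cs R := by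
  classical
  obtain ⟨R, hR, hmin⟩ := exists_min_image
    ((univ : Finset (Finset V)).filter fun J => u ∈ J ∧ ClosedIn G J Csᶜ) card
    ⟨Csᶜ, mem_filter.2 ⟨mem_univ _, mem_compl.2 hu, subset_rfl, fun _ _ _ h _ => h⟩⟩
  simp only [mem_filter, mem_univ, true_and] at hR hmin
  refine ⟨R, hR.1, ⟨⟨u, hR.1⟩, fun J hJ hJR => ?_⟩, ?_, fun a ha w haw => ?_⟩
  · by_cases huJ : u ∈ J
    · refine eq_of_subset_of_card_le hJR.1 (hmin J ⟨huJ, hJR.1.trans hR.2.1, ?_⟩)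
      intro a ha w hw haw
      exact hJR.2 a ha w (hR.2.2 a (hJR.1 ha) w hw haw) haw
    · have h1 := hmin (R \ J) ⟨mem_sdiff.2 ⟨hR.1, huJ⟩, sdiff_subset.trans hR.2.1, ?_⟩
      · have h2 := card_sdiff_add_card_inter R J
        rw [inter_eq_right.2 hJR.1] at h2
        have := card_pos.2 hJ
        omega
      · intro a ha w hw haw
        rw [mem_sdiff] at ha ⊢
        exact ⟨hR.2.2 a ha.1 w hw haw, fun h => ha.2 (hJR.2 w h a ha.1 haw.symm)⟩
  · exact Finset.disjoint_left.2 fun a ha => mem_compl.1 (hR.2.1 ha)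
  · by_cases hw : w ∈ Cs
    · exact Or.inr hw
    · exact Or.inl (hR.2.2 a ha w (mem_compl.2 hw) haw)

namespace CliqueCycleIn

theorem exists_attachment_ne (H : CliqueCycleIn G Cs K c k) (hR : IsComp G Cs R) {x : V}
    (hx : x ∈ Cs) : ∃ b ∈ R, ∃ y ∈ Cs.erase x, G.Adj b y := by
  obtain ⟨v, hv, rfl⟩ := H.exists_frame hx
  obtain ⟨u, hu, w, hw, hwx, huw⟩ := H.sep (v 0) R hR.conn.1
    (fun h => Finset.disjoint_left.1 hR.disjoint h hx)
    ⟨v (0 + 1), (hv.adj 0).ne',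
      fun h => Finset.disjoint_left.1 hR.disjoint h ((hv.mem _).2 ⟨_, rfl⟩)⟩
  exact ⟨u, hu, w, mem_erase.2 ⟨hwx, (hR.closed u hu w huw).resolve_left hw⟩, huw⟩

theorem attached (H : CliqueCycleIn G Cs K c k) (hR : IsComp G Cs R) {x a : V}
    (hx : x ∈ Cs) (ha : a ∈ R) (hxa : G.Adj x a) : Attached G R x (Cs.erase x) := by
  have hxR : x ∉ R := fun h => Finset.disjoint_left.1 hR.disjoint h hx
  refine ⟨hR.conn, ⟨a, ha, hxa⟩, H.exists_attachment_ne hR hx, fun v hv J hJ hJc => ?_⟩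
  obtain ⟨u, hu, w, hw, hwv, huw⟩ := H.sep v J hJ (fun h => by simpa using hJc.1 h)
    ⟨x, fun h => hxR (h ▸ hv), fun h => hxR (mem_of_mem_erase (hJc.1 h))⟩
  rcases hR.closed u (mem_of_mem_erase (hJc.1 hu)) w huw with h | h
  · exact absurd (hJc.2 u hu w (mem_erase.2 ⟨hwv, h⟩) huw) hw
  · rcases eq_or_ne w x with rfl | hwx
    · exact Or.inl ⟨u, hu, huw.symm⟩
    · exact Or.inr ⟨u, hu, w, mem_erase.2 ⟨hwx, h⟩, huw⟩

theorem exists_attached_ears (H : CliqueCycleIn G Cs K c k) (hR : IsComp G Cs R) {x a : V}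
    (hx : x ∈ Cs) (ha : a ∈ R) (hxa : G.Adj x a) :
    x ∈ K ∧ ∃ b ∈ R, R.card + (nbrs G b (Cs.erase x)).card = k ∧
      0 < (nbrs G b (Cs.erase x)).card ∧
      (2 ≤ R.card → ∃ y v, nbrs G b (Cs.erase x) = {y} ∧ Frame G Cs c v ∧ v 0 = x ∧
        v (R.card + 1) = y ∧ Ear G Cs x y R.card ∧
        ∀ i : ℤ, 0 ≤ i → i < c → (v i ∈ K ↔ ¬ (1 ≤ i ∧ i ≤ R.card))) := by
  have hxR : x ∉ R := fun h => Finset.disjoint_left.1 hR.disjoint h hx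
  obtain ⟨s, hs, a', b, p, hxa', hb, hk, hsR⟩ := (H.attached hR hx ha hxa).exists_path (k := k) hxR
    (hR.disjoint.mono_right (erase_subset _ _)) (fun u hu => (H.degree u).trans
      (card_le_card fun w hw => by
        rw [mem_nbrs] at hw ⊢
        refine ⟨?_, hw.2⟩
        rw [mem_insert, mem_union, mem_erase]
        have := hR.closed u hu w hw.2
        tauto))
  have hbR := hs p.right_mem
  have hd : Disjoint s Cs := hR.disjoint.mono_left hs
  obtain ⟨v, hv, rfl⟩ := H.exists_frame hx
  classical
  set Q := (Ioo (0 : ℤ) c).filter fun q => G.Adj b (v q) with hQ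
  have hQm : ∀ {q}, q ∈ Q ↔ (0 < q ∧ q < c) ∧ G.Adj b (v q) := by
    intro q
    rw [hQ, mem_filter, mem_Ioo]
  have hQi : Q.image v = nbrs G b (Cs.erase (v 0)) := by
    ext w
    rw [mem_image, mem_nbrs, mem_erase]
    constructor
    · rintro ⟨q, hq, rfl⟩
      rw [hQm] at hq
      refine ⟨⟨fun h => ?_, (hv.mem _).2 ⟨q, rfl⟩⟩, hq.2⟩
      have := hv.inj h (by omega) (by omega)
      omega
    · rintro ⟨⟨hw, hwC⟩, hbw⟩
      obtain ⟨q, hq0, hqc, rfl⟩ := hv.exists_index H.pos hwC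
      refine ⟨q, hQm.2 ⟨⟨?_, hqc⟩, hbw⟩, rfl⟩
      rcases hq0.eq_or_lt with rfl | h
      · exact absurd rfl hw
      · exact h
  have hQc : Q.card = (nbrs G b (Cs.erase (v 0))).card := by
    rw [← hQi, card_image_of_injOn]
    intro i hi j hj hij
    rw [mem_coe, hQm] at hi hj
    exact hv.inj hij (by omega) (by omega)
  have E : EarSystem G Cs c v s.card Q := by
    refine ⟨card_pos.2 ⟨_, p.right_mem⟩, fun q hq => (hQm.1 hq).1, ?_, ?_, ?_⟩
    · rwa [← card_pos, hQc]
    · exact fun q hq => ⟨s, a', b, hd, p, hxa', (hQm.1 hq).2, le_rfl⟩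
    · intro q hq q' hq' _
      refine ⟨{b}, b, b, ?_, .single b, (hQm.1 hq).2.symm, (hQm.1 hq').2, by simp⟩
      exact disjoint_singleton_left.2 (Finset.disjoint_left.1 hR.disjoint hbR)
  obtain ⟨h1, h2, h3⟩ := E.exists_frame hv H.toCliqueCycle (by omega)
  have hsR' : s = R := by
    rcases hsR with h | h
    · exact h
    · omega
  subst hsR'
  refine ⟨h2, b, hbR, by omega, hb, fun hm => ?_⟩
  obtain ⟨h4, v', hv', h5, h6, h7⟩ := h3 hm
  obtain ⟨q, hq⟩ := card_eq_one.1 h4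
  have hqQ : q ∈ Q := by simp [hq]
  refine ⟨v q, v', ?_, hv', h5, h6 q hqQ, E.left q hqQ, h7⟩
  rw [← hQi, hq, image_singleton]

theorem mem_of_adj (H : CliqueCycleIn G Cs K c k) {u z : V} (hu : u ∉ Cs) (hz : z ∈ Cs)
    (h : G.Adj u z) : z ∈ K := by
  obtain ⟨R, huR, hR⟩ := exists_isComp (G := G) hu
  exact (H.exists_attached_ears hR hz huR h.symm).1

end CliqueCycleIn

end

theorem Frame.card_eq {V : Type*} [DecidableEq V] {G : SimpleGraph V} {Cs : Finset V} {c : ℕ}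
    {v : ℤ → V} (hv : Frame G Cs c v) (hc : 0 < c) : Cs.card = c := by
  have h : (Icc (0 : ℤ) (c - 1)).image v = Cs := by
    refine subset_antisymm (hv.seg_subset _) fun w hw => ?_
    obtain ⟨i, h0, hi, rfl⟩ := hv.exists_index hc hw
    exact mem_image_of_mem _ (mem_Icc.2 ⟨h0, by omega⟩)
  have := hv.card_seg (a := 0) (b := c - 1) (by omega)
  rw [h] at this
  omega

/-- The positions in `[0, c)` of the neighbours of `b`. -/
theorem Frame.exists_positions {V : Type*} [Fintype V] [DecidableEq V] {G : SimpleGraph V}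
    {Cs : Finset V} {c : ℕ} {v : ℤ → V} (hv : Frame G Cs c v) (hc : 0 < c) {b : V}
    (hb : ∀ z, G.Adj b z → z ∈ Cs) :
    ∃ Q : Finset ℤ, (∀ q, q ∈ Q ↔ (0 ≤ q ∧ q < c) ∧ G.Adj b (v q)) ∧
      Q.card = (nbrs G b univ).card := by
  classical
  have hQ : ∀ q, q ∈ (Ico (0 : ℤ) c).filter (fun q => G.Adj b (v q)) ↔
      (0 ≤ q ∧ q < c) ∧ G.Adj b (v q) := fun q => by rw [mem_filter, mem_Ico]
  refine ⟨_, hQ, ?_⟩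
  rw [← card_image_of_injOn (f := v)]
  · congr 1
    ext w
    rw [mem_image, mem_nbrs]
    constructor
    · rintro ⟨q, hq, rfl⟩
      exact ⟨mem_univ _, ((hQ q).1 hq).2⟩
    · rintro ⟨-, hw⟩
      obtain ⟨q, h0, h1, rfl⟩ := hv.exists_index hc (hb w hw)
      exact ⟨q, (hQ q).2 ⟨⟨h0, h1⟩, hw⟩, rfl⟩
  · intro i hi j hj hij
    rw [mem_coe, hQ] at hi hj
    exact hv.inj hij (by omega) (by omega)

namespace CliqueCycleIn

variable {V : Type*} [Fintype V] [DecidableEq V] {G : SimpleGraph V} {Cs K : Finset V} {c k : ℕ}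
  {v : ℤ → V} {b : V}

theorem card_nbrs_of_isolated (H : CliqueCycleIn G Cs K c k) (hbC : b ∉ Cs)
    (hb : ∀ z, G.Adj b z → z ∈ Cs) :
    (nbrs G b univ).card = k ∧ 2 ≤ k ∧ nbrs G b univ ⊆ K := by
  obtain ⟨R, hbR, hR⟩ := exists_isComp (G := G) hbC
  have hRb : R = {b} := by
    refine (hR.conn.2 {b} (singleton_nonempty b) ⟨singleton_subset_iff.2 hbR, ?_⟩).symm
    intro u hu w hw huw
    rw [mem_singleton] at hu
    subst hu
    exact absurd (hb w huw) (Finset.disjoint_left.1 hR.disjoint hw)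
  subst hRb
  obtain ⟨v, hv⟩ := H.frame
  obtain ⟨b', hb', x, hx, hbx⟩ := H.exists_attachment_ne hR ((hv.mem _).2 ⟨0, rfl⟩)
  rw [mem_singleton] at hb'
  subst hb'
  obtain ⟨-, b, hb', h1, h2, -⟩ := H.exists_attached_ears hR (mem_of_mem_erase hx) hbR hbx.symm
  rw [mem_singleton] at hb'
  subst hb'
  have h3 : nbrs G b univ = insert x (nbrs G b (Cs.erase x)) := by
    ext w
    simp only [mem_nbrs, mem_univ, true_and, mem_insert, mem_erase]
    constructor
    · intro hw
      have := hb w hw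
      tauto
    · rintro (rfl | h)
      · exact hbx
      · exact h.2
  rw [card_singleton] at h1
  refine ⟨?_, by omega, fun z hz => ?_⟩
  · rw [h3, card_insert_of_notMem (by simp [mem_nbrs]), add_comm, h1]
  · have := (mem_nbrs.1 hz).2
    exact H.mem_of_adj hbC (hb z this) this

omit [Fintype V] in
theorem ear_of_adj (hbC : b ∉ Cs) {x y : V} (hx : G.Adj b x) (hy : G.Adj b y) : Ear G Cs x y 1 :=
  ⟨{b}, b, b, disjoint_singleton_left.2 hbC, .single b, hx.symm, hy, by simp⟩

theorem exists_frame_of_isolated (H : CliqueCycleIn G Cs K c k) (hbC : b ∉ Cs)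
    (hb : ∀ z, G.Adj b z → z ∈ Cs) : ∃ v, Frame G Cs c v ∧ G.Adj b (v 0) ∧ v 1 ∈ K := by
  obtain ⟨v, hv⟩ := H.frame
  obtain ⟨hk, hk2, -⟩ := H.card_nbrs_of_isolated hbC hb
  obtain ⟨Q, hQ, hQc⟩ := hv.exists_positions H.pos hb
  obtain ⟨q, hq, hqK⟩ : ∃ q ∈ Q, v (q + 1) ∈ K := by
    by_contra! hcon
    have h1 := hv.card_missing H.toCliqueCycle (P := Q.image fun q => (q + 1) % c) (by
      intro i hi
      obtain ⟨q, hq, rfl⟩ := mem_image.1 hi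
      have := H.pos
      refine ⟨Int.emod_nonneg _ (by omega), Int.emod_lt_of_pos _ (by omega), ?_⟩
      rw [(hv.eq_iff _ (q + 1)).2 ⟨(q + 1) / c, by rw [Int.emod_def]; ring⟩]
      exact hcon q hq)
    rw [card_image_of_injOn, hQc, hk] at h1
    · exact absurd h1 (lt_irrefl _)
    · intro i hi j hj hij
      rw [mem_coe, hQ] at hi hj
      refine hv.inj ((hv.eq_iff i j).2 ?_) (by omega) (by omega)
      simpa using Int.ModEq.dvd (show i + 1 ≡ j + 1 [ZMOD c] from hij)
  exact ⟨_, hv.shift q, by simpa using ((hQ q).1 hq).2, hqK⟩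

theorem nbrs_eq_of_isolated (H : CliqueCycleIn G Cs K c k) (hbC : b ∉ Cs)
    (hb : ∀ z, G.Adj b z → z ∈ Cs) :
    (Cs \ K).card + 1 = k ∧ ∀ s ∈ Cs \ K, nbrs G s univ = nbrs G b univ := by
  obtain ⟨hk, hk2, hbK⟩ := H.card_nbrs_of_isolated hbC hb
  obtain ⟨v, hv, hv0, hv1⟩ := H.exists_frame_of_isolated hbC hb
  obtain ⟨Q, hQ, hQc⟩ := hv.exists_positions H.pos hb
  rw [hk] at hQc
  have hear : ∀ q ∈ Q, ∀ q' ∈ Q, Ear G Cs (v q) (v q') 1 := fun q hq q' hq' =>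
    ear_of_adj hbC ((hQ q).1 hq).2 ((hQ q').1 hq').2
  have h0Q : 0 ∈ Q := (hQ 0).2 ⟨⟨le_rfl, by exact_mod_cast H.pos⟩, hv0⟩
  have hdist : ∀ q ∈ Q, ∀ q' ∈ Q, q < q' → q + 2 ≤ q' ∧ q' + 2 ≤ q + c := by
    intro q hq q' hq' h
    have h1 := ((hQ q).1 hq).1
    have h2 := ((hQ q').1 hq').1
    have h3 := hv.ear_dist H.toCliqueCycle (hear q hq q' hq') h (by omega)
    have h4 := hv.ear_dist H.toCliqueCycle (i := q') (j := q + c) (m := 1)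
      (by rw [hv.add_period]; exact hear q' hq' q hq) (by omega) (by omega)
    omega
  have hpos : ∀ q ∈ Q.erase 0, q ∈ Q ∧ 2 ≤ q ∧ q + 2 ≤ c := by
    intro q hq
    rw [mem_erase] at hq
    have h1 := ((hQ q).1 hq.2).1
    have := hdist 0 h0Q q hq.2 (by omega)
    exact ⟨hq.2, by omega, by omega⟩
  have hsucc : ∀ q ∈ Q.erase 0, v (q + 1) ∉ K := by
    intro q hq hK
    have h1 := hpos q hq
    have := hv.ear_clique H.toCliqueCycle (hear 0 h0Q q h1.1) (a := 1) (b := q + 1) (by omega)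
      (by omega) (by omega) (by omega) hv1 hK
    omega
  set P := (Q.erase 0).image (· + 1) with hP
  have hPc : P.card + 1 = k := by
    rw [hP, card_image_of_injective _ (add_left_injective 1), card_erase_of_mem h0Q]
    omega
  have hPK : ∀ i ∈ P, 0 ≤ i ∧ i < c ∧ v i ∉ K := by
    intro i hi
    obtain ⟨q, hq, rfl⟩ := mem_image.1 hi
    have := hpos q hq
    exact ⟨by omega, by omega, hsucc q hq⟩
  have hmem : ∀ {i : ℤ}, 0 ≤ i → i < c → i ∉ P → v i ∈ K := fun h0 h1 h =>
    hv.mem_of_card_missing H.toCliqueCycle hPK hPc.ge h0 h1 h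
  have hstep : ∀ q ∈ Q.erase 0, q + 2 ∈ Q ∨ q + 2 = c := by
    classical
    set Q₂ := insert (c : ℤ) (Q.erase 0) with hQ₂
    set S := Q₂.image (· - 1) with hS
    have hQ₂' : ∀ q ∈ Q₂, 2 ≤ q ∧ q ≤ c ∧ ∀ q' ∈ Q₂, q < q' → q + 2 ≤ q' ∧
        Ear G Cs (v q) (v q') 1 := by
      intro q hq
      rcases mem_insert.1 hq with rfl | hq
      · obtain ⟨q, hq⟩ : (Q.erase 0).Nonempty := by
          rw [← card_pos, card_erase_of_mem h0Q]
          omega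
        have := hpos q hq
        refine ⟨by omega, le_rfl, fun q' hq' hlt => ?_⟩
        rcases mem_insert.1 hq' with rfl | hq'
        · omega
        · have := hpos q' hq'
          omega
      · have h1 := hpos q hq
        refine ⟨by omega, by omega, fun q' hq' hlt => ?_⟩
        rcases mem_insert.1 hq' with rfl | hq'
        · have := hear q h1.1 0 h0Q
          rw [← hv.add_period 0, zero_add] at this
          exact ⟨h1.2.2, this⟩
        · have h2 := hpos q' hq'
          exact ⟨(hdist q h1.1 q' h2.1 hlt).1, hear q h1.1 q' h2.1⟩
    have hSc : S.card = k := by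
      rw [hS, card_image_of_injective _ (sub_left_injective), hQ₂, card_insert_of_notMem, hP,
        card_image_of_injective _ (add_left_injective 1)] at *
      · exact hPc
      · intro h
        have := hpos _ h
        omega
    have hSK : (S.filter fun i => v i ∈ K).card ≤ 1 := by
      rw [card_le_one]
      intro i hi j hj
      rw [mem_filter] at hi hj
      obtain ⟨q, hq, rfl⟩ := mem_image.1 hi.1
      obtain ⟨q', hq', rfl⟩ := mem_image.1 hj.1
      by_contra hne
      wlog hlt : q < q' generalizing q q'
      · exact this q' hq' hj q hq hi (Ne.symm hne) (by omega)
      have h1 := hQ₂' q hq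
      have h2 := h1.2.2 q' hq' hlt
      have h3 := hQ₂' q' hq'
      have := hv.ear_clique' H.toCliqueCycle h2.2 (a := q - 1) (b := q' - 1) (by omega) (by omega)
        (by omega) (by omega) hi.2 hj.2
      omega
    have hSP : S.filter (fun i => v i ∉ K) = P := by
      have h1 := card_filter_add_card_filter_not (s := S) (fun i => v i ∈ K)
      refine eq_of_subset_of_card_le (fun i hi => ?_) (by omega)
      rw [mem_filter] at hi
      obtain ⟨q, hq, rfl⟩ := mem_image.1 hi.1
      have h2 := hQ₂' q hq
      by_contra hcon
      exact hi.2 (hmem (by omega) (by omega) hcon)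
    intro q hq
    have h1 : q + 1 ∈ P := mem_image_of_mem _ hq
    rw [← hSP, mem_filter] at h1
    obtain ⟨q', hq', h2⟩ := mem_image.1 h1.1
    have h3 : q' = q + 2 := by omega
    rw [h3] at hq'
    rcases mem_insert.1 hq' with h | h
    · exact Or.inr h
    · exact Or.inl (mem_of_mem_erase h)
  have htail : ∀ q ∈ Q.erase 0, ∀ n : ℕ, q + n < c → q + n ∈ Q ∨ q + n - 1 ∈ Q := by
    intro q hq n hn
    induction n with
    | zero => exact Or.inl (by simpa using (hpos q hq).1)
    | succ n ih =>
      push_cast at hn ⊢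
      have h1 := hpos q hq
      rcases ih (by omega) with h | h
      · exact Or.inr (by rwa [show q + (n + 1) - 1 = q + n by ring])
      · rcases hstep _ (mem_erase.2 ⟨by omega, h⟩) with h' | h'
        · exact Or.inl (by rwa [show q + (n + 1) = q + n - 1 + 2 by ring])
        · omega
  have hcard : (Cs \ K).card + 1 = k := by
    have h1 : P.card ≤ (Cs \ K).card := by
      refine card_le_card_of_injOn v (fun i hi => ?_) fun i hi j hj hij => ?_
      · exact mem_sdiff.2 ⟨(hv.mem _).2 ⟨i, rfl⟩, (hPK i hi).2.2⟩
      · have h1 := hPK i hi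
        have h2 := hPK j hj
        exact hv.inj hij (by omega) (by omega)
    have := H.missing
    omega
  refine ⟨hcard, fun s hs => eq_of_subset_of_card_le (fun z hz => ?_) (hk ▸ H.degree s)⟩
  rw [mem_sdiff] at hs
  have hsz := (mem_nbrs.1 hz).2
  have hzC : z ∈ Cs := by
    by_contra h
    exact hs.2 (H.mem_of_adj h hs.1 hsz.symm)
  obtain ⟨p, hp0, hpc, rfl⟩ := hv.exists_index H.pos hs.1
  have hpP : p ∈ P := by
    by_contra h
    exact hs.2 (hmem hp0 hpc h)
  obtain ⟨q, hq, rfl⟩ := mem_image.1 hpP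
  obtain ⟨r, hr0, hrc, rfl⟩ := hv.exists_index H.pos hzC
  have hq' := hpos q hq
  suffices r ∈ Q from mem_nbrs.2 ⟨mem_univ _, ((hQ r).1 this).2⟩
  by_contra hrQ
  have hadj : ∀ i ∈ Q, ∀ j ∈ Q, i < j → ¬ G.Adj (v (i + 1)) (v (j + 1)) := by
    intro i hi j hj hij h
    have h1 := hdist i hi j hj hij
    have := hv.ear_adj H.toCliqueCycle (hear i hi j hj) (by omega) (by omega) (by omega)
      (by omega) h
    omega
  have hr1 : r - 1 ∉ Q := by
    intro h
    rw [show r = r - 1 + 1 by ring] at hsz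
    rcases lt_trichotomy q (r - 1) with hlt | heq | hlt
    · exact hadj q hq'.1 _ h hlt hsz
    · rw [← heq] at hsz
      exact hsz.ne rfl
    · exact hadj _ h q hq'.1 hlt hsz.symm
  have hrq : r < q := by
    by_contra! hle
    have := htail q hq (r - q).toNat (by omega)
    rw [Int.toNat_of_nonneg (by omega), add_sub_cancel] at this
    tauto
  have hrpos : 2 ≤ r := by
    have h1 : r ≠ 0 := fun h => hrQ (h ▸ h0Q)
    have h2 : r ≠ 1 := fun h => hr1 (by rw [h]; exact h0Q)
    omega
  have hrK : v (r + 1) ∈ K := hmem (by omega) (by omega) fun h => by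
    obtain ⟨i, hi, hir⟩ := mem_image.1 h
    rw [show r = i by omega] at hrQ
    exact hrQ (hpos i hi).1
  have hp₁ := hv.pathOn_seg (a := r + 1) (b := q) (by omega) (by omega)
  have hp₂ := hv.pathOn_seg (a := 1) (b := r) (by omega) (by omega)
  have hp₃ := hv.pathOn_seg (a := q + 1) (b := 0 + c) (by omega) (by omega)
  have hd₁ := (hv.disjoint_seg (a := 1) (b := r) (a' := r + 1) (b' := q) (by omega)
    (by omega)).symm
  have hd₂ := hv.disjoint_seg (a := 1) (b := r) (a' := q + 1) (b' := 0 + c) (by omega) (by omega)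
  have hd₃ := hv.disjoint_seg (a := r + 1) (b := q) (a' := q + 1) (b' := 0 + c) (by omega)
    (by omega)
  have hd₄ := disjoint_union_left.2 ⟨hd₃, hd₂⟩
  have hc₁ := hv.card_seg (a := r + 1) (b := q) (by omega)
  have hc₂ := hv.card_seg (a := 1) (b := r) (by omega)
  have hc₃ := hv.card_seg (a := q + 1) (b := 0 + c) (by omega)
  have hr1' : G.Adj (v (r + 1)) (v 1) := H.clique _ hrK _ hv1 fun h => by
    have := hv.inj h (by omega) (by omega)
    omega
  have hlong := (hp₁.symm.join hp₂ hr1' hd₁).join hp₃ hsz.symm hd₄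
  rw [hv.add_period] at hlong
  have := H.ear _ _ _ _ (hear q hq'.1 0 h0Q)
    (union_subset (union_subset (hv.seg_subset _) (hv.seg_subset _)) (hv.seg_subset _)) hlong
  rw [card_union_of_disjoint hd₄, card_union_of_disjoint hd₁] at this
  omega

theorem exists_common_nbrs (H : CliqueCycleIn G Cs K c k) (hbC : b ∉ Cs)
    (hind : ∀ u, u ∉ Cs → ∀ w, w ∉ Cs → ¬ G.Adj u w) :
    K.card + k = c + 1 ∧ ∃ T ⊆ K, T.card = k ∧ ∀ u, u ∉ K → ∀ z, G.Adj u z ↔ z ∈ T := by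
  have hN : ∀ u, u ∉ Cs → ∀ z, G.Adj u z → z ∈ Cs := fun u hu z huz => by
    by_contra h
    exact hind u hu z h huz
  obtain ⟨hk, hk2, hbK⟩ := H.card_nbrs_of_isolated hbC (hN b hbC)
  obtain ⟨hKc, hT⟩ := H.nbrs_eq_of_isolated hbC (hN b hbC)
  obtain ⟨v, hv⟩ := H.frame
  obtain ⟨s, hs⟩ : (Cs \ K).Nonempty := by
    rw [← card_pos]
    omega
  refine ⟨?_, _, hbK, hk, fun u hu z => ?_⟩
  · have h1 := hv.card_eq H.pos
    have h2 := card_sdiff_add_card_eq_card H.subset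
    omega
  · have h1 : nbrs G u univ = nbrs G b univ := by
      by_cases huC : u ∈ Cs
      · exact hT u (mem_sdiff.2 ⟨huC, hu⟩)
      · rw [← (H.nbrs_eq_of_isolated huC (hN u huC)).2 s hs, hT s hs]
    rw [← h1, mem_nbrs]
    simp

theorem adj_iff_of_card (H : CliqueCycleIn G Cs K c k) {B : Finset V} {x y w : V}
    (hB : B.card + 1 = k) (hx : x ∉ B) (hy : y ∉ B) (hxy : x ≠ y) (hw : w ∈ B)
    (h : ∀ z, G.Adj w z → z ∈ B ∨ z = x ∨ z = y) (z : V) :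
    G.Adj w z ↔ z ≠ w ∧ (z ∈ B ∨ z = x ∨ z = y) := by
  have h1 : nbrs G w univ = (insert x (insert y B)).erase w := by
    refine eq_of_subset_of_card_le (fun z hz => ?_) ?_
    · have hwz := (mem_nbrs.1 hz).2
      have := h z hwz
      rw [mem_erase, mem_insert, mem_insert]
      exact ⟨hwz.ne', by tauto⟩
    · rw [card_erase_of_mem (by simp [hw]), card_insert_of_notMem (by simp [hxy, hx]),
        card_insert_of_notMem hy]
      have := H.degree w
      omega
  have h2 : z ∈ nbrs G w univ ↔ G.Adj w z := by simp [mem_nbrs]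
  rw [← h2, h1, mem_erase, mem_insert, mem_insert]
  tauto

/-- The situation of a `CliqueCycle` whose vertices outside `K` form a segment which can be
replaced by an ear of the same size. -/
structure HasEarSegment (G : SimpleGraph V) (Cs K : Finset V) (c m : ℕ) (v : ℤ → V) : Prop where
  frame : Frame G Cs c v
  pos : 1 ≤ m
  lt : m + 1 < c
  ear : Ear G Cs (v 0) (v (m + 1)) m
  mem_iff : ∀ i : ℤ, 0 ≤ i → i < c → (v i ∈ K ↔ ¬ (1 ≤ i ∧ i ≤ m))

variable {m : ℕ} {R : Finset V}

theorem exists_hasEarSegment (H : CliqueCycleIn G Cs K c k) {u w : V} (hu : u ∉ Cs) (hw : w ∉ Cs)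
    (huw : G.Adj u w) : ∃ m v, m + 1 = k ∧ HasEarSegment G Cs K c m v := by
  obtain ⟨R, huR, hR⟩ := exists_isComp (G := G) hu
  have hwR := (hR.closed u huR w huw).resolve_right hw
  have hR2 : 2 ≤ R.card := one_lt_card.2 ⟨u, huR, w, hwR, huw.ne⟩
  obtain ⟨v₀, hv₀⟩ := H.frame
  obtain ⟨a, ha, x, hx, hax⟩ := H.exists_attachment_ne hR ((hv₀.mem _).2 ⟨0, rfl⟩)
  obtain ⟨-, b, hbR, h1, -, h2⟩ := H.exists_attached_ears hR (mem_of_mem_erase hx) ha hax.symm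
  obtain ⟨y, v, hy, hv, rfl, rfl, h3, h4⟩ := h2 hR2
  rw [hy, card_singleton] at h1
  refine ⟨R.card, v, h1, hv, by omega, ?_, h3, h4⟩
  have hy' : v (R.card + 1) ∈ nbrs G b (Cs.erase (v 0)) := by simp [hy]
  rw [mem_nbrs, mem_erase] at hy'
  have hyK := H.mem_of_adj (Finset.disjoint_left.1 hR.disjoint hbR) hy'.1.2 hy'.2
  by_contra! hlt
  obtain ⟨j, hj0, hjc, hj⟩ := hv.exists_index H.pos hy'.1.2
  rw [← hj, h4 j hj0 hjc] at hyK
  have hj' : j = 0 := by omega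
  exact hy'.1.1 (by rw [← hj, hj'])

theorem HasEarSegment.eq_of_ear (H : CliqueCycleIn G Cs K c k) (S : HasEarSegment G Cs K c m v)
    {i j : ℤ} (hi : 0 ≤ i) (hij : i < j) (hj : j < c) (hiK : v i ∈ K) (hjK : v j ∈ K)
    (he : Ear G Cs (v i) (v j) 1) : i = 0 ∧ j = m + 1 := by
  rw [S.mem_iff i hi (by omega)] at hiK
  rw [S.mem_iff j (by omega) hj] at hjK
  have hm := S.pos
  have hK : ∀ l : ℤ, m + 1 ≤ l → l ≤ c → v l ∈ K := by
    intro l hl hlc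
    rcases hlc.eq_or_lt with rfl | hlc
    · have := S.frame.add_period 0
      rw [zero_add] at this
      rw [this, S.mem_iff 0 le_rfl (by omega)]
      omega
    · rw [S.mem_iff l (by omega) hlc]
      omega
  rcases hi.eq_or_lt with rfl | hi
  · refine ⟨rfl, ?_⟩
    by_contra hne
    have h1 : v (-1) ∈ K := by
      rw [← S.frame.add_period]
      exact hK _ (by omega) (by omega)
    have := S.frame.ear_clique' H.toCliqueCycle he (a := -1) (b := j - 1) (by omega) (by omega)
      (by omega) (by omega) h1 (hK _ (by omega) (by omega))
    omega
  · have := S.frame.ear_clique H.toCliqueCycle he (a := i + 1) (b := j + 1) (by omega) (by omega)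
      (by omega) (by omega) (hK _ (by omega) (by omega)) (hK _ (by omega) (by omega))
    omega

theorem HasEarSegment.exists_attachment (H : CliqueCycleIn G Cs K c k)
    (S : HasEarSegment G Cs K c m v) (hR : IsComp G Cs R) {u z : V} (hu : u ∈ R) (hz : z ∈ Cs)
    (huz : G.Adj u z) : (z = v 0 ∨ z = v (m + 1)) ∧ ∃ a ∈ R, G.Adj (v 0) a := by
  obtain ⟨b, hb, z', hz', hbz'⟩ := H.exists_attachment_ne hR hz
  rw [mem_erase] at hz'
  obtain ⟨s, hs, p⟩ := hR.conn.exists_path hu hb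
  have hRC := Finset.disjoint_left.1 hR.disjoint
  have hzK := H.mem_of_adj (hRC hu) hz huz
  have hzK' := H.mem_of_adj (hRC hb) hz'.2 hbz'
  have he : Ear G Cs z z' 1 := ⟨s, u, b, hR.disjoint.mono_left hs, p, huz.symm, hbz',
    card_pos.2 ⟨_, p.left_mem⟩⟩
  obtain ⟨i, hi0, hic, rfl⟩ := S.frame.exists_index H.pos hz
  obtain ⟨j, hj0, hjc, rfl⟩ := S.frame.exists_index H.pos hz'.2
  rcases lt_trichotomy i j with hij | rfl | hij
  · obtain ⟨rfl, rfl⟩ := S.eq_of_ear H hi0 hij hjc hzK hzK' he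
    exact ⟨Or.inl rfl, u, hu, huz.symm⟩
  · exact absurd rfl hz'.1
  · obtain ⟨rfl, rfl⟩ := S.eq_of_ear H hj0 hij hic hzK' hzK he.symm
    exact ⟨Or.inr rfl, b, hb, hbz'.symm⟩

theorem HasEarSegment.card_comp (H : CliqueCycleIn G Cs K c k) (S : HasEarSegment G Cs K c m v)
    (hR : IsComp G Cs R) : R.card + 1 = k := by
  have h0 : v 0 ∈ Cs := (S.frame.mem _).2 ⟨0, rfl⟩
  obtain ⟨b, hb, z, hz, hbz⟩ := H.exists_attachment_ne hR h0
  obtain ⟨-, a, ha, h0a⟩ := S.exists_attachment H hR hb (mem_of_mem_erase hz) hbz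
  obtain ⟨-, d, hd, h1, h2, -⟩ := H.exists_attached_ears hR h0 ha h0a
  have h3 : nbrs G d (Cs.erase (v 0)) ⊆ {v (m + 1)} := by
    intro w hw
    rw [mem_nbrs, mem_erase] at hw
    rw [mem_singleton]
    exact (S.exists_attachment H hR hd hw.1.2 hw.2).1.resolve_left hw.1.1
  have := card_le_card h3
  rw [card_singleton] at this
  omega

theorem HasEarSegment.adj_segment (H : CliqueCycleIn G Cs K c k) (S : HasEarSegment G Cs K c m v)
    {a : ℤ} (ha : 1 ≤ a) (ham : a ≤ m) {z : V} (hz : G.Adj (v a) z) :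
    z ∈ (Icc (1 : ℤ) m).image v ∨ z = v 0 ∨ z = v (m + 1) := by
  have hlt := S.lt
  have haK : v a ∉ K := by
    rw [S.mem_iff a (by omega) (by omega)]
    omega
  have hzC : z ∈ Cs := by
    by_contra h
    exact haK (H.mem_of_adj h ((S.frame.mem _).2 ⟨a, rfl⟩) hz.symm)
  obtain ⟨j, hj0, hjc, rfl⟩ := S.frame.exists_index H.pos hzC
  by_contra! hcon
  have hj : m + 2 ≤ j := by
    have h1 : j ≠ 0 := fun h => hcon.2.1 (by rw [h])
    have h2 : j ≠ m + 1 := fun h => hcon.2.2 (by rw [h])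
    have h3 : ¬ (1 ≤ j ∧ j ≤ m) := fun h => hcon.1 (mem_image_of_mem _ (mem_Icc.2 h))
    omega
  have hv := S.frame
  have hp₁ := hv.pathOn_seg (a := 0) (b := a) (by omega) (by omega)
  have hp₂ := hv.pathOn_seg (a := j) (b := c - 1) (by omega) (by omega)
  have hp₃ := hv.pathOn_seg (a := m + 1) (b := j - 1) (by omega) (by omega)
  have hd₁ := hv.disjoint_seg (a := 0) (b := a) (a' := j) (b' := c - 1) (by omega) (by omega)
  have hd₂ := hv.disjoint_seg (a := 0) (b := a) (a' := m + 1) (b' := j - 1) (by omega) (by omega)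
  have hd₃ := (hv.disjoint_seg (a := m + 1) (b := j - 1) (a' := j) (b' := c - 1) (by omega)
    (by omega)).symm
  have hd₄ := disjoint_union_left.2 ⟨hd₂, hd₃⟩
  have hc₁ := hv.card_seg (a := 0) (b := a) (by omega)
  have hc₂ := hv.card_seg (a := j) (b := c - 1) (by omega)
  have hc₃ := hv.card_seg (a := m + 1) (b := j - 1) (by omega)
  have hadj : G.Adj (v (c - 1)) (v (j - 1)) := by
    refine H.clique _ ?_ _ ?_ fun h => ?_
    · rw [S.mem_iff _ (by omega) (by omega)]
      omega
    · rw [S.mem_iff _ (by omega) (by omega)]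
      omega
    · have := hv.inj h (by omega) (by omega)
      omega
  have := H.ear _ _ _ _ S.ear
    (union_subset (union_subset (hv.seg_subset _) (hv.seg_subset _)) (hv.seg_subset _))
    ((hp₁.join hp₂ hz hd₁).join hp₃.symm hadj hd₄)
  rw [card_union_of_disjoint hd₄, card_union_of_disjoint hd₁] at this
  omega

theorem exists_blocks (H : CliqueCycleIn G Cs K c k) {u w : V} (hu : u ∉ Cs) (hw : w ∉ Cs)
    (huw : G.Adj u w) : K.card + k = c + 1 ∧ ∃ x ∈ K, ∃ y ∈ K, x ≠ y ∧
      ∀ u, u ∉ K → ∃ B : Finset V, u ∈ B ∧ B.card + 1 = k ∧ Disjoint B K ∧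
        ∀ w ∈ B, ∀ z, G.Adj w z ↔ z ≠ w ∧ (z ∈ B ∨ z = x ∨ z = y) := by
  obtain ⟨m, v, hmk, S⟩ := H.exists_hasEarSegment hu hw huw
  have hv := S.frame
  have hlt := S.lt
  have hcardS := hv.card_seg (a := 1) (b := m) (by omega)
  have hS : (Icc (1 : ℤ) m).image v = Cs \ K := by
    ext w
    rw [mem_image, mem_sdiff]
    constructor
    · rintro ⟨i, hi, rfl⟩
      rw [mem_Icc] at hi
      refine ⟨(hv.mem _).2 ⟨i, rfl⟩, ?_⟩
      rw [S.mem_iff i (by omega) (by omega)]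
      omega
    · rintro ⟨hwC, hwK⟩
      obtain ⟨i, hi0, hic, rfl⟩ := hv.exists_index H.pos hwC
      rw [S.mem_iff i hi0 hic, not_not] at hwK
      exact ⟨i, mem_Icc.2 hwK, rfl⟩
  have hx : v 0 ∈ K := by
    rw [S.mem_iff 0 le_rfl (by omega)]
    omega
  have hy : v (m + 1) ∈ K := by
    rw [S.mem_iff _ (by omega) (by omega)]
    omega
  have hxy : v 0 ≠ v (m + 1) := fun h => by
    have := hv.inj h (by omega) (by omega)
    omega
  refine ⟨?_, v 0, hx, v (m + 1), hy, hxy, fun u hu => ?_⟩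
  · have h1 := hv.card_eq H.pos
    have h2 := card_sdiff_add_card_eq_card H.subset
    rw [← hS] at h2
    omega
  by_cases huC : u ∈ Cs
  · have hd : Disjoint ((Icc (1 : ℤ) m).image v) K := hS ▸ sdiff_disjoint
    have hd' := Finset.disjoint_right.1 hd
    have hBc : ((Icc (1 : ℤ) m).image v).card + 1 = k := by omega
    refine ⟨_, hS ▸ mem_sdiff.2 ⟨huC, hu⟩, hBc, hd, fun w hw =>
      H.adj_iff_of_card hBc (hd' hx) (hd' hy) hxy hw fun z hwz => ?_⟩
    obtain ⟨a, ha, rfl⟩ := mem_image.1 hw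
    rw [mem_Icc] at ha
    exact S.adj_segment H ha.1 ha.2 hwz
  · obtain ⟨R, huR, hR⟩ := exists_isComp (G := G) huC
    have hd := hR.disjoint.mono_right H.subset
    have hd' := Finset.disjoint_right.1 hd
    have hBc := S.card_comp H hR
    refine ⟨R, huR, hBc, hd, fun w hw =>
      H.adj_iff_of_card hBc (hd' hx) (hd' hy) hxy hw fun z hwz => ?_⟩
    rcases hR.closed w hw z hwz with h | h
    · exact Or.inl h
    · exact Or.inr (S.exists_attachment H hR hw h hwz).1

end CliqueCycleIn

theorem exists_injOn_lt {α : Type*} (S : Finset α) :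
    ∃ g : α → ℕ, Set.InjOn g S ∧ ∀ v ∈ S, g v < S.card := by
  classical
  refine ⟨fun v => if h : v ∈ S then S.equivFin ⟨v, h⟩ else 0, fun u hu w hw huw => ?_,
    fun v hv => ?_⟩
  · rw [mem_coe] at hu hw
    simp only [hu, hw, dif_pos] at huw
    simpa using S.equivFin.injective (Fin.ext huw)
  · simp only [hv, dif_pos]
    exact Fin.is_lt _

theorem exists_equiv_fin {V : Type*} [Fintype V] [DecidableEq V] {T K : Finset V} (hTK : T ⊆ K)
    {g : V → ℕ} (hg : Set.InjOn g ↑Kᶜ) (hlt : ∀ v ∈ Kᶜ, g v < Kᶜ.card) :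
    ∃ e : V ≃ Fin (Fintype.card V), ∀ v, ((e v).val < T.card ↔ v ∈ T) ∧
      ((e v).val < K.card ↔ v ∈ K) ∧ (v ∉ K → (e v).val = K.card + g v) := by
  obtain ⟨a, ha, hal⟩ := exists_injOn_lt T
  obtain ⟨b, hb, hbl⟩ := exists_injOn_lt (K \ T)
  have h1 := card_sdiff_add_card_eq_card hTK
  have h2 := card_compl K
  have h3 := card_le_univ K
  let f : V → ℕ := fun v => if v ∈ T then a v else if v ∈ K then T.card + b v else K.card + g v
  have hfT : ∀ v ∈ T, f v = a v ∧ f v < T.card := fun v hv => by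
    have := hal v hv
    simp [f, hv, this]
  have hfK : ∀ v ∈ K, v ∉ T → f v = T.card + b v ∧ f v < K.card := fun v hv hvT => by
    have := hbl v (mem_sdiff.2 ⟨hv, hvT⟩)
    simp only [f, hv, hvT, if_true, if_false, true_and]
    omega
  have hfC : ∀ v, v ∉ K → f v = K.card + g v ∧ f v < Fintype.card V := fun v hv => by
    have := hlt v (mem_compl.2 hv)
    have hvT : v ∉ T := fun h => hv (hTK h)
    simp only [f, hv, hvT, if_false, true_and]
    omega
  have hfT' : ∀ v, f v < T.card ↔ v ∈ T := fun v => by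
    refine ⟨fun h => ?_, fun h => (hfT v h).2⟩
    by_contra hvT
    by_cases hvK : v ∈ K
    · have := hfK v hvK hvT
      omega
    · have := hfC v hvK
      omega
  have hfK' : ∀ v, f v < K.card ↔ v ∈ K := fun v => by
    refine ⟨fun h => ?_, fun h => ?_⟩
    · by_contra hvK
      have := hfC v hvK
      omega
    · by_cases hvT : v ∈ T
      · have := hfT v hvT
        omega
      · exact (hfK v h hvT).2
  have hfn : ∀ v, f v < Fintype.card V := fun v => by
    by_cases hvK : v ∈ K
    · have := (hfK' v).2 hvK
      omega
    · exact (hfC v hvK).2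
  have hf : Function.Injective f := fun u w huw => by
    have hT := hfT' u
    rw [huw, hfT'] at hT
    have hK := hfK' u
    rw [huw, hfK'] at hK
    by_cases huT : u ∈ T
    · have hwT := hT.2 huT
      rw [(hfT u huT).1, (hfT w hwT).1] at huw
      exact ha huT hwT huw
    have hwT : w ∉ T := fun h => huT (hT.1 h)
    by_cases huK : u ∈ K
    · have hwK := hK.2 huK
      rw [(hfK u huK huT).1, (hfK w hwK hwT).1] at huw
      exact hb (mem_coe.2 (mem_sdiff.2 ⟨huK, huT⟩)) (mem_coe.2 (mem_sdiff.2 ⟨hwK, hwT⟩))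
        (by omega)
    · have hwK : w ∉ K := fun h => huK (hK.1 h)
      rw [(hfC u huK).1, (hfC w hwK).1] at huw
      exact hg (mem_coe.2 (mem_compl.2 huK)) (mem_coe.2 (mem_compl.2 hwK)) (by omega)
  have hbij : Function.Bijective fun v => (⟨f v, hfn v⟩ : Fin (Fintype.card V)) :=
    (Fintype.bijective_iff_injective_and_card _).2
      ⟨fun u w huw => hf (Fin.val_eq_of_eq huw), by simp⟩
  exact ⟨Equiv.ofBijective _ hbij, fun v => ⟨hfT' v, hfK' v, fun hv => (hfC v hv).1⟩⟩

theorem exists_numbering_blocks {V : Type*} [DecidableEq V] {S : Finset V} {f : V → Finset V}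
    {m : ℕ} (hm : 0 < m) (hmem : ∀ u ∈ S, u ∈ f u) (hsub : ∀ u ∈ S, f u ⊆ S)
    (hcard : ∀ u ∈ S, (f u).card = m) (hf : ∀ u ∈ S, ∀ v ∈ f u, f v = f u) :
    ∃ g : V → ℕ, Set.InjOn g S ∧ (∀ v ∈ S, g v < S.card) ∧
      ∀ u ∈ S, ∀ v ∈ S, g u / m = g v / m ↔ f u = f v := by
  obtain ⟨idx, hidx, hidxl⟩ := exists_injOn_lt (S.image f)
  choose pos hpos hposl using fun B : Finset V => exists_injOn_lt B
  have hS : S.card = (S.image f).card * m := by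
    rw [card_eq_sum_card_image f S]
    refine sum_const_nat fun B hB => ?_
    obtain ⟨u, hu, rfl⟩ := mem_image.1 hB
    rw [← hcard u hu]
    congr 1
    ext v
    rw [mem_filter]
    exact ⟨fun h => h.2 ▸ hmem v h.1, fun h => ⟨hsub u hu h, hf u hu v h⟩⟩
  have hlt : ∀ v ∈ S, pos (f v) v < m := fun v hv => hcard v hv ▸ hposl _ v (hmem v hv)
  have hdiv : ∀ v ∈ S, (m * idx (f v) + pos (f v) v) / m = idx (f v) := fun v hv => by
    rw [Nat.mul_add_div hm, Nat.div_eq_of_lt (hlt v hv), add_zero]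
  have heq : ∀ u ∈ S, ∀ v ∈ S, idx (f u) = idx (f v) ↔ f u = f v := fun u hu v hv =>
    ⟨fun h => hidx (mem_coe.2 (mem_image_of_mem _ hu)) (mem_coe.2 (mem_image_of_mem _ hv)) h,
      fun h => by rw [h]⟩
  refine ⟨fun v => m * idx (f v) + pos (f v) v, fun u hu v hv huv => ?_, fun v hv => ?_,
    fun u hu v hv => ?_⟩
  · have h1 := congrArg (· / m) huv
    simp only [hdiv u hu, hdiv v hv] at h1
    have h2 := (heq u hu v hv).1 h1
    simp only [h2, add_right_inj] at huv
    exact hpos _ (mem_coe.2 (h2 ▸ hmem u hu)) (mem_coe.2 (hmem v hv)) huv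
  · have h1 := hlt v hv
    have h2 := hidxl _ (mem_image_of_mem f hv)
    calc m * idx (f v) + pos (f v) v < m * (idx (f v) + 1) := by rw [mul_add]; omega
      _ ≤ m * (S.image f).card := Nat.mul_le_mul_left _ h2
      _ = S.card := by rw [hS, mul_comm]
  · simp only [hdiv u hu, hdiv v hv]
    exact heq u hu v hv

section

variable {V : Type*} [Fintype V] [DecidableEq V] {G : SimpleGraph V} {K : Finset V} {c k : ℕ}

theorem nonempty_iso_Wgraph (hK : ∀ u ∈ K, ∀ w ∈ K, u ≠ w → G.Adj u w) (hc : c - k + 1 = K.card)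
    {T : Finset V} (hTK : T ⊆ K) (hT : T.card = k) (h : ∀ u, u ∉ K → ∀ z, G.Adj u z ↔ z ∈ T) :
    Nonempty (G ≃g Wgraph (Fintype.card V) k c) := by
  obtain ⟨g, hg, hgl⟩ := exists_injOn_lt Kᶜ
  obtain ⟨e, he⟩ := exists_equiv_fin hTK hg hgl
  rw [hT] at he
  refine ⟨⟨e, fun {u w} => ?_⟩⟩
  simp only [Wgraph, fromRel_adj, hc, he, ne_eq, e.injective.eq_iff]
  by_cases hu : u ∈ K
  · by_cases hw : w ∈ K
    · simp only [hu, hw, true_or, and_true]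
      exact ⟨hK u hu w hw, fun h => h.ne⟩
    · have hwT : w ∉ T := fun h => hw (hTK h)
      rw [G.adj_comm, h w hw]
      simp only [hw, hwT, and_false, false_and, false_or, or_false, or_self, and_iff_right_iff_imp]
      rintro huT rfl
      exact hwT huT
  · have huT : u ∉ T := fun h => hu (hTK h)
    rw [h u hu]
    simp only [hu, huT, and_false, false_and, false_or, or_false, or_self, and_iff_right_iff_imp]
    rintro hwT rfl
    exact huT hwT

theorem nonempty_iso_Zgraph (hK : ∀ u ∈ K, ∀ w ∈ K, u ≠ w → G.Adj u w) (hc : c - k + 1 = K.card)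
    (hk : 2 ≤ k) {x y : V} (hx : x ∈ K) (hy : y ∈ K) (hxy : x ≠ y)
    (h : ∀ u, u ∉ K → ∃ B : Finset V, u ∈ B ∧ B.card + 1 = k ∧ Disjoint B K ∧
      ∀ w ∈ B, ∀ z, G.Adj w z ↔ z ≠ w ∧ (z ∈ B ∨ z = x ∨ z = y)) :
    Nonempty (G ≃g Zgraph (Fintype.card V) k c) := by
  have h' : ∀ u, ∃ B : Finset V, u ∈ Kᶜ → u ∈ B ∧ B.card + 1 = k ∧ Disjoint B K ∧
      ∀ w ∈ B, ∀ z, G.Adj w z ↔ z ≠ w ∧ (z ∈ B ∨ z = x ∨ z = y) := fun u => by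
    by_cases hu : u ∈ K
    · exact ⟨∅, fun h => absurd hu (mem_compl.1 h)⟩
    · obtain ⟨B, hB⟩ := h u hu
      exact ⟨B, fun _ => hB⟩
  choose f hf using h'
  have hsub : ∀ u ∈ Kᶜ, f u ⊆ Kᶜ := fun u hu v hv =>
    mem_compl.2 (Finset.disjoint_left.1 (hf u hu).2.2.1 hv)
  have heq : ∀ u ∈ Kᶜ, ∀ v ∈ f u, f v = f u := fun u hu v hv => by
    have hv' := hsub u hu hv
    have h1 := hf u hu
    have h2 := hf v hv'
    refine (eq_of_subset_of_card_le (fun w hw => ?_) (by omega)).symm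
    have hw' := mem_compl.1 (hsub u hu hw)
    rcases eq_or_ne w v with rfl | hwv
    · exact h2.1
    · rcases ((h2.2.2.2 v h2.1 w).1 ((h1.2.2.2 v hv w).2 ⟨hwv, Or.inl hw⟩)).2 with h | rfl | rfl
      · exact h
      · exact absurd hx hw'
      · exact absurd hy hw'
  obtain ⟨g, hg, hgl, hgf⟩ := exists_numbering_blocks (m := k - 1) (by omega)
    (fun u hu => (hf u hu).1) hsub (fun u hu => by have := (hf u hu).2.1; omega) heq
  have hTK : {x, y} ⊆ K := insert_subset hx (singleton_subset_iff.2 hy)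
  obtain ⟨e, he⟩ := exists_equiv_fin hTK hg hgl
  rw [card_pair hxy] at he
  have he2 : ∀ v, (e v).val ≤ 1 ↔ v ∈ ({x, y} : Finset V) := fun v => by
    rw [← (he v).1]
    omega
  have heK : ∀ v, K.card ≤ (e v).val ↔ v ∉ K := fun v => by
    rw [← (he v).2.1]
    omega
  refine ⟨⟨e, fun {u w} => ?_⟩⟩
  simp only [Zgraph, fromRel_adj, hc, he, he2, heK, ne_eq, e.injective.eq_iff]
  by_cases hu : u ∈ K
  · by_cases hw : w ∈ K
    · simp only [hu, hw, true_or, and_true]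
      exact ⟨hK u hu w hw, fun h => h.ne⟩
    · have hwB := hf w (mem_compl.2 hw)
      have hwT : w ∉ ({x, y} : Finset V) := fun h => hw (hTK h)
      have huB : u ∉ f w := fun h => Finset.disjoint_left.1 hwB.2.2.1 h hu
      have huw : u ≠ w := fun h => hw (h ▸ hu)
      rw [G.adj_comm, hwB.2.2.2 w hwB.1]
      simp [hu, hw, hwT, huB, huw]
  · have huB := hf u (mem_compl.2 hu)
    have huT : u ∉ ({x, y} : Finset V) := fun h => hu (hTK h)
    rw [huB.2.2.2 u huB.1]
    by_cases hw : w ∈ K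
    · have hwB : w ∉ f u := fun h => Finset.disjoint_left.1 huB.2.2.1 h hw
      have huw : u ≠ w := fun h => hu (h ▸ hw)
      simp [hu, hw, huT, hwB, huw, huw.symm]
    · have hwT : w ∉ ({x, y} : Finset V) := fun h => hw (hTK h)
      have hwxy : ¬ (w = x ∨ w = y) := by simpa using hwT
      have h1 := hgf u (mem_compl.2 hu) w (mem_compl.2 hw)
      have h2 : f u = f w ↔ w ∈ f u :=
        ⟨fun h => h ▸ (hf w (mem_compl.2 hw)).1, fun h => (heq u (mem_compl.2 hu) w h).symm⟩
      rw [(he u).2.2 hu, (he w).2.2 hw, Nat.add_sub_cancel_left, Nat.add_sub_cancel_left,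
        eq_comm (a := g w / (k - 1)), h1, h2]
      rw [ne_comm]
      simp only [hu, hw, huT, hwT, hwxy, false_and, not_false_eq_true, true_and, false_or, or_false,
        or_self, ne_eq]

end

theorem SimpleGraph.Walk.IsCycle.exists_frame {V : Type*} [DecidableEq V] {G : SimpleGraph V}
    {v0 : V} {p : G.Walk v0 v0} (hp : p.IsCycle) : ∃ v, Frame G p.support.toFinset p.length v := by
  have h3 := hp.three_le_length
  have hpos : (0 : ℤ) < p.length := by omega
  have hlt : ∀ i : ℤ, (i % p.length).toNat < p.length := fun i => by
    have := Int.emod_lt_of_pos i hpos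
    omega
  have hnn : ∀ i : ℤ, 0 ≤ i % p.length := fun i => Int.emod_nonneg i hpos.ne'
  refine ⟨fun i => p.getVert (i % p.length).toNat, fun i j => ⟨fun h => ?_, fun h => ?_⟩,
    fun i => ?_, fun w => ?_⟩
  · have h1 := hp.getVert_injOn' (by rw [Set.mem_ofPred_eq]; have := hlt i; omega)
      (by rw [Set.mem_ofPred_eq]; have := hlt j; omega) h
    have h2 := hnn i
    have h4 := hnn j
    exact Int.ModEq.dvd (show i % p.length = j % p.length by omega)
  · rw [show i % (p.length : ℤ) = j % p.length from Int.modEq_iff_dvd.2 h]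
  · have h1 := p.adj_getVert_succ (hlt i)
    suffices h : p.getVert ((i + 1) % p.length).toNat = p.getVert ((i % p.length).toNat + 1) by
      rwa [h]
    have h2 := hnn i
    have h4 := hlt i
    rw [← Int.emod_add_emod]
    rcases eq_or_ne (i % (p.length : ℤ) + 1) p.length with h | h
    · rw [h, Int.emod_self, show (i % (p.length : ℤ)).toNat + 1 = p.length by omega]
      simp
    · rw [Int.emod_eq_of_lt (by omega) (by omega)]
      congr 1
      omega
  · rw [List.mem_toFinset, Walk.mem_support_iff_exists_getVert]
    constructor
    · rintro ⟨n, rfl, hn⟩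
      rcases hn.eq_or_lt with rfl | hn
      · exact ⟨0, by simp⟩
      · refine ⟨n, ?_⟩
        rw [Int.emod_eq_of_lt (by omega) (by omega), Int.toNat_natCast]
    · rintro ⟨i, rfl⟩
      exact ⟨_, rfl, (hlt i).le⟩

theorem TwoConnected.exists_adj {V : Type*} [Fintype V] {G : SimpleGraph V} (hG : TwoConnected G)
    {v : V} {J : Finset V} (hJ : J.Nonempty) (hv : v ∉ J) (hw : ∃ w, w ≠ v ∧ w ∉ J) :
    ∃ u ∈ J, ∃ w, w ∉ J ∧ w ≠ v ∧ G.Adj u w := by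
  obtain ⟨u, hu⟩ := hJ
  obtain ⟨w, hwv, hwJ⟩ := hw
  have huv : u ≠ v := fun h => hv (h ▸ hu)
  obtain ⟨q⟩ := (hG.2 v).preconnected ⟨u, by simpa using huv⟩ ⟨w, by simpa using hwv⟩
  obtain ⟨d, -, hd1, hd2⟩ := q.exists_boundary_dart {z | z.1 ∈ J} hu hwJ
  have h1 := d.adj
  have h2 := d.snd.2
  simp only [Subgraph.coe_adj, Subgraph.deleteVerts_adj, Subgraph.top_adj] at h1
  exact ⟨_, hd1, _, hd2, by simpa using h2, h1.2.2.2.2⟩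

theorem card_nbrs_univ {V : Type*} [Fintype V] (G : SimpleGraph V) (u : V) :
    (nbrs G u univ).card = degN G u := by
  rw [degN, ← Set.ncard_coe_finset]
  congr 1
  ext w
  simp [mem_nbrs]

theorem IsLocallyMaximal.cliqueCycleIn {V : Type*} [Fintype V] [DecidableEq V] {G : SimpleGraph V}
    (hG : TwoConnected G) {v0 : V} {p : G.Walk v0 v0} (hC : IsLocallyMaximal G p) {k : ℕ}
    (hδ : ∀ v : V, k ≤ degN G v) {K : Finset V} (hKp : (K : Set V) ⊆ {x | x ∈ p.support})
    (hK : G.IsClique (K : Set V)) (hKc : p.length - k + 1 ≤ K.card) :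
    CliqueCycleIn G p.support.toFinset K p.length k := by
  have h3 := hC.1.three_le_length
  obtain ⟨v, hv⟩ := hC.1.exists_frame
  have hsub : K ⊆ p.support.toFinset := fun u hu => List.mem_toFinset.2 (hKp hu)
  refine ⟨⟨fun x y m s he hs hp => hC.card_add_le (fun u => List.mem_toFinset) he hs hp, ⟨v, hv⟩,
    fun u hu w hw => hK hu hw, hsub, ?_⟩, by omega, fun v J hJ => hG.exists_adj hJ,
    fun u => (card_nbrs_univ G u).symm ▸ hδ u⟩
  have h1 := hv.card_eq (by omega)
  have h2 := card_sdiff_add_card_eq_card hsub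
  omega

theorem CliqueCycleIn.nonempty_iso {V : Type*} [Fintype V] [DecidableEq V] {G : SimpleGraph V}
    {Cs K : Finset V} {c k : ℕ} (H : CliqueCycleIn G Cs K c k) (hK : c - k + 1 ≤ K.card)
    (hc : c < Fintype.card V) :
    Nonempty (G ≃g Wgraph (Fintype.card V) k c) ∨ Nonempty (G ≃g Zgraph (Fintype.card V) k c) := by
  obtain ⟨v, hv⟩ := H.frame
  obtain ⟨b, -, hb⟩ := exists_mem_notMem_of_card_lt_card (s := Cs) (t := univ)
    (by rwa [hv.card_eq H.pos])
  by_cases h : ∃ u, u ∉ Cs ∧ ∃ w, w ∉ Cs ∧ G.Adj u w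
  · obtain ⟨u, hu, w, hw, huw⟩ := h
    obtain ⟨hKk, x, hx, y, hy, hxy, hB⟩ := H.exists_blocks hu hw huw
    obtain ⟨B, hbB, hBk, -⟩ := hB b fun h => hb (H.subset h)
    have := card_pos.2 ⟨b, hbB⟩
    exact Or.inr (nonempty_iso_Zgraph H.clique (by omega) (by omega) hx hy hxy hB)
  · push Not at h
    obtain ⟨hKk, T, hTK, hT, hN⟩ := H.exists_common_nbrs hb h
    exact Or.inl (nonempty_iso_Wgraph H.clique (by omega) hTK hT hN)

end

/-- If `G` is 2-connected on `n` vertices with minimum degree at least `k`, `C` is a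
locally maximal cycle of length `c ≤ n-1`, and the clique number of `G[V(C)]` is at least
`c-k+1`, then `G` is isomorphic to `W_{n,k,c}` or to `Z_{n,k,c}`. -/
theorem stmt17 {V : Type*} [Fintype V] (G : SimpleGraph V) (n k c : ℕ)
    (hn : Fintype.card V = n) (hG : TwoConnected G)
    (hδ : ∀ v : V, k ≤ degN G v)
    (v0 : V) (p : G.Walk v0 v0) (hC : IsLocallyMaximal G p) (hc : p.length = c)
    (hcn : c ≤ n - 1)
    (hclique : ∃ K : Finset V, (K : Set V) ⊆ {x | x ∈ p.support} ∧
      G.IsClique (K : Set V) ∧ c - k + 1 ≤ K.card) :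
    Nonempty (G ≃g Wgraph n k c) ∨ Nonempty (G ≃g Zgraph n k c) := by
  subst hn hc
  classical
  obtain ⟨K, hKp, hK, hKc⟩ := hclique
  have h3 := hG.1
  exact (hC.cliqueCycleIn hG hδ hKp hK hKc).nonempty_iso hKc (by omega)
end

section
/- Let G be a 2-connected graph on n vertices and C a longest cycle in G of length c with 10 ≤ c ≤ n-1. If the number of edges of G with at most one endpoint in V(C) exceeds (⌊c/2⌋ - 1)(n - c), then there exists a vertex u in V(G) \ V(C) such that u has no neighbors outside V(C) and u has exactly ⌊c/2⌋ neighbors on C. -/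
open SimpleGraph

namespace SimpleGraph

variable {V : Type*} {G : SimpleGraph V}

/-- The subgraph of `G` consisting of the edges with both ends in `A`, on the same vertex type. -/
def within (G : SimpleGraph V) (A : Finset V) : SimpleGraph V where
  Adj a b := G.Adj a b ∧ a ∈ A ∧ b ∈ A
  symm := ⟨fun _ _ h => ⟨h.1.symm, h.2.2, h.2.1⟩⟩
  loopless := ⟨fun _ h => G.loopless.irrefl _ h.1⟩

theorem within_le (A : Finset V) : G.within A ≤ G := fun _ _ h => h.1

theorem support_subset_of_within {A : Finset V} {u v : V} (p : (G.within A).Walk u v)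
    (hu : u ∈ A) : ∀ w ∈ p.support, w ∈ A := by
  induction p with
  | nil => simpa using hu
  | cons h p ih =>
    intro w hw
    rw [Walk.support_cons, List.mem_cons] at hw
    rcases hw with rfl | hw
    · exact hu
    · exact ih h.2.2 w hw

theorem exists_isPath_of_reachable_within {A : Finset V} {u v : V} (hu : u ∈ A)
    (h : (G.within A).Reachable u v) :
    ∃ p : G.Walk u v, p.IsPath ∧ ∀ w ∈ p.support, w ∈ A := by
  obtain ⟨p, hp⟩ := h.exists_isPath
  exact ⟨p.mapLe (within_le A), (Walk.isPath_mapLe _).2 hp, by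
    simpa using support_subset_of_within p hu⟩

theorem Walk.IsPath.append_of_disjoint {u v w : V} {p : G.Walk u v} {q : G.Walk v w}
    (hp : p.IsPath) (hq : q.IsPath) (h : ∀ x ∈ p.support, x ∈ q.support → x = v) :
    (p.append q).IsPath := by
  rw [Walk.isPath_def, Walk.support_append, List.nodup_append']
  refine ⟨hp.support_nodup, hq.support_nodup.tail, fun x hx hx' => ?_⟩
  have hxv := h x hx (List.mem_of_mem_tail hx')
  subst hxv
  have := hq.support_nodup
  rw [← Walk.cons_tail_support] at this
  exact (List.nodup_cons.1 this).1 hx'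

open Classical in
/-- Either `u` reaches a vertex adjacent to `F` inside `A`, or some set inside `A` containing `u`
has no edge to the rest of `A ∪ F`. -/
theorem exists_reachable_adj_or_closed (A F : Finset V) {u : V} (hu : u ∈ A) :
    (∃ z, (G.within A).Reachable u z ∧ z ∈ A ∧ ∃ t ∈ F, G.Adj z t) ∨
      ∃ K ⊆ A, u ∈ K ∧ ∀ a ∈ K, ∀ b, G.Adj a b → (b ∈ A → b ∈ K) ∧ b ∉ F := by
  by_cases h : ∃ z, (G.within A).Reachable u z ∧ z ∈ A ∧ ∃ t ∈ F, G.Adj z t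
  · exact Or.inl h
  · refine Or.inr ⟨{z ∈ A | (G.within A).Reachable u z}, Finset.filter_subset _ _, by
      simp [hu], fun a ha b hab => ?_⟩
    rw [Finset.mem_filter] at ha
    refine ⟨fun hb => ?_, fun hb => h ⟨a, ha.2, ha.1, b, hb, hab⟩⟩
    have hadj : (G.within A).Adj a b := ⟨hab, ha.1, hb⟩
    exact Finset.mem_filter.2 ⟨hb, ha.2.trans hadj.reachable⟩

open Classical in
theorem exists_isPath_of_isClique {v : V} (Q : Finset V)
    (hQ : ∀ a ∈ Q, ∀ b ∈ Q, a ≠ b → G.Adj a b) (hv : v ∈ Q) {u : V} (hu : u ∉ Q)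
    (huQ : ∀ a ∈ Q, G.Adj u a) :
    ∃ p : G.Walk u v, p.IsPath ∧ p.length = Q.card ∧ ∀ w ∈ p.support, w ≠ u → w ∈ Q := by
  induction hn : Q.card generalizing Q u with
  | zero => simp_all
  | succ n ih =>
    by_cases hQv : ∃ q ∈ Q, q ≠ v
    · obtain ⟨q, hq, hqv⟩ := hQv
      obtain ⟨p, hp, hl, hs⟩ := ih (Q.erase q)
        (fun a ha b hb => hQ a (Finset.mem_of_mem_erase ha) b (Finset.mem_of_mem_erase hb))
        (Finset.mem_erase.2 ⟨hqv.symm, hv⟩) (Finset.notMem_erase q Q)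
        (fun a ha => hQ q hq a (Finset.mem_of_mem_erase ha) (Finset.ne_of_mem_erase ha).symm)
        (by rw [Finset.card_erase_of_mem hq, hn]; rfl)
      have hsQ : ∀ w ∈ p.support, w ∈ Q := fun w hw => by
        by_cases hwq : w = q
        · exact hwq ▸ hq
        · exact Finset.mem_of_mem_erase (hs w hw hwq)
      refine ⟨Walk.cons (huQ q hq) p, hp.cons fun h => hu (hsQ u h), by simp [hl], ?_⟩
      intro w hw hwu
      rw [Walk.support_cons, List.mem_cons] at hw
      exact hsQ w (hw.resolve_left hwu)
    · have hQ1 : Q = {v} := by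
        ext a
        rw [Finset.mem_singleton]
        exact ⟨fun ha => by_contra fun h => hQv ⟨a, ha, h⟩, fun h => h ▸ hv⟩
      subst hQ1
      refine ⟨Walk.cons (huQ v hv) Walk.nil, ?_, ?_, ?_⟩
      · simpa using hu
      · simpa using hn
      · simp

open Classical in
theorem exists_isPath_of_two_neighbors {S D T : Finset V} {x : V} (hDS : D ⊆ S) (hD : D.Nonempty)
    (hxS : x ∉ S)
    (hW1 : ∀ K ⊆ S, (K ∩ D).Nonempty → ∃ u ∈ K, ∃ w ∈ insert x S, w ∉ K ∧ G.Adj u w)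
    (hW2 : ∀ K ⊆ S, (K ∩ D).Nonempty → ∀ w₀, w₀ ∉ K →
      ∃ u ∈ K, ∃ w ∈ insert x (S ∪ T), w ∉ K ∧ w ≠ w₀ ∧ G.Adj u w) :
    ∃ z, ∃ p : G.Walk x z, p.IsPath ∧ z ∈ S ∧ (∀ v ∈ p.support, v ≠ x → v ∈ S) ∧
      {t ∈ T | G.Adj z t}.Nonempty ∧ 1 ≤ p.length := by
  obtain ⟨v, hv⟩ := hD
  have hvS := hDS hv
  rcases exists_reachable_adj_or_closed (G := G) S T hvS with ⟨z, hz, hzS, t, ht, hzt⟩ |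
    ⟨K, hKS, hvK, hK⟩
  swap
  · obtain ⟨u, hu, w, hw, hwK, hwx, huw⟩ := hW2 K hKS ⟨v, by simp [hvK, hv]⟩ x
      (fun h => hxS (hKS h))
    have := hK u hu w huw
    simp only [Finset.mem_insert, Finset.mem_union] at hw
    tauto
  rcases exists_reachable_adj_or_closed (G := G) S {x} hvS with ⟨y, hy, hyS, t', ht', hyt⟩ |
    ⟨K, hKS, hvK, hK⟩
  swap
  · obtain ⟨u, hu, w, hw, hwK, huw⟩ := hW1 K hKS ⟨v, by simp [hvK, hv]⟩
    have := hK u hu w huw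
    simp only [Finset.mem_insert, Finset.mem_singleton] at hw this
    tauto
  rw [Finset.mem_singleton] at ht'
  subst ht'
  obtain ⟨p, hp, hpS⟩ := exists_isPath_of_reachable_within hyS (hy.symm.trans hz)
  refine ⟨z, Walk.cons hyt.symm p, hp.cons fun h => hxS (hpS _ h), hzS, ?_, ⟨t, by simp [ht, hzt]⟩,
    by simp⟩
  intro w hw hwx
  rw [Walk.support_cons, List.mem_cons] at hw
  exact hpS w (hw.resolve_left hwx)

set_option maxHeartbeats 2000000 in
open Classical in
/-- A core version of Dirac's path lemma. Let `D ⊆ S` be such that every vertex of `D` has at least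
`d` neighbours in `D ∪ T ∪ {x}`, and suppose that after `T` is merged into one vertex every
subset of `S` meeting `D` has at least two outside neighbours. If every path from `x` through `S`
to a vertex `z` with a neighbour in `T` has length at most `d` minus the number of neighbours of `z`
in `T`, then some component of `G[D]` is a clique completely joined to `x`. -/
theorem exists_closed_clique (d : ℕ) : ∀ (S D T : Finset V) (x : V), D ⊆ S → D.Nonempty →
    x ∉ S → x ∉ T → Disjoint S T →
    (∀ v ∈ D, d ≤ {u ∈ insert x (D ∪ T) | G.Adj v u}.card) →
    (∀ K ⊆ S, (K ∩ D).Nonempty → ∃ u ∈ K, ∃ w ∈ insert x S, w ∉ K ∧ G.Adj u w) →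
    (∀ K ⊆ S, (K ∩ D).Nonempty → ∀ w₀, w₀ ∉ K →
      ∃ u ∈ K, ∃ w ∈ insert x (S ∪ T), w ∉ K ∧ w ≠ w₀ ∧ G.Adj u w) →
    (∀ z (p : G.Walk x z), p.IsPath → z ∈ S → (∀ v ∈ p.support, v ≠ x → v ∈ S) →
      {t ∈ T | G.Adj z t}.Nonempty → p.length + {t ∈ T | G.Adj z t}.card ≤ d) →
    ∃ Q ⊆ D, Q.Nonempty ∧ (∀ a ∈ Q, ∀ b ∈ Q, a ≠ b → G.Adj a b) ∧
      (∀ a ∈ Q, ∀ b ∈ D, G.Adj a b → b ∈ Q) ∧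
      ∀ a ∈ Q, G.Adj x a ∧ {t ∈ T | G.Adj a t}.Nonempty := by
  induction d with
  | zero =>
    intro S D T x hDS hD hxS _ _ _ hW1 hW2 hno
    obtain ⟨z, p, hp, hzS, hpS, hT, hl⟩ := exists_isPath_of_two_neighbors hDS hD hxS hW1 hW2
    have := hno z p hp hzS hpS hT
    omega
  | succ d ih =>
  intro S D T x hDS hD hxS hxT hST hdeg hW1 hW2 hno
  have hd : 1 ≤ d := by
    obtain ⟨z, p, hp, hzS, hpS, hT, hl⟩ := exists_isPath_of_two_neighbors hDS hD hxS hW1 hW2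
    have := hno z p hp hzS hpS hT
    have := hT.card_pos
    omega
  let P : Finset V → Prop := fun L => L ⊆ S ∧ (L ∩ D).Nonempty ∧
    ∃ B, (B = T ∨ ∃ w ∈ S, w ∉ L ∧ B = {w}) ∧
      ∀ u ∈ L, ∀ w ∈ insert x (S ∪ T), G.Adj u w → w ∈ L ∨ w = x ∨ w ∈ B
  obtain ⟨L, hL⟩ : ∃ L, Minimal P L := exists_minimal_of_wellFoundedLT P ⟨S, subset_rfl,
    by rwa [Finset.inter_eq_right.2 hDS], T, Or.inl rfl, fun u _ w hw _ => by
      simp only [Finset.mem_insert, Finset.mem_union] at hw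
      tauto⟩
  obtain ⟨⟨hLS, hLD, B, hB, hLN⟩, hmin⟩ := hL
  have hxL : x ∉ L := fun h => hxS (hLS h)
  have hBL : Disjoint L B := by
    rcases hB with rfl | ⟨w, -, hw, rfl⟩
    · exact hST.mono_left hLS
    · simpa using hw
  have hxB : x ∉ B := by
    rcases hB with rfl | ⟨w, hw, -, rfl⟩
    · exact hxT
    · rw [Finset.mem_singleton]
      rintro rfl
      exact hxS hw
  have hBST : B ⊆ S ∪ T := by
    rcases hB with rfl | ⟨w, hw, -, rfl⟩
    · exact Finset.subset_union_right
    · simp [hw]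
  obtain ⟨x₁, hx₁L, hxx₁⟩ : ∃ x' ∈ L, G.Adj x x' := by
    rcases hB with rfl | ⟨w, hw, hwL, rfl⟩
    · obtain ⟨u, hu, w, hw, hwL, huw⟩ := hW1 L hLS hLD
      have := hLN u hu w (by simp only [Finset.mem_insert, Finset.mem_union] at hw ⊢; tauto) huw
      rcases this with h | rfl | h
      · exact absurd h hwL
      · exact ⟨u, hu, huw.symm⟩
      · rw [Finset.mem_insert] at hw
        rcases hw with rfl | hw
        · exact absurd h hxB
        · exact absurd h (Finset.disjoint_left.1 hST hw)
    · obtain ⟨u, hu, w', hw', hwL', hww', huw⟩ := hW2 L hLS hLD w hwL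
      have := hLN u hu w' hw' huw
      rw [Finset.mem_singleton] at this
      have h : w' = x := by tauto
      exact ⟨u, hu, h ▸ huw.symm⟩
  have hDT : ∀ v ∈ L, ∀ u ∈ insert x (D ∪ T), G.Adj v u → u ∈ D ∩ L ∨ u = x ∨ u ∈ B := by
    intro v hv u hu hvu
    have h1 : u ∈ insert x (S ∪ T) := by
      simp only [Finset.mem_insert, Finset.mem_union] at hu ⊢
      have := @hDS u
      tauto
    have h2 := hLN v hv u h1 hvu
    simp only [Finset.mem_insert, Finset.mem_union, Finset.mem_inter] at hu ⊢
    have h3 : u ∈ S → u ∉ T := fun h => Finset.disjoint_left.1 hST h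
    have h4 := @hLS u
    tauto
  have hsub : ∀ x' ∈ L, G.Adj x x' → ((D ∩ L).erase x').Nonempty →
      (∀ z (p : G.Walk x' z), p.IsPath → z ∈ L.erase x' →
        (∀ v ∈ p.support, v ≠ x' → v ∈ L.erase x') →
        {t ∈ B | G.Adj z t}.Nonempty → p.length + {t ∈ B | G.Adj z t}.card ≤ d) →
      ∃ Q ⊆ (D ∩ L).erase x', Q.Nonempty ∧ (∀ a ∈ Q, ∀ b ∈ Q, a ≠ b → G.Adj a b) ∧
        (∀ a ∈ Q, ∀ b ∈ (D ∩ L).erase x', G.Adj a b → b ∈ Q) ∧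
        ∀ a ∈ Q, G.Adj x' a ∧ {t ∈ B | G.Adj a t}.Nonempty := by
    intro x' hx'L hxx' hne hno'
    have hKmin : ∀ K ⊆ L.erase x', (K ∩ (D ∩ L).erase x').Nonempty →
        ∀ B', (B' = T ∨ ∃ w ∈ S, w ∉ K ∧ B' = {w}) →
        ∃ u ∈ K, ∃ w ∈ insert x (S ∪ T), G.Adj u w ∧ w ∉ K ∧ w ≠ x ∧ w ∉ B' := by
      intro K hK hKD B' hB'
      by_contra! hcon
      have hKL : K ⊆ L := hK.trans (Finset.erase_subset _ _)
      have hPK : P K := ⟨hKL.trans hLS, hKD.mono (by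
          intro v hv
          simp only [Finset.mem_inter, Finset.mem_erase] at hv ⊢
          tauto), B', hB', fun u hu w hw huw => by
        have := hcon u hu w hw huw
        tauto⟩
      exact Finset.notMem_erase x' L (hK (hmin hPK hKL hx'L))
    apply ih (L.erase x') ((D ∩ L).erase x') B x'
      (Finset.erase_subset_erase _ Finset.inter_subset_right) hne (Finset.notMem_erase _ _)
      (Finset.disjoint_left.1 hBL hx'L) (hBL.mono_left (Finset.erase_subset _ _)) _ _ _ hno'
    · intro v hv
      have hvD : v ∈ D ∧ v ∈ L := by simpa using Finset.mem_of_mem_erase hv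
      have h1 := hdeg v hvD.1
      have h2 : {u ∈ insert x (D ∪ T) | G.Adj v u} ⊆
          insert x {u ∈ insert x' ((D ∩ L).erase x' ∪ B) | G.Adj v u} := by
        intro u hu
        rw [Finset.mem_filter] at hu
        have := hDT v hvD.2 u hu.1 hu.2
        simp only [Finset.mem_insert, Finset.mem_union, Finset.mem_filter, Finset.mem_erase]
        tauto
      have h3 := (Finset.card_le_card h2).trans (Finset.card_insert_le _ _)
      omega
    · intro K hK hKD
      obtain ⟨u, hu, w, hw, huw, hwK, hwx, hwB⟩ := hKmin K hK hKD B (by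
        rcases hB with h | ⟨w, hw, hwL, h⟩
        · exact Or.inl h
        · exact Or.inr ⟨w, hw, fun h => hwL (Finset.mem_of_mem_erase (hK h)), h⟩)
      have := hLN u (Finset.mem_of_mem_erase (hK hu)) w hw huw
      refine ⟨u, hu, w, ?_, hwK, huw⟩
      simp only [Finset.mem_insert, Finset.mem_erase]
      tauto
    · intro K hK hKD w₀ hw₀
      obtain ⟨u, hu, w, hw, huw, hwK, hwx, hww⟩ : ∃ u ∈ K, ∃ w ∈ insert x (S ∪ T),
          G.Adj u w ∧ w ∉ K ∧ w ≠ x ∧ w ≠ w₀ := by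
        by_cases h : w₀ ∈ S
        · obtain ⟨u, hu, w, hw, huw, hwK, hwx, hww⟩ :=
            hKmin K hK hKD {w₀} (Or.inr ⟨w₀, h, hw₀, rfl⟩)
          exact ⟨u, hu, w, hw, huw, hwK, hwx, by simpa using hww⟩
        · obtain ⟨u, hu, w, hw, huw, hwK, hwx, hww⟩ := hKmin K hK hKD T (Or.inl rfl)
          refine ⟨u, hu, w, hw, huw, hwK, hwx, ?_⟩
          rintro rfl
          simp only [Finset.mem_insert, Finset.mem_union] at hw
          tauto
      have := hLN u (Finset.mem_of_mem_erase (hK hu)) w hw huw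
      refine ⟨u, hu, w, ?_, hwK, hww, huw⟩
      simp only [Finset.mem_insert, Finset.mem_union, Finset.mem_erase]
      tauto
  have hcons : ∀ x' ∈ L, ∀ hxx' : G.Adj x x', ∀ y (r : G.Walk x' y), r.IsPath →
      (∀ v ∈ r.support, v ∈ L) → (Walk.cons hxx' r).IsPath ∧ y ∈ S ∧
        ∀ v ∈ (Walk.cons hxx' r).support, v ≠ x → v ∈ L := by
    intro x' hx' hxx' y r hr hrL
    refine ⟨hr.cons fun h => hxL (hrL _ h), hLS (hrL y r.end_mem_support), ?_⟩
    intro v hv hvx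
    rw [Walk.support_cons, List.mem_cons] at hv
    exact hrL v (hv.resolve_left hvx)
  rcases hB with rfl | ⟨w, hwS, hwL, rfl⟩
  · by_cases hne : ((D ∩ L).erase x₁).Nonempty
    swap
    · have hDL : ∀ v ∈ D ∩ L, v = x₁ := fun v hv =>
        by_contra fun h => hne ⟨v, Finset.mem_erase.2 ⟨h, hv⟩⟩
      have hx₁D : x₁ ∈ D := by
        obtain ⟨v, hv⟩ := hLD
        rw [Finset.inter_comm] at hv
        exact (Finset.mem_inter.1 (hDL v hv ▸ hv)).1
      refine ⟨{x₁}, by simpa using hx₁D, by simp, by simp, ?_, ?_⟩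
      · intro a ha b hb hab
        rw [Finset.mem_singleton] at ha ⊢
        subst ha
        rcases hDT a hx₁L b (by simp [hb]) hab with h | rfl | h
        · exact hDL b h
        · exact absurd (hDS hb) hxS
        · exact absurd h (Finset.disjoint_left.1 hST (hDS hb))
      · intro a ha
        rw [Finset.mem_singleton] at ha
        subst ha
        refine ⟨hxx₁, Finset.nonempty_iff_ne_empty.2 fun h0 => ?_⟩
        have h1 : {u ∈ insert x (D ∪ B) | G.Adj a u} ⊆ {x} := by
          intro u hu
          rw [Finset.mem_filter] at hu
          rw [Finset.mem_singleton]
          rcases hDT a hx₁L u hu.1 hu.2 with h | h | h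
          · exact absurd (hDL u h ▸ hu.2) (G.loopless.irrefl _)
          · exact h
          · exact absurd (Finset.mem_filter.2 ⟨h, hu.2⟩) (h0 ▸ Finset.notMem_empty u)
        have h2 := Finset.card_le_card h1
        have h3 := hdeg a hx₁D
        rw [Finset.card_singleton] at h2
        omega
    · have hT : ∀ x' ∈ L, ∀ hxx' : G.Adj x x', ∀ y (r : G.Walk x' y), r.IsPath →
          (∀ v ∈ r.support, v ≠ x' → v ∈ L.erase x') → {t ∈ B | G.Adj y t}.Nonempty →
          r.length + {t ∈ B | G.Adj y t}.card ≤ d := by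
        intro x' hx' hxx' y r hr hrL hy
        obtain ⟨h1, h2, h3⟩ := hcons x' hx' hxx' y r hr (fun v hv => by
          by_cases h : v = x'
          · exact h ▸ hx'
          · exact Finset.mem_of_mem_erase (hrL v hv h))
        have := hno y _ h1 h2 (fun v hv hvx => hLS (h3 v hv hvx)) hy
        rw [Walk.length_cons] at this
        omega
      obtain ⟨Q, hQD, hQne, hQc, hQcl, hQx⟩ := hsub x₁ hx₁L hxx₁ hne
        (fun z p hp _ hpL hz => hT x₁ hx₁L hxx₁ z p hp hpL hz)
      have hQL : ∀ v ∈ Q, v ≠ x₁ ∧ v ∈ D ∧ v ∈ L := fun v hv => by simpa using hQD hv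
      have hx₁Q : x₁ ∉ Q := fun h => (hQL x₁ h).1 rfl
      have hfull : ∀ v ∈ Q, ∀ y, (∀ u, (u = x ∧ G.Adj v x) ∨ (u = x₁ ∧ x₁ ∈ D) → u = y) →
          False := by
        intro v hv y hy
        obtain ⟨p, hp, hpl, hps⟩ := exists_isPath_of_isClique Q hQc hv hx₁Q
          (fun a ha => (hQx a ha).1)
        have h1 := hT x₁ hx₁L hxx₁ v p hp (fun w hw hwx =>
          Finset.mem_erase.2 ⟨hwx, (hQL w (hps w hw hwx)).2.2⟩) (hQx v hv).2
        have h2 : {u ∈ insert x (D ∪ B) | G.Adj v u} ⊆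
            insert y (Q.erase v) ∪ {t ∈ B | G.Adj v t} := by
          intro u hu
          rw [Finset.mem_filter] at hu
          have h3 := hDT v (hQL v hv).2.2 u hu.1 hu.2
          have h4 := hy u
          have h5 := hQcl v hv u
          have h6 : u ≠ v := hu.2.ne'
          simp only [Finset.mem_union, Finset.mem_insert, Finset.mem_erase, Finset.mem_filter,
            Finset.mem_inter] at h3 h5 ⊢
          have h7 : u = x → G.Adj v x := fun h => h ▸ hu.2
          have h8 : u = x₁ → u ∈ D → x₁ ∈ D := fun h h' => h ▸ h'
          tauto
        have h3 := (Finset.card_le_card h2).trans (Finset.card_union_le _ _)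
        have h4 := Finset.card_insert_le y (Q.erase v)
        have h5 := hdeg v (hQL v hv).2.1
        rw [Finset.card_erase_of_mem hv] at h4
        have := hQne.card_pos
        omega
      have hxQ : ∀ v ∈ Q, G.Adj x v := fun v hv => by
        by_contra h
        exact hfull v hv x₁ fun u hu => by
          rcases hu with ⟨_, h'⟩ | ⟨h', _⟩
          · exact absurd h'.symm h
          · exact h'
      have hx₁D : x₁ ∈ D := by
        by_contra h
        obtain ⟨v, hv⟩ := hQne
        exact hfull v hv x fun u hu => by tauto
      obtain ⟨x₂, hx₂⟩ := hQne
      have hx₂L := (hQL x₂ hx₂).2.2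
      have hx₁₂ := (hQx x₂ hx₂).1
      obtain ⟨Q₂, hQ₂D, ⟨q, hq⟩, -, hQ₂cl, hQ₂x⟩ := hsub x₂ hx₂L (hxQ x₂ hx₂)
        ⟨x₁, by simp [hx₁D, hx₁L, hx₁₂.ne]⟩
        (fun z p hp _ hpL hz => hT x₂ hx₂L (hxQ x₂ hx₂) z p hp hpL hz)
      have hQ₂Q : ∀ v ∈ Q₂, v = x₁ ∨ v ∈ Q := fun v hv => by
        by_cases h : v = x₁
        · exact Or.inl h
        · have hvL := Finset.mem_of_mem_erase (hQ₂D hv)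
          exact Or.inr (hQcl x₂ hx₂ v (Finset.mem_erase.2 ⟨h, hvL⟩) (hQ₂x v hv).1)
      have hx₁Q₂ : x₁ ∈ Q₂ := by
        rcases hQ₂Q q hq with rfl | h
        · exact hq
        · exact hQ₂cl q hq x₁ (by simp [hx₁D, hx₁L, hx₁₂.ne]) (hQx q h).1.symm
      have hDL : ∀ a ∈ L, ∀ b ∈ D, G.Adj a b → b ∈ D ∩ L := by
        intro a ha b hb hab
        rcases hDT a ha b (by simp [hb]) hab with h | rfl | h
        · exact h
        · exact absurd (hDS hb) hxS
        · exact absurd h (Finset.disjoint_left.1 hST (hDS hb))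
      refine ⟨insert x₁ Q, ?_, ⟨x₁, by simp⟩, ?_, ?_, ?_⟩
      · intro v hv
        rcases Finset.mem_insert.1 hv with rfl | hv
        · exact hx₁D
        · exact (hQL v hv).2.1
      · intro a ha b hb hab
        rcases Finset.mem_insert.1 ha with rfl | ha' <;>
          rcases Finset.mem_insert.1 hb with rfl | hb'
        · exact absurd rfl hab
        · exact (hQx b hb').1
        · exact (hQx a ha').1.symm
        · exact hQc a ha' b hb' hab
      · intro a ha b hb hab
        rw [Finset.mem_insert]
        rcases Finset.mem_insert.1 ha with rfl | ha
        · by_cases hb₂ : b = x₂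
          · exact Or.inr (hb₂ ▸ hx₂)
          · exact hQ₂Q b (hQ₂cl a hx₁Q₂ b (Finset.mem_erase.2 ⟨hb₂, hDL a hx₁L b hb hab⟩) hab)
        · by_cases hb₁ : b = x₁
          · exact Or.inl hb₁
          · exact Or.inr (hQcl a ha b
              (Finset.mem_erase.2 ⟨hb₁, hDL a (hQL a ha).2.2 b hb hab⟩) hab)
      · intro a ha
        rcases Finset.mem_insert.1 ha with rfl | ha
        · exact ⟨hxx₁, (hQ₂x a hx₁Q₂).2⟩
        · exact ⟨hxQ a ha, (hQx a ha).2⟩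
  · exfalso
    have hout : ∃ z, ∃ s : G.Walk w z, s.IsPath ∧ (∀ v ∈ s.support, v ∈ S \ L) ∧
        {t ∈ T | G.Adj z t}.Nonempty := by
      have hwSL : w ∈ S \ L := by simp [hwS, hwL]
      rcases exists_reachable_adj_or_closed (G := G) (S \ L) T hwSL with
        ⟨z, hz, -, t, ht, hzt⟩ | ⟨K, hK, hwK, hKcl⟩
      · obtain ⟨s, hs, hsS⟩ := exists_isPath_of_reachable_within hwSL hz
        exact ⟨z, s, hs, hsS, t, by simp [ht, hzt]⟩
      · obtain ⟨u, hu, w', hw', hw'K, hw'x, huw⟩ := hW2 (K ∪ L)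
          (Finset.union_subset (hK.trans Finset.sdiff_subset) hLS)
          (hLD.mono (Finset.inter_subset_inter_right Finset.subset_union_right)) x
          (by
            rw [Finset.mem_union]
            rintro (h | h)
            · exact hxS (Finset.mem_sdiff.1 (hK h)).1
            · exact hxL h)
        rw [Finset.mem_union] at hu
        rcases hu with hu | hu
        · have := hKcl u hu w' huw
          simp only [Finset.mem_insert, Finset.mem_union, Finset.mem_sdiff] at hw' hw'K this
          tauto
        · have := hLN u hu w' hw' huw
          simp only [Finset.mem_insert, Finset.mem_union, Finset.mem_singleton] at hw' hw'K this
          have h3 : w' = w → w' ∈ K := fun h => h ▸ hwK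
          tauto
    obtain ⟨z, s, hs, hsS, hz⟩ := hout
    have hkey : ∀ y (r : G.Walk x₁ y), r.IsPath → (∀ v ∈ r.support, v ∈ L) → G.Adj y w →
        r.length + 3 ≤ d + 1 := by
      intro y r hr hrL hyw
      obtain ⟨h1, -, h2⟩ := hcons x₁ hx₁L hxx₁ y r hr hrL
      have hyL := hrL y r.end_mem_support
      have hsL : ∀ v ∈ s.support, v ∉ L := fun v hv => (Finset.mem_sdiff.1 (hsS v hv)).2
      have hsS' : ∀ v ∈ s.support, v ∈ S := fun v hv => (Finset.mem_sdiff.1 (hsS v hv)).1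
      have h3 : (Walk.cons hyw s).IsPath := hs.cons fun h => hsL y h hyL
      have h4 : ((Walk.cons hxx₁ r).append (Walk.cons hyw s)).IsPath := by
        refine h1.append_of_disjoint h3 fun v hv hv' => ?_
        rw [Walk.support_cons, List.mem_cons] at hv'
        refine hv'.resolve_right fun h => ?_
        by_cases hvx : v = x
        · exact hxS (hvx ▸ hsS' v h)
        · exact hsL v h (h2 v hv hvx)
      have h5 := hno z _ h4 (hsS' z s.end_mem_support) (fun v hv hvx => by
        rw [Walk.mem_support_append_iff, Walk.support_cons (h := hyw), List.mem_cons] at hv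
        rcases hv with hv | rfl | hv
        · exact hLS (h2 v hv hvx)
        · exact hLS hyL
        · exact hsS' v hv) hz
      have := hz.card_pos
      rw [Walk.length_append, Walk.length_cons, Walk.length_cons] at h5
      omega
    by_cases hne : ((D ∩ L).erase x₁).Nonempty
    · obtain ⟨Q, hQD, ⟨v, hv⟩, hQc, hQcl, hQx⟩ := hsub x₁ hx₁L hxx₁ hne (by
        intro y p hp hy hpL hyw
        have h1 := hkey y p hp (fun v hv => by
          by_cases h : v = x₁
          · exact h ▸ hx₁L
          · exact Finset.mem_of_mem_erase (hpL v hv h)) (by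
          obtain ⟨t, ht⟩ := hyw
          rw [Finset.mem_filter, Finset.mem_singleton] at ht
          exact ht.1 ▸ ht.2)
        have h2 : {t ∈ ({w} : Finset V) | G.Adj y t}.card ≤ 1 :=
          (Finset.card_filter_le _ _).trans (by simp)
        omega)
      have hQL : ∀ v ∈ Q, v ≠ x₁ ∧ v ∈ D ∧ v ∈ L := fun v hv => by simpa using hQD hv
      obtain ⟨p, hp, hpl, hps⟩ := exists_isPath_of_isClique Q hQc hv (fun h => (hQL x₁ h).1 rfl)
          (fun a ha => (hQx a ha).1)
      have h1 := hkey v p hp (fun u hu => by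
        by_cases h : u = x₁
        · exact h ▸ hx₁L
        · exact (hQL u (hps u hu h)).2.2) (by
        obtain ⟨t, ht⟩ := (hQx v hv).2
        rw [Finset.mem_filter, Finset.mem_singleton] at ht
        exact ht.1 ▸ ht.2)
      have h2 : {u ∈ insert x (D ∪ T) | G.Adj v u} ⊆ Q.erase v ∪ {x₁, x, w} := by
        intro u hu
        rw [Finset.mem_filter] at hu
        have h3 := hDT v (hQL v hv).2.2 u hu.1 hu.2
        have h5 := hQcl v hv u
        have h6 : u ≠ v := hu.2.ne'
        simp only [Finset.mem_union, Finset.mem_insert, Finset.mem_erase, Finset.mem_singleton,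
          Finset.mem_inter] at h3 h5 ⊢
        tauto
      have h3 := (Finset.card_le_card h2).trans (Finset.card_union_le _ _)
      have h4 : ({x₁, x, w} : Finset V).card ≤ 3 := Finset.card_le_three
      have h5 := hdeg v (hQL v hv).2.1
      rw [Finset.card_erase_of_mem hv] at h3
      have := Finset.card_pos.2 ⟨v, hv⟩
      omega
    · have hDL : ∀ v ∈ D ∩ L, v = x₁ := fun v hv =>
        by_contra fun h => hne ⟨v, Finset.mem_erase.2 ⟨h, hv⟩⟩
      have hx₁D : x₁ ∈ D := by
        obtain ⟨v, hv⟩ := hLD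
        rw [Finset.inter_comm] at hv
        exact (Finset.mem_inter.1 (hDL v hv ▸ hv)).1
      have h1 : {u ∈ insert x (D ∪ T) | G.Adj x₁ u} ⊆ {x, w} := by
        intro u hu
        rw [Finset.mem_filter] at hu
        rw [Finset.mem_insert]
        rcases hDT x₁ hx₁L u hu.1 hu.2 with h | h | h
        · exact absurd (hDL u h ▸ hu.2) (G.loopless.irrefl _)
        · exact Or.inl h
        · exact Or.inr h
      have h2 := (Finset.card_le_card h1).trans Finset.card_le_two
      have h3 := hdeg x₁ hx₁D
      rcases exists_reachable_adj_or_closed (G := G) L {w} hx₁L with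
        ⟨y, hy, -, t, ht, hyt⟩ | ⟨K, hK, hxK, hKcl⟩
      · obtain ⟨r, hr, hrL⟩ := exists_isPath_of_reachable_within hx₁L hy
        rw [Finset.mem_singleton] at ht
        have := hkey y r hr hrL (ht ▸ hyt)
        omega
      · obtain ⟨u, hu, w', hw', hw'K, hw'x, huw⟩ := hW2 K (hK.trans hLS)
          ⟨x₁, by simp [hxK, hx₁D]⟩ x (fun h => hxL (hK h))
        have h4 := hLN u (hK hu) w' hw' huw
        have h5 := hKcl u hu w' huw
        tauto

/-- A periodic parametrisation `f` of a cycle of length `c` of `G` with vertex set `C`. -/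
structure CyclicParam (G : SimpleGraph V) (C : Finset V) (c : ℕ) (f : ℕ → V) : Prop where
  adj : ∀ i, G.Adj (f i) (f (i + 1))
  ne : ∀ i j, i < j → j < i + c → f i ≠ f j
  periodic : ∀ i, f (i + c) = f i
  mem : ∀ i, f i ∈ C
  surj : ∀ v ∈ C, ∀ i, ∃ j < c, f (i + j) = v

theorem CyclicParam.shift {C : Finset V} {c : ℕ} {f : ℕ → V} (hf : CyclicParam G C c f) (k : ℕ) :
    CyclicParam G C c fun i => f (k + i) where
  adj i := hf.adj (k + i)
  ne i j hij hj := hf.ne _ _ (by omega) (by omega)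
  periodic i := by simpa [add_assoc] using hf.periodic (k + i)
  mem i := hf.mem _
  surj v hv i := by simpa only [add_assoc] using hf.surj v hv (k + i)

theorem CyclicParam.exists_shift {C : Finset V} {c : ℕ} {f : ℕ → V} (hf : CyclicParam G C c f)
    {a : V} (ha : a ∈ C) : ∃ g : ℕ → V, CyclicParam G C c g ∧ g 0 = a := by
  obtain ⟨j, -, hj⟩ := hf.surj a ha 0
  exact ⟨_, hf.shift j, by simpa using hj⟩

theorem CyclicParam.exists_arc {C : Finset V} {c : ℕ} {f : ℕ → V} (hf : CyclicParam G C c f)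
    (i s : ℕ) (hs : s < c) : ∃ w : G.Walk (f i) (f (i + s)), w.IsPath ∧ w.length = s ∧
      ∀ v ∈ w.support, ∃ t ≤ s, v = f (i + t) := by
  induction s with
  | zero => exact ⟨Walk.nil, by simp, rfl, by simp⟩
  | succ s ih =>
    obtain ⟨w, hw, hl, hsup⟩ := ih (by omega)
    refine ⟨w.concat (hf.adj (i + s)), hw.concat (fun h => ?_) _, by simp [hl], fun v hv => ?_⟩
    · obtain ⟨t, ht, h⟩ := hsup _ h
      exact hf.ne (i + t) (i + s + 1) (by omega) (by omega) h.symm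
    · rw [Walk.support_concat, List.mem_append, List.mem_singleton] at hv
      rcases hv with hv | rfl
      · obtain ⟨t, ht, h⟩ := hsup _ hv
        exact ⟨t, by omega, h⟩
      · exact ⟨s + 1, le_rfl, rfl⟩

theorem Walk.IsCycle.cyclicParam {C : Finset V} {v₀ : V} {p : G.Walk v₀ v₀} (hp : p.IsCycle)
    (hC : ∀ v, v ∈ C ↔ v ∈ p.support) :
    CyclicParam G C p.length fun i => p.getVert (i % p.length) := by
  have hpos : 0 < p.length := by have := hp.three_le_length; omega
  refine ⟨fun i => ?_, fun i j hij hj h => ?_, fun i => by simp, fun i => ?_, fun v hv i => ?_⟩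
  · have hlt := Nat.mod_lt i hpos
    have hadj := p.adj_getVert_succ hlt
    by_cases h : i % p.length + 1 = p.length
    · have : (i + 1) % p.length = 0 := by
        rw [← Nat.mod_add_mod, h, Nat.mod_self]
      rw [h] at hadj
      simpa [this] using hadj
    · have : (i + 1) % p.length = i % p.length + 1 := by
        rw [← Nat.mod_add_mod, Nat.mod_eq_of_lt (by omega)]
      simpa only [this] using hadj
  · have h1 := Nat.mod_lt i hpos
    have h2 := Nat.mod_lt j hpos
    have h3 := hp.getVert_injOn' (show i % p.length ≤ p.length - 1 by omega)
      (show j % p.length ≤ p.length - 1 by omega) h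
    have h4 := (Nat.modEq_iff_dvd' hij.le).1 h3
    have := Nat.le_of_dvd (by omega) h4
    omega
  · exact (hC _).2 (p.getVert_mem_support _)
  · obtain ⟨k, hk, hkl⟩ : ∃ k, p.getVert k = v ∧ k < p.length := by
      obtain ⟨k, hk, hkl⟩ := Walk.mem_support_iff_exists_getVert.1 ((hC v).1 hv)
      rcases hkl.lt_or_eq with h | h
      · exact ⟨k, hk, h⟩
      · refine ⟨0, ?_, hpos⟩
        rw [h, Walk.getVert_length] at hk
        simpa using hk
    refine ⟨(k + (p.length - i % p.length)) % p.length, Nat.mod_lt _ hpos, ?_⟩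
    have h1 := Nat.mod_lt i hpos
    have : (i + (k + (p.length - i % p.length)) % p.length) % p.length = k := by
      rw [Nat.add_mod_mod, ← Nat.mod_add_mod,
        show i % p.length + (k + (p.length - i % p.length)) = k + p.length by omega,
        Nat.add_mod_right, Nat.mod_eq_of_lt hkl]
    simp only [this, hk]

/-- A path closed up by an edge is a cycle. -/
theorem Walk.IsPath.isCycle_cons {u a : V} {r : G.Walk u a} (hr : r.IsPath) (h : G.Adj a u)
    (hl : 2 ≤ r.length) : (Walk.cons h r).IsCycle := by
  refine (Walk.cons_isCycle_iff r h).2 ⟨hr, fun he => ?_⟩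
  have := hr.length_eq_one_of_mem_edges (Sym2.eq_swap ▸ he)
  omega

section LongestCycle

variable {C : Finset V} {c : ℕ} {f : ℕ → V}

theorem CyclicParam.ear_bounds (hf : CyclicParam G C c f)
    (hlong : ∀ u a (r : G.Walk u a), r.IsPath → G.Adj a u → 2 ≤ r.length → r.length + 1 ≤ c)
    {z : V} (hz : z ∉ C) (q : G.Walk (f 0) z) (hq : q.IsPath)
    (hqC : ∀ v ∈ q.support, v ≠ f 0 → v ∉ C) {j : ℕ} (hj0 : 0 < j) (hjc : j < c)
    (hzj : G.Adj z (f j)) : q.length + 1 ≤ j ∧ j + q.length + 1 ≤ c := by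
  have hqpos : 1 ≤ q.length := by
    rw [Nat.one_le_iff_ne_zero]
    intro h
    exact hz (Walk.eq_of_length_eq_zero h ▸ hf.mem 0)
  constructor
  · obtain ⟨w, hw, hwl, hws⟩ := hf.exists_arc j (c - j) (by omega)
    have hend : f (j + (c - j)) = f 0 := by
      rw [show j + (c - j) = 0 + c by omega, hf.periodic]
    have hpath : ((w.copy rfl hend).append q).IsPath := by
      refine Walk.IsPath.append_of_disjoint (by simpa using hw) hq fun v hv hv' => ?_
      rw [Walk.support_copy] at hv
      obtain ⟨t, -, rfl⟩ := hws v hv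
      exact by_contra fun h => hqC _ hv' h (hf.mem _)
    have := hlong _ _ _ hpath hzj (by simp [hwl]; omega)
    simp only [Walk.length_append, Walk.length_copy, hwl] at this
    omega
  · obtain ⟨w, hw, hwl, hws⟩ := hf.exists_arc 0 j hjc
    have hpath : (q.reverse.append w).IsPath := by
      refine hq.reverse.append_of_disjoint hw fun v hv' hv => ?_
      obtain ⟨t, -, rfl⟩ := hws v hv
      rw [Walk.support_reverse, List.mem_reverse] at hv'
      exact by_contra fun h => hqC _ hv' h (hf.mem _)
    have := hlong _ _ _ hpath (by simpa using hzj.symm) (by simp [hwl]; omega)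
    simp only [Walk.length_append, Walk.length_reverse, hwl] at this
    omega

theorem CyclicParam.not_adj_succ (hf : CyclicParam G C c f)
    (hlong : ∀ u a (r : G.Walk u a), r.IsPath → G.Adj a u → 2 ≤ r.length → r.length + 1 ≤ c)
    (hc : 2 ≤ c) {z : V} (hz : z ∉ C) {j : ℕ} (hj : G.Adj z (f j)) : ¬ G.Adj z (f (j + 1)) := by
  intro hj'
  obtain ⟨w, hw, hwl, hws⟩ := hf.exists_arc (j + 1) (c - 1) (by omega)
  have hend : f (j + 1 + (c - 1)) = f j := by
    rw [show j + 1 + (c - 1) = j + c by omega, hf.periodic]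
  have hpath : (Walk.cons hj' w).IsPath := hw.cons fun h => by
    obtain ⟨t, -, rfl⟩ := hws z h
    exact hz (hf.mem _)
  have := hlong _ _ _ hpath (hend ▸ hj.symm) (by simp [hwl]; omega)
  simp only [Walk.length_cons, hwl] at this
  omega

theorem _root_.Finset.mul_card_sub_one_le_of_spaced (J : Finset ℕ) {g lo hi : ℕ} (hg : 0 < g)
    (hlo : ∀ j ∈ J, lo ≤ j) (hhi : ∀ j ∈ J, j ≤ hi)
    (hJ : ∀ i ∈ J, ∀ j ∈ J, i < j → i + g ≤ j) : g * (J.card - 1) ≤ hi - lo := by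
  have hinj : Set.InjOn (fun j => (j - lo) / g) (J : Set ℕ) := by
    have key : ∀ i ∈ J, ∀ j ∈ J, i < j → (i - lo) / g < (j - lo) / g := by
      intro i hi' j hj hij
      have h1 := hJ i hi' j hj hij
      have h2 := hlo i hi'
      calc (i - lo) / g < (i - lo) / g + 1 := Nat.lt_succ_self _
        _ = (i - lo + g) / g := (Nat.add_div_right _ hg).symm
        _ ≤ (j - lo) / g := Nat.div_le_div_right (by omega)
    intro i hi' j hj hij
    rcases lt_trichotomy i j with h | h | h
    · exact absurd hij (key i hi' j hj h).ne
    · exact h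
    · exact absurd hij (key j hj i hi' h).ne'
  have hcard := Finset.card_le_card_of_injOn (t := Finset.range ((hi - lo) / g + 1)) _ (by
    intro j hj
    have h := hhi j hj
    have : (j - lo) / g ≤ (hi - lo) / g := Nat.div_le_div_right (by omega)
    simpa using Nat.lt_succ_of_le this) hinj
  rw [Finset.card_range] at hcard
  calc g * (J.card - 1) ≤ g * ((hi - lo) / g) :=
      Nat.mul_le_mul_left g (Nat.sub_le_of_le_add hcard)
    _ ≤ hi - lo := Nat.mul_div_le _ _

open Classical in
/-- Vertices of the cycle whose indices lie in a window and are pairwise spaced by `g`. -/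
theorem CyclicParam.mul_card_sub_one_le (hf : CyclicParam G C c f) {g lo hi : ℕ} (hg : 0 < g)
    {N : Finset V} (hN : N ⊆ C) (hwin : ∀ j < c, f j ∈ N → lo ≤ j ∧ j ≤ hi)
    (hgap : ∀ i j, i < j → j < c → f i ∈ N → f j ∈ N → i + g ≤ j) :
    g * (N.card - 1) ≤ hi - lo := by
  have hsub : N ⊆ ({j ∈ Finset.range c | f j ∈ N}).image f := by
    intro v hv
    obtain ⟨j, hj, hjv⟩ := hf.surj v (hN hv) 0
    rw [zero_add] at hjv
    exact Finset.mem_image.2 ⟨j, by simp [hj, hjv, hv], hjv⟩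
  have hcard := (Finset.card_le_card hsub).trans Finset.card_image_le
  have := Finset.mul_card_sub_one_le_of_spaced {j ∈ Finset.range c | f j ∈ N} (lo := lo) (hi := hi)
    hg (fun j hj => (hwin j (by simp_all) (by simp_all)).1)
    (fun j hj => (hwin j (by simp_all) (by simp_all)).2)
    (fun i hi j hj hij => hgap i j hij (by simp_all) (by simp_all) (by simp_all))
  exact (Nat.mul_le_mul_left g (by omega)).trans this

open Classical in
theorem CyclicParam.length_add_card_le (hf : CyclicParam G C c f)
    (hlong : ∀ u a (r : G.Walk u a), r.IsPath → G.Adj a u → 2 ≤ r.length → r.length + 1 ≤ c)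
    (hc : 2 ≤ c) {a z : V} (ha : a ∈ C) (hz : z ∉ C) (q : G.Walk a z) (hq : q.IsPath)
    (hqC : ∀ v ∈ q.support, v ≠ a → v ∉ C) (hne : {t ∈ C.erase a | G.Adj z t}.Nonempty) :
    q.length + {t ∈ C.erase a | G.Adj z t}.card ≤ c / 2 := by
  obtain ⟨g, hg, rfl⟩ := hf.exists_shift ha
  have hwin : ∀ j < c, g j ∈ ({t ∈ C.erase (g 0) | G.Adj z t} : Finset V) →
      q.length + 1 ≤ j ∧ j ≤ c - (q.length + 1) := by
    intro j hj hjN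
    rw [Finset.mem_filter, Finset.mem_erase] at hjN
    have hj0 : 0 < j := Nat.pos_of_ne_zero fun h => hjN.1.1 (by rw [h])
    have := hg.ear_bounds hlong hz q hq hqC hj0 hj hjN.2
    omega
  have h1 := hg.mul_card_sub_one_le two_pos
    ((Finset.filter_subset _ _).trans (Finset.erase_subset _ _)) hwin
    (fun i j hij _ hi hj => by
      by_contra h
      have hji : j = i + 1 := by omega
      subst hji
      exact hg.not_adj_succ hlong hc hz (Finset.mem_filter.1 hi).2 (Finset.mem_filter.1 hj).2)
  have h2 := hne.card_pos
  obtain ⟨t, ht⟩ := hne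
  obtain ⟨j, hj, hjt⟩ := hg.surj t (Finset.mem_of_mem_erase (Finset.mem_filter.1 ht).1) 0
  rw [zero_add] at hjt
  have h3 := hwin j hj (hjt ▸ ht)
  omega

open Classical in
theorem _root_.TwoConnected.exists_adj_ne [Fintype V] (hG : TwoConnected G) {K : Finset V}
    (hK : K.Nonempty) {t w : V} (ht : t ∉ K) (hw : w ∉ K) (htw : t ≠ w) :
    ∃ u ∈ K, ∃ v, v ∉ K ∧ v ≠ w ∧ G.Adj u v := by
  obtain ⟨u, hu⟩ := hK
  have huw : u ≠ w := fun h => hw (h ▸ hu)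
  obtain ⟨p⟩ := (hG.2 w).preconnected ⟨u, by simpa using huw⟩ ⟨t, by simpa using htw⟩
  obtain ⟨e, -, he, he'⟩ := p.exists_boundary_dart {v | v.1 ∈ K} hu ht
  have hadj := e.adj
  rw [Subgraph.coe_adj, Subgraph.deleteVerts_adj] at hadj
  exact ⟨_, he, _, he', by simpa using hadj.2.2.2.1, hadj.2.2.2.2⟩

open Classical in
theorem exists_isPath_of_adj_outside [Fintype V]
    (hW : ∀ K : Finset V, K.Nonempty → Disjoint K C → ∀ w, w ∉ K →
      ∃ u ∈ K, ∃ v, v ∉ K ∧ v ≠ w ∧ G.Adj u v)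
    {v z : V} (hv : v ∉ C) (hz : z ∉ C) (hvz : G.Adj v z) :
    ∃ b ∈ C, ∃ q : G.Walk b v, q.IsPath ∧ 2 ≤ q.length ∧ ∀ w ∈ q.support, w ≠ b → w ∉ C := by
  have hzA : z ∈ Cᶜ.erase v := by simp [hz, hvz.ne']
  rcases exists_reachable_adj_or_closed (G := G) (Cᶜ.erase v) C hzA with
    ⟨y, hy, -, b, hb, hyb⟩ | ⟨K, hK, hzK, hKcl⟩
  · obtain ⟨r, hr, hrA⟩ := exists_isPath_of_reachable_within hzA hy
    have hrA' : ∀ w ∈ r.support, w ≠ v ∧ w ∉ C := fun w hw => by simpa using hrA w hw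
    have h1 : (Walk.cons hvz r).IsPath := hr.cons fun h => (hrA' v h).1 rfl
    have h2 : ∀ w ∈ (Walk.cons hvz r).support, w ∉ C := by
      intro w hw
      rw [Walk.support_cons, List.mem_cons] at hw
      rcases hw with rfl | hw
      · exact hv
      · exact (hrA' w hw).2
    refine ⟨b, hb, Walk.cons hyb.symm (Walk.cons hvz r).reverse, h1.reverse.cons fun h => ?_,
      by simp, fun w hw hwb => ?_⟩
    · rw [Walk.support_reverse, List.mem_reverse] at h
      exact h2 b h hb
    · rw [Walk.support_cons, List.mem_cons, Walk.support_reverse, List.mem_reverse] at hw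
      exact h2 w (hw.resolve_left hwb)
  · have hKv : v ∉ K := fun h => Finset.notMem_erase v _ (hK h)
    have hKC : Disjoint K C := Finset.disjoint_left.2 fun w hw => by
      simpa using Finset.mem_of_mem_erase (hK hw)
    obtain ⟨u, hu, w, hwK, hwv, huw⟩ := hW K ⟨z, hzK⟩ hKC v hKv
    have := hKcl u hu w huw
    exact absurd (this.1 (by simp [hwv, this.2])) hwK

open Classical in
/-- Two adjacent vertices off a longest cycle with a common neighbour `a` on it cannot both have
`c / 2 - 2` further neighbours on it. -/
theorem CyclicParam.false_of_adj_pair (hf : CyclicParam G C c f)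
    (hlong : ∀ u a (r : G.Walk u a), r.IsPath → G.Adj a u → 2 ≤ r.length → r.length + 1 ≤ c)
    (hc : 10 ≤ c) {a v₁ v₂ : V} (ha : a ∈ C) (hv₁ : v₁ ∉ C) (hv₂ : v₂ ∉ C) (hv : G.Adj v₁ v₂)
    (ha₁ : G.Adj a v₁) (ha₂ : G.Adj a v₂)
    (h₁ : {t ∈ C.erase a | G.Adj v₁ t}.card = c / 2 - 2)
    (h₂ : {t ∈ C.erase a | G.Adj v₂ t}.card = c / 2 - 2) : False := by
  have hpath : ∀ {t x y : V}, t ∈ C → x ∉ C → y ∉ C → ∀ (htx : G.Adj t x) (hxy : G.Adj x y),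
      (Walk.cons htx (Walk.cons hxy Walk.nil)).IsPath ∧
        ∀ w ∈ (Walk.cons htx (Walk.cons hxy Walk.nil)).support, w ≠ t → w ∉ C := by
    intro t x y ht hx hy htx hxy
    have h1 : t ≠ x := fun h => hx (h ▸ ht)
    have h2 : t ≠ y := fun h => hy (h ▸ ht)
    refine ⟨by simp [hxy.ne, h1, h2], fun w hw hwt => ?_⟩
    simp only [Walk.support_cons, Walk.support_nil, List.mem_cons, List.not_mem_nil,
      or_false] at hw
    rcases hw with rfl | rfl | rfl
    · exact absurd rfl hwt
    · exact hx
    · exact hy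
  have hcomm : ∀ t ∈ C.erase a, G.Adj v₁ t → G.Adj v₂ t := by
    intro t ht htv
    by_contra hcon
    rw [Finset.mem_erase] at ht
    obtain ⟨hp, hpC⟩ := hpath ht.2 hv₁ hv₂ htv.symm hv
    have h3 := hf.length_add_card_le hlong (by omega) ht.2 hv₂ _ hp hpC
      ⟨a, by simp [ha, ht.1.symm, ha₂.symm]⟩
    have h4 : insert a {t ∈ C.erase a | G.Adj v₂ t} ⊆ {s ∈ C.erase t | G.Adj v₂ s} := by
      intro s hs
      simp only [Finset.mem_insert, Finset.mem_filter, Finset.mem_erase] at hs ⊢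
      rcases hs with rfl | ⟨⟨h5, h6⟩, h7⟩
      · exact ⟨⟨ht.1.symm, ha⟩, ha₂.symm⟩
      · exact ⟨⟨fun h => hcon (h ▸ h7), h6⟩, h7⟩
    have h5 := Finset.card_le_card h4
    rw [Finset.card_insert_of_notMem (by simp), h₂] at h5
    simp only [Walk.length_cons, Walk.length_nil] at h3
    omega
  obtain ⟨g, hg, rfl⟩ := hf.exists_shift ha
  have hmem : ∀ {j}, g j ∈ ({t ∈ C.erase (g 0) | G.Adj v₁ t} : Finset V) →
      g j ≠ g 0 ∧ G.Adj v₁ (g j) := fun h => by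
    rw [Finset.mem_filter, Finset.mem_erase] at h
    exact ⟨h.1.1, h.2⟩
  have hcard := hg.mul_card_sub_one_le (g := 3) (lo := 3) (hi := c - 3) (by norm_num)
    ((Finset.filter_subset (fun t => G.Adj v₁ t) _).trans (Finset.erase_subset (g 0) C))
    (fun j hj hjN => by
      obtain ⟨hp, hpC⟩ := hpath ha hv₂ hv₁ ha₂ hv.symm
      have h3 := hg.ear_bounds hlong hv₁ _ hp hpC
        (Nat.pos_of_ne_zero fun h => (hmem hjN).1 (by rw [h])) hj (hmem hjN).2
      simp only [Walk.length_cons, Walk.length_nil] at h3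
      omega)
    (fun i j hij hj hi hjN => by
      have hiC := (hmem hi).2
      obtain ⟨hp, hpC⟩ := hpath (hg.mem i) hv₁ hv₂ hiC.symm hv
      have h3 := (hg.shift i).ear_bounds hlong hv₂ _ hp hpC (j := j - i) (by omega) (by omega)
        (by
          rw [Nat.add_sub_cancel' hij.le]
          exact hcomm _ (Finset.mem_filter.1 hjN).1 (hmem hjN).2)
      simp only [Walk.length_cons, Walk.length_nil] at h3
      omega)
  rw [h₁] at hcard
  omega

open Classical in
theorem CyclicParam.exists_clique_joined [Fintype V] (hf : CyclicParam G C c f)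
    (hlong : ∀ u a (r : G.Walk u a), r.IsPath → G.Adj a u → 2 ≤ r.length → r.length + 1 ≤ c)
    (hc : 2 ≤ c)
    (hW : ∀ K : Finset V, K.Nonempty → Disjoint K C → ∀ w, w ∉ K →
      ∃ u ∈ K, ∃ v, v ∉ K ∧ v ≠ w ∧ G.Adj u v)
    {D : Finset V} (hD : D.Nonempty) (hDC : Disjoint D C)
    (hdeg : ∀ v ∈ D, c / 2 ≤ {u ∈ D ∪ C | G.Adj v u}.card) :
    ∃ a ∈ C, ∃ Q ⊆ D, Q.Nonempty ∧ (∀ x ∈ Q, ∀ y ∈ Q, x ≠ y → G.Adj x y) ∧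
      (∀ x ∈ Q, ∀ y ∈ D, G.Adj x y → y ∈ Q) ∧
      ∀ x ∈ Q, G.Adj a x ∧ {t ∈ C.erase a | G.Adj x t}.Nonempty := by
  let P : Finset V → Prop := fun S => Disjoint S C ∧ (S ∩ D).Nonempty ∧
    ∀ u ∈ S, ∀ w, w ∉ C → G.Adj u w → w ∈ S
  obtain ⟨S, ⟨hSC, hSD, hScl⟩, hmin⟩ : ∃ S, Minimal P S :=
    exists_minimal_of_wellFoundedLT P ⟨Cᶜ, disjoint_compl_left, hD.mono fun v hv => by
      simp [hv, Finset.disjoint_left.1 hDC hv],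
      fun u _ w hw _ => by simpa using hw⟩
  have hSne := hSD.mono Finset.inter_subset_left
  obtain ⟨a, ha, s, hs, hsa⟩ : ∃ a ∈ C, ∃ s ∈ S, G.Adj s a := by
    obtain ⟨s, hs⟩ := hSne
    obtain ⟨u, hu, w, hwS, -, huw⟩ := hW S ⟨s, hs⟩ hSC (f 0)
      (Finset.disjoint_right.1 hSC (hf.mem 0))
    exact ⟨w, by_contra fun h => hwS (hScl u hu w h huw), u, hu, huw⟩
  have haS : a ∉ S := Finset.disjoint_right.1 hSC ha
  have haC : insert a (C.erase a) = C := Finset.insert_erase ha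
  obtain ⟨Q, hQD, hQne, hQc, hQcl, hQa⟩ := exists_closed_clique (G := G) (c / 2) S (S ∩ D)
    (C.erase a) a Finset.inter_subset_left hSD haS (Finset.notMem_erase _ _)
    (hSC.mono_right (Finset.erase_subset _ _))
    (fun v hv => by
      rw [Finset.mem_inter] at hv
      refine (hdeg v hv.2).trans (Finset.card_le_card fun u hu => ?_)
      rw [Finset.mem_filter] at hu ⊢
      have h1 := hScl v hv.1 u
      have h2 : u ∈ D → u ∉ C := fun h => Finset.disjoint_left.1 hDC h
      rw [Finset.mem_insert, Finset.mem_union, Finset.mem_inter, Finset.mem_erase]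
      rw [Finset.mem_union] at hu
      tauto)
    (fun K hK hKD => by
      by_cases hKS : s ∈ K
      · exact ⟨s, hKS, a, by simp, fun h => haS (hK h), hsa⟩
      · by_contra! hcon
        refine hKS (hmin ⟨hSC.mono_left hK, hKD.mono fun v hv => ?_, fun u hu w hw huw => ?_⟩
          hK hs)
        · simp only [Finset.mem_inter] at hv ⊢
          tauto
        · by_contra hwK
          exact hcon u hu w (by simp [hScl u (hK hu) w hw huw]) hwK huw)
    (fun K hK hKD w₀ hw₀ => by
      obtain ⟨u, hu, w, hwK, hww, huw⟩ := hW K (hKD.mono Finset.inter_subset_left)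
        (hSC.mono_left hK) w₀ hw₀
      refine ⟨u, hu, w, ?_, hwK, hww, huw⟩
      have h1 := hScl u (hK hu) w
      simp only [Finset.mem_insert, Finset.mem_union, Finset.mem_erase]
      tauto)
    (fun z p hp hz hpS hne => hf.length_add_card_le hlong hc ha
      (Finset.disjoint_left.1 hSC hz) p hp
      (fun v hv hva => Finset.disjoint_left.1 hSC (hpS v hv hva)) hne)
  refine ⟨a, ha, Q, hQD.trans Finset.inter_subset_right, hQne, hQc, fun x hx y hy hxy => ?_, hQa⟩
  exact hQcl x hx y (Finset.mem_inter.2 ⟨hScl x (Finset.mem_inter.1 (hQD hx)).1 y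
    (Finset.disjoint_left.1 hDC hy) hxy, hy⟩) hxy

open Classical in
theorem CyclicParam.exists_vertex_or_sparse [Fintype V] (hf : CyclicParam G C c f)
    (hlong : ∀ u a (r : G.Walk u a), r.IsPath → G.Adj a u → 2 ≤ r.length → r.length + 1 ≤ c)
    (hc : 10 ≤ c)
    (hW : ∀ K : Finset V, K.Nonempty → Disjoint K C → ∀ w, w ∉ K →
      ∃ u ∈ K, ∃ v, v ∉ K ∧ v ≠ w ∧ G.Adj u v)
    {D : Finset V} (hD : D.Nonempty) (hDC : Disjoint D C)
    (hdeg : ∀ v ∈ D, c / 2 ≤ {u ∈ D ∪ C | G.Adj v u}.card) :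
    (∃ u, u ∉ C ∧ (∀ w, G.Adj u w → w ∈ C) ∧ {w ∈ C | G.Adj u w}.card = c / 2) ∨
      ∃ Q ⊆ D, Q.Nonempty ∧ (∀ x ∈ Q, ∀ y ∈ D, G.Adj x y → y ∈ Q) ∧
        ∀ v ∈ Q, {u ∈ D | G.Adj v u}.card + 2 * {u ∈ C | G.Adj v u}.card ≤ 2 * (c / 2 - 1) := by
  obtain ⟨a, ha, Q, hQD, hQne, hQc, hQcl, hQa⟩ :=
    hf.exists_clique_joined hlong (by omega) hW hD hDC hdeg
  have hQC : ∀ v ∈ Q, v ∉ C := fun v hv => Finset.disjoint_left.1 hDC (hQD hv)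
  have haQ : a ∉ Q := fun h => hQC a h ha
  have hT : ∀ v ∈ Q, {t ∈ C | G.Adj v t}.card = {t ∈ C.erase a | G.Adj v t}.card + 1 := by
    intro v hv
    rw [← Finset.card_insert_of_notMem (a := a) (by simp)]
    congr 1
    ext t
    have h1 : t = a → t ∈ C ∧ G.Adj v t := fun h => h ▸ ⟨ha, (hQa v hv).1.symm⟩
    simp only [Finset.mem_filter, Finset.mem_insert, Finset.mem_erase]
    tauto
  have hND : ∀ v ∈ Q, {u ∈ D | G.Adj v u}.card ≤ Q.card - 1 := by
    intro v hv
    rw [← Finset.card_erase_of_mem hv]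
    refine Finset.card_le_card fun u hu => ?_
    rw [Finset.mem_filter] at hu
    exact Finset.mem_erase.2 ⟨hu.2.ne', hQcl v hv u hu.1 hu.2⟩
  have hup : ∀ v ∈ Q, Q.card + {t ∈ C.erase a | G.Adj v t}.card ≤ c / 2 := by
    intro v hv
    obtain ⟨p, hp, hpl, hps⟩ := exists_isPath_of_isClique Q hQc hv haQ fun x hx => (hQa x hx).1
    rw [← hpl]
    exact hf.length_add_card_le hlong (by omega) ha (hQC v hv) p hp
      (fun w hw hwa => hQC w (hps w hw hwa)) (hQa v hv).2
  have hlow : ∀ v ∈ Q, c / 2 ≤ {u ∈ D | G.Adj v u}.card + {u ∈ C | G.Adj v u}.card := by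
    intro v hv
    refine (hdeg v (hQD hv)).trans ?_
    rw [Finset.filter_union]
    exact Finset.card_union_le _ _
  have hpos := hQne.card_pos
  obtain h1 | h2 | h3 : Q.card = 1 ∨ Q.card = 2 ∨ 3 ≤ Q.card := by omega
  · obtain ⟨v, rfl⟩ := Finset.card_eq_one.1 h1
    have hv := Finset.mem_singleton_self v
    have e1 := hT v hv
    have e2 := hND v hv
    have e3 := hup v hv
    have e4 := hlow v hv
    rw [Finset.card_singleton] at e2 e3
    refine Or.inl ⟨v, hQC v hv, fun z hz => by_contra fun hzC => ?_, by omega⟩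
    obtain ⟨b, hb, q, hq, hql, hqC⟩ := exists_isPath_of_adj_outside hW (hQC v hv) hzC hz
    have e5 : {t ∈ C | G.Adj v t}.card ≤ {t ∈ C.erase b | G.Adj v t}.card + 1 := by
      rw [Finset.filter_erase]
      exact Nat.sub_le_iff_le_add.1 Finset.pred_card_le_card_erase
    have e6 := hf.length_add_card_le hlong (by omega) hb (hQC v hv) q hq hqC
      (Finset.card_pos.1 (by omega))
    omega
  · exfalso
    obtain ⟨v₁, v₂, hne, rfl⟩ := Finset.card_eq_two.1 h2
    have m1 : v₁ ∈ ({v₁, v₂} : Finset V) := by simp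
    have m2 : v₂ ∈ ({v₁, v₂} : Finset V) := by simp
    have e1 := hT v₁ m1
    have e2 := hND v₁ m1
    have e3 := hup v₁ m1
    have e4 := hlow v₁ m1
    have e5 := hT v₂ m2
    have e6 := hND v₂ m2
    have e7 := hup v₂ m2
    have e8 := hlow v₂ m2
    exact hf.false_of_adj_pair hlong hc ha (hQC v₁ m1) (hQC v₂ m2) (hQc v₁ m1 v₂ m2 hne)
      (hQa v₁ m1).1 (hQa v₂ m2).1 (by omega) (by omega)
  · refine Or.inr ⟨Q, hQD, hQne, hQcl, fun v hv => ?_⟩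
    have e1 := hT v hv
    have e2 := hND v hv
    have e3 := hup v hv
    omega

end LongestCycle

open Classical in
theorem two_mul_ncard_edges_le [Fintype V] (C : Finset V) :
    2 * {e ∈ G.edgeSet | ¬ ∀ x ∈ e, x ∈ C}.ncard ≤
      ∑ v ∈ Cᶜ, ({u ∈ Cᶜ | G.Adj v u}.card + 2 * {u ∈ C | G.Adj v u}.card) := by
  let B : Finset (Sym2 V) := Cᶜ.biUnion fun v => ({u ∈ C | G.Adj v u} : Finset V).image (s(v, ·))
  have hsub : {e ∈ G.edgeSet | ¬ ∀ x ∈ e, x ∈ C} ⊆ ((G.within Cᶜ).edgeFinset ∪ B : Finset _) := by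
    rintro ⟨a, b⟩ ⟨hab, hnot⟩
    have hab : G.Adj a b := hab
    have hnot : ¬ ∀ x ∈ s(a, b), x ∈ C := hnot
    change s(a, b) ∈ _
    rw [Finset.mem_coe, Finset.mem_union, mem_edgeFinset, mem_edgeSet]
    have hB : ∀ x y, x ∉ C → y ∈ C → G.Adj x y → s(x, y) ∈ B := fun x y hx hy hxy =>
      Finset.mem_biUnion.2 ⟨x, by simpa using hx, Finset.mem_image.2 ⟨y, by simp [hy, hxy], rfl⟩⟩
    by_cases ha : a ∈ C <;> by_cases hb : b ∈ C
    · exact absurd (fun x hx => by rcases Sym2.mem_iff.1 hx with rfl | rfl <;> assumption) hnot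
    · exact Or.inr (Sym2.eq_swap ▸ hB b a hb ha hab.symm)
    · exact Or.inr (hB a b ha hb hab)
    · exact Or.inl ⟨hab, by simpa using ha, by simpa using hb⟩
  have hcard : {e ∈ G.edgeSet | ¬ ∀ x ∈ e, x ∈ C}.ncard ≤
      (G.within Cᶜ).edgeFinset.card + B.card := by
    refine (Set.ncard_le_ncard hsub (Finset.finite_toSet _)).trans ?_
    rw [Set.ncard_coe_finset]
    exact Finset.card_union_le _ _
  have hBcard : B.card ≤ ∑ v ∈ Cᶜ, {u ∈ C | G.Adj v u}.card :=
    Finset.card_biUnion_le.trans (Finset.sum_le_sum fun _ _ => Finset.card_image_le)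
  have hdeg : 2 * (G.within Cᶜ).edgeFinset.card = ∑ v ∈ Cᶜ, {u ∈ Cᶜ | G.Adj v u}.card := by
    rw [← sum_degrees_eq_twice_card_edges, ← Finset.sum_subset (Finset.subset_univ Cᶜ)]
    · refine Finset.sum_congr rfl fun v hv => congrArg Finset.card ?_
      ext u
      rw [mem_neighborFinset, Finset.mem_filter]
      exact ⟨fun h => ⟨h.2.2, h.1⟩, fun h => ⟨h.2, hv, h.1⟩⟩
    · intro v _ hv
      refine Finset.card_eq_zero.2 (Finset.eq_empty_of_forall_notMem fun u hu => ?_)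
      rw [mem_neighborFinset] at hu
      exact hv hu.2.1
  rw [Finset.sum_add_distrib, ← Finset.mul_sum, ← hdeg]
  omega

open Classical in
/-- Inside a minimal set `D` violating an edge density bound, all degrees into `D ∪ C` are
large, and every nonempty subset closed in `D` contains a vertex of large weight. -/
theorem exists_minimal_dense (A C : Finset V) {d : ℕ} (hAC : Disjoint A C)
    (hA : 2 * d * A.card <
      ∑ v ∈ A, ({u ∈ A | G.Adj v u}.card + 2 * {u ∈ C | G.Adj v u}.card)) :
    ∃ D ⊆ A, D.Nonempty ∧ (∀ v ∈ D, d + 1 ≤ {u ∈ D ∪ C | G.Adj v u}.card) ∧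
      ∀ Q ⊆ D, Q.Nonempty → (∀ x ∈ Q, ∀ y ∈ D, G.Adj x y → y ∈ Q) →
        ∃ v ∈ Q, 2 * d < {u ∈ D | G.Adj v u}.card + 2 * {u ∈ C | G.Adj v u}.card := by
  let P : Finset V → Prop := fun D => D ⊆ A ∧ 2 * d * D.card <
    ∑ v ∈ D, ({u ∈ D | G.Adj v u}.card + 2 * {u ∈ C | G.Adj v u}.card)
  obtain ⟨D, ⟨hDA, hD⟩, hmin⟩ : ∃ D, Minimal P D :=
    exists_minimal_of_wellFoundedLT P ⟨A, subset_rfl, hA⟩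
  have hDC : Disjoint D C := hAC.mono_left hDA
  have hsmall : ∀ Q ⊆ D, Q.Nonempty →
      ∑ v ∈ D \ Q, ({u ∈ D \ Q | G.Adj v u}.card + 2 * {u ∈ C | G.Adj v u}.card) ≤
        2 * d * (D \ Q).card := by
    intro Q hQ ⟨q, hq⟩
    by_contra! h
    exact (Finset.mem_sdiff.1
      (hmin ⟨Finset.sdiff_subset.trans hDA, h⟩ Finset.sdiff_subset (hQ hq))).2 hq
  refine ⟨D, hDA, Finset.nonempty_iff_ne_empty.2 ?_, fun v hv => ?_, fun Q hQ hQne hcl => ?_⟩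
  · rintro rfl
    simp at hD
  · have h1 := hsmall {v} (by simpa using hv) (by simp)
    rw [Finset.card_sdiff_of_subset (by simpa using hv), Finset.card_singleton] at h1
    have h2 : ∑ w ∈ D, {u ∈ D | G.Adj w u}.card ≤
        ∑ w ∈ D \ {v}, {u ∈ D \ {v} | G.Adj w u}.card + 2 * {u ∈ D | G.Adj v u}.card := by
      have h3 : ∀ w ∈ D \ {v}, {u ∈ D | G.Adj w u}.card ≤
          {u ∈ D \ {v} | G.Adj w u}.card + if G.Adj v w then 1 else 0 := by
        intro w _
        have h4 : ({u ∈ D | G.Adj w u} : Finset V) ⊆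
            {u ∈ D \ {v} | G.Adj w u} ∪ if G.Adj v w then {v} else ∅ := by
          intro u hu
          rw [Finset.mem_filter] at hu
          by_cases huv : u = v
          · subst huv
            simp [hu.2.symm]
          · simp [hu.1, hu.2, huv]
        refine (Finset.card_le_card h4).trans ((Finset.card_union_le _ _).trans ?_)
        split_ifs <;> simp
      have h5 : ∑ w ∈ D \ {v}, (if G.Adj v w then 1 else 0) ≤ {u ∈ D | G.Adj v u}.card := by
        rw [← Finset.card_filter]
        exact Finset.card_le_card (Finset.filter_subset_filter _ Finset.sdiff_subset)
      have h6 := Finset.sum_le_sum h3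
      rw [Finset.sum_add_distrib] at h6
      have h7 := Finset.sum_sdiff (f := fun w => {u ∈ D | G.Adj w u}.card)
        (show {v} ⊆ D by simpa using hv)
      rw [Finset.sum_singleton] at h7
      omega
    have h8 := Finset.sum_sdiff (f := fun w => {u ∈ C | G.Adj w u}.card)
      (show {v} ⊆ D by simpa using hv)
    rw [Finset.sum_singleton] at h8
    rw [Finset.sum_add_distrib, ← Finset.mul_sum] at h1 hD
    have h9 : {u ∈ D ∪ C | G.Adj v u}.card =
        {u ∈ D | G.Adj v u}.card + {u ∈ C | G.Adj v u}.card := by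
      rw [Finset.filter_union, Finset.card_union_of_disjoint (Finset.disjoint_filter_filter hDC)]
    have h10 : D.card = (D.card - 1) + 1 := by
      have := Finset.card_pos.2 ⟨v, hv⟩
      omega
    rw [h10, mul_add, mul_one] at hD
    omega
  · by_contra! hcon
    have h1 := hsmall Q hQ hQne
    have h2 := Finset.sum_sdiff
      (f := fun w => {u ∈ D | G.Adj w u}.card + 2 * {u ∈ C | G.Adj w u}.card) hQ
    have h3 : ∑ v ∈ Q, ({u ∈ D | G.Adj v u}.card + 2 * {u ∈ C | G.Adj v u}.card) ≤
        Q.card * (2 * d) := Finset.sum_le_card_nsmul _ _ _ hcon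
    have h4 : ∑ v ∈ D \ Q, ({u ∈ D | G.Adj v u}.card + 2 * {u ∈ C | G.Adj v u}.card) ≤
        ∑ v ∈ D \ Q, ({u ∈ D \ Q | G.Adj v u}.card + 2 * {u ∈ C | G.Adj v u}.card) := by
      refine Finset.sum_le_sum fun v hv => Nat.add_le_add_right (Finset.card_le_card ?_) _
      intro u hu
      rw [Finset.mem_filter] at hu
      rw [Finset.mem_sdiff] at hv
      rw [Finset.mem_filter, Finset.mem_sdiff]
      exact ⟨⟨hu.1, fun h => hv.2 (hcl u h v hv.1 hu.2.symm)⟩, hu.2⟩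
    have h5 : D.card = (D \ Q).card + Q.card := (Finset.card_sdiff_add_card_eq_card hQ).symm
    rw [h5, mul_add, mul_comm _ Q.card] at hD
    omega

theorem Walk.IsCycle.card_of_mem_iff [DecidableEq V] {v₀ : V} {p : G.Walk v₀ v₀}
    (hp : p.IsCycle) {C : Finset V} (hC : ∀ v, v ∈ C ↔ v ∈ p.support) : C.card = p.length := by
  have hf := hp.cyclicParam hC
  have himg : C = (Finset.range p.length).image fun i => p.getVert (i % p.length) := by
    ext v
    rw [Finset.mem_image]
    constructor
    · intro hv
      obtain ⟨j, hj, hjv⟩ := hf.surj v hv 0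
      exact ⟨j, Finset.mem_range.2 hj, by simpa using hjv⟩
    · rintro ⟨j, -, rfl⟩
      exact hf.mem j
  rw [himg, Finset.card_image_of_injOn, Finset.card_range]
  intro i hi j hj hij
  simp only [Finset.coe_range, Set.mem_Iio] at hi hj
  rcases lt_trichotomy i j with h | h | h
  · exact absurd hij (hf.ne i j h (by omega))
  · exact h
  · exact absurd hij.symm (hf.ne j i h (by omega))

end SimpleGraph

/-- If `G` is 2-connected on `n` vertices, `C` a longest cycle of length `c` with
`10 ≤ c ≤ n-1`, and the number of edges with at most one endpoint on `C` exceeds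
`(⌊c/2⌋-1)(n-c)`, then some vertex outside `C` has all its neighbours on `C` and has
exactly `⌊c/2⌋` neighbours on `C`. -/
theorem stmt18 {V : Type*} [Fintype V] (G : SimpleGraph V) (n c : ℕ)
    (hn : Fintype.card V = n) (hG : TwoConnected G)
    (v0 : V) (p : G.Walk v0 v0) (hC : IsLongestCycle G p) (hc : p.length = c)
    (h10 : 10 ≤ c) (hcn : c ≤ n - 1)
    (hedges : (c / 2 - 1) * (n - c) <
      {e ∈ G.edgeSet | ¬ ∀ x ∈ e, x ∈ p.support}.ncard) :
    ∃ u : V, u ∉ p.support ∧ (∀ w : V, G.Adj u w → w ∈ p.support) ∧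
      {w : V | w ∈ p.support ∧ G.Adj u w}.ncard = c / 2 := by
  classical
  let C : Finset V := p.support.toFinset
  have hCp : ∀ v, v ∈ C ↔ v ∈ p.support := fun v => List.mem_toFinset
  have hlong : ∀ u a (r : G.Walk u a), r.IsPath → G.Adj a u → 2 ≤ r.length → r.length + 1 ≤ c :=
    fun u a r hr h hl => by
      simpa [hc] using hC.2 a _ (hr.isCycle_cons h hl)
  have hf := hC.1.cyclicParam hCp
  rw [hc] at hf
  have hCcard : C.card = c := (hC.1.card_of_mem_iff hCp).trans hc
  have hW : ∀ K : Finset V, K.Nonempty → Disjoint K C → ∀ w, w ∉ K →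
      ∃ u ∈ K, ∃ v, v ∉ K ∧ v ≠ w ∧ G.Adj u v := by
    intro K hK hKC w hw
    obtain ⟨t, ht, htw⟩ := Finset.exists_mem_ne (show 1 < C.card by omega) w
    exact hG.exists_adj_ne hK (Finset.disjoint_right.1 hKC ht) hw htw
  have hedges' := two_mul_ncard_edges_le (G := G) C
  simp only [hCp] at hedges'
  obtain ⟨D, hDA, hDne, hDdeg, hDQ⟩ := exists_minimal_dense (G := G) Cᶜ C (d := c / 2 - 1)
    disjoint_compl_left (by
      rw [Finset.card_compl, hn, hCcard, mul_assoc]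
      omega)
  rcases hf.exists_vertex_or_sparse hlong h10 hW hDne
      (disjoint_compl_left.mono_left hDA) (fun v hv => by have := hDdeg v hv; omega) with
    ⟨u, huC, hu, hcard⟩ | ⟨Q, hQD, hQne, hQcl, hQ⟩
  · refine ⟨u, fun h => huC ((hCp u).2 h), fun w hw => (hCp w).1 (hu w hw), ?_⟩
    rw [← hcard, ← Set.ncard_coe_finset]
    congr 1
    ext w
    simp [hCp]
  · obtain ⟨v, hv, hlt⟩ := hDQ Q hQD hQne hQcl
    exact absurd (hQ v hv) (by omega)
end
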